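/- (Far-from-CMC existence, Euclidean background.) Let n ≥ 3, p > n, γ ∈ (2−n, 0) and δ = γ/2. Let τ : ℝⁿ → ℝ be smooth with ‖τ‖_{W^{1,p}_{δ−1}} < ∞, let σ be a smooth symmetric trace-free divergence-free matrix field, let ρ : ℝⁿ → ℝ be smooth with ρ ≥ 0, and let J : ℝⁿ → ℝⁿ be smooth. Then there exists ε > 0 (depending only on n, p, δ and ‖τ‖_{W^{1,p}_{δ−1}}) such that if ‖σ‖_{L^∞_{δ−1}} ≤ ε, ‖ρ‖_{L^∞_{2δ−2}} ≤ ε and ‖J‖_{L^p_{δ−2}} ≤ ε, then there exist a smooth function u : ℝⁿ → ℝ and a smooth vector field W : ℝⁿ → ℝⁿ solving the conformal constraint system (i)–(ii), with u > 0 everywhere, ‖W‖_{W^{2,p}_δ} < ∞, and u − A ∈ W^{2,p}_δ for some constant A > 0. -/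

import Mathlib

/-!
**Rescaling.** With `u = s w` and `W = s^N Y` the system becomes one for `(w, Y)` in which the
terms in `σ`, `ρ`, `J` have been divided by powers of `s`, and the equation for `w` carries the
coupling constant `s^(N-2)`. For small `s` the coupling is small although `τ` is arbitrary, and for
`ε = min (s^N) (s^(3N/2-1))` the rescaled data are of unit size. It remains to solve the rescaled
system for a small coupling constant (`rescaled_system`).

**Linear theory.** Both equations are instances of the Lamé operator `LY = ΔY + κ ∇ div Y`, with
`κ = 0` for the Laplacian and `κ = 1 - 2/n` for `-Δ_L`. It has a fundamental matrix homogeneous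
of degree `2 - n` (`exists_lame_ker`), and the corresponding potentials solve `LY = G`
(`lame_solve`). Weighted bounds for Riesz potentials control `Y` and `∂Y` when `G ∈ L^p_{δ-2}`,
in `L^p` and pointwise (`par_pot`); the same bounds show that `τ` decays like `⟨x⟩^{δ-1}`
(`sob_decay`).

**Second derivatives.** `Y ∈ W^{2,p}_δ` needs the Calderón–Zygmund inequality
`‖∂²φ‖_p ≤ C ‖Lφ‖_p` for test fields (`cz_lame`). If `Δh = ∑ₖ ∂_{aₖ} ∂_{bₖ} fₖ`, then along the heat
flow the time derivative of the pairing of `h` with `g` is a sum of integrals of products of first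
derivatives of `fₖ` and `g`; these are dominated by the dissipation of `∫ Q(fₖ, g)` for a Bellman
function `Q` of growth `|ζ|^p + |η|^q` (`bilinear_embedding`, `cz_real`). Multiplication by a weight
and a cutoff gives the weighted estimate (`weighted_d2`), hence the solvability statement
`lin_theory`.

**Nonlinear problem.** Solving the vector equation for `Y` in terms of `w` turns the system into a
single integral equation `w = 1 - lam · Pot E₀ (F w)`. On `1/2 ≤ w ≤ 3/2` the nonlinearity is
bounded and Lipschitz with weight `⟨x⟩^{2δ-2}` (`fop_bl`), so for small `lam` the map, with `w`
clamped to this interval, is a contraction of the bounded continuous functions (`exists_fixed`). The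
fixed point is smooth by bootstrapping (`fixed_smooth`), and `lin_theory` places `w - 1` and `Y` in
`W^{2,p}_δ`.
-/

noncomputable section

open MeasureTheory Filter
open scoped ENNReal Topology

/-- `n`-dimensional Euclidean space. -/
abbrev Euc (n : ℕ) := EuclideanSpace ℝ (Fin n)

/-- The Japanese bracket `⟨x⟩ = (1 + ‖x‖²)^(1/2)`. -/
def jap {n : ℕ} (x : Euc n) : ℝ := Real.sqrt (1 + ‖x‖ ^ 2)

/-- Partial derivative `∂ᵢ f` of a real-valued function. -/
def pd {n : ℕ} (i : Fin n) (f : Euc n → ℝ) (x : Euc n) : ℝ :=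
  fderiv ℝ f x (EuclideanSpace.single i 1)

/-- The Euclidean Laplacian `Δf = Σᵢ ∂ᵢ²f`. -/
def lap {n : ℕ} (f : Euc n → ℝ) (x : Euc n) : ℝ :=
  ∑ i, pd i (pd i f) x

/-- Divergence of a vector field. -/
def divg {n : ℕ} (W : Euc n → Euc n) (x : Euc n) : ℝ :=
  ∑ i, pd i (fun y => W y i) x

/-- The conformal Killing operator `(𝒟W)ᵢⱼ = ∂ᵢWⱼ + ∂ⱼWᵢ − (2/n)(div W)δᵢⱼ`. -/
def confKill {n : ℕ} (W : Euc n → Euc n) (x : Euc n) : Matrix (Fin n) (Fin n) ℝ :=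
  Matrix.of fun i j =>
    pd i (fun y => W y j) x + pd j (fun y => W y i) x
      - (2 / (n : ℝ)) * divg W x * (if i = j then 1 else 0)

/-- The Frobenius norm of a matrix. -/
def frob {n : ℕ} (M : Matrix (Fin n) (Fin n) ℝ) : ℝ :=
  Real.sqrt (∑ i, ∑ j, (M i j) ^ 2)

/-- The vector Laplacian `(Δ_L W)ⱼ = −Σᵢ ∂ᵢ (𝒟W)ᵢⱼ`. -/
def vecLap {n : ℕ} (W : Euc n → Euc n) (x : Euc n) : Euc n :=
  (EuclideanSpace.equiv (Fin n) ℝ).symm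
    (fun j => -∑ i, pd i (fun y => confKill W y i j) x)

/-- Weighted `L^p_δ` norm (as an extended nonnegative real). -/
def LpW {n : ℕ} {F : Type*} [NormedAddCommGroup F] (p δ : ℝ) (f : Euc n → F) : ℝ≥0∞ :=
  (∫⁻ x, ENNReal.ofReal ((jap x ^ (-δ - (n : ℝ) / p) * ‖f x‖) ^ p)) ^ (1 / p)

/-- Weighted Sobolev `W^{k,p}_δ` norm. -/
def SobW {n : ℕ} {F : Type*} [NormedAddCommGroup F] [NormedSpace ℝ F]
    (k : ℕ) (p δ : ℝ) (f : Euc n → F) : ℝ≥0∞ :=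
  ∑ j ∈ Finset.range (k + 1),
    (∫⁻ x, ENNReal.ofReal
      ((jap x ^ (-δ - (n : ℝ) / p + (j : ℝ)) * ‖iteratedFDeriv ℝ j f x‖) ^ p)) ^ (1 / p)

/-- Weighted `L^∞_δ` norm. -/
def LinfW {n : ℕ} {F : Type*} [NormedAddCommGroup F] (δ : ℝ) (f : Euc n → F) : ℝ≥0∞ :=
  ⨆ x, ENNReal.ofReal (jap x ^ (-δ) * ‖f x‖)

/-- Weighted `L^∞_δ` norm of a matrix field, pointwise Frobenius norm. -/
def LinfWM {n : ℕ} (δ : ℝ) (σ : Euc n → Matrix (Fin n) (Fin n) ℝ) : ℝ≥0∞ :=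
  ⨆ x, ENNReal.ofReal (jap x ^ (-δ) * frob (σ x))

/-- `N = 2n/(n−2)`. -/
def Nc (n : ℕ) : ℝ := 2 * n / ((n : ℝ) - 2)
/-- `c_n = (n−2)/(4(n−1))`. -/
def cc (n : ℕ) : ℝ := ((n : ℝ) - 2) / (4 * ((n : ℝ) - 1))
/-- `b_n = (n−2)/(4n)`. -/
def bc (n : ℕ) : ℝ := ((n : ℝ) - 2) / (4 * (n : ℝ))

/-- Componentwise smoothness of a matrix field. -/
def SmoothMat {n : ℕ} (σ : Euc n → Matrix (Fin n) (Fin n) ℝ) : Prop :=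
  ∀ i j, ContDiff ℝ (⊤ : ℕ∞) fun x => σ x i j

/-- A matrix field is symmetric, trace-free and divergence-free. -/
def SymTT {n : ℕ} (σ : Euc n → Matrix (Fin n) (Fin n) ℝ) : Prop :=
  (∀ x i j, σ x i j = σ x j i) ∧ (∀ x, ∑ i, σ x i i = 0) ∧
    (∀ x j, ∑ i, pd i (fun y => σ y i j) x = 0)

/-- The left-hand side of the Lichnerowicz (Hamiltonian) equation (i). -/
def HamExpr {n : ℕ} (τ : Euc n → ℝ) (σ : Euc n → Matrix (Fin n) (Fin n) ℝ)
    (ρ : Euc n → ℝ) (u : Euc n → ℝ) (W : Euc n → Euc n) (x : Euc n) : ℝ :=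
  lap u x + cc n * frob (σ x + confKill W x) ^ 2 * u x ^ (-(Nc n) - 1)
    - bc n * τ x ^ 2 * u x ^ (Nc n - 1) + cc n * ρ x * u x ^ (-(Nc n) / 2)

/-- Equation (i): the Lichnerowicz equation. -/
def HamEq {n : ℕ} (τ : Euc n → ℝ) (σ : Euc n → Matrix (Fin n) (Fin n) ℝ)
    (ρ : Euc n → ℝ) (u : Euc n → ℝ) (W : Euc n → Euc n) : Prop :=
  ∀ x, HamExpr τ σ ρ u W x = 0

/-- Equation (ii): the momentum constraint `Δ_L W + ((n−1)/n) u^N ∇τ + J = 0`. -/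
def MomEq {n : ℕ} (τ : Euc n → ℝ) (J : Euc n → Euc n)
    (u : Euc n → ℝ) (W : Euc n → Euc n) : Prop :=
  ∀ x, vecLap W x + ((((n : ℝ) - 1) / n) * u x ^ Nc n) • gradient τ x + J x = 0

/-- Global supersolution property for `φ₊`. -/
def GlobalSuperSol {n : ℕ} (p δ : ℝ) (τ : Euc n → ℝ)
    (σ : Euc n → Matrix (Fin n) (Fin n) ℝ) (ρ : Euc n → ℝ) (J : Euc n → Euc n)
    (φp : Euc n → ℝ) : Prop :=
  ∀ φ : Euc n → ℝ, Continuous φ → (∀ x, 0 < φ x ∧ φ x ≤ φp x) →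
    ∀ W : Euc n → Euc n, ContDiff ℝ (⊤ : ℕ∞) W → SobW 2 p δ W < ⊤ → MomEq τ J φ W →
    ∀ x, HamExpr τ σ ρ φp W x ≤ 0

/-- Global subsolution property for `φ₋`. -/
def GlobalSubSol {n : ℕ} (p δ : ℝ) (τ : Euc n → ℝ)
    (σ : Euc n → Matrix (Fin n) (Fin n) ℝ) (ρ : Euc n → ℝ) (J : Euc n → Euc n)
    (φm : Euc n → ℝ) : Prop :=
  ∀ φ : Euc n → ℝ, Continuous φ → (∀ x, φm x ≤ φ x) →
    ∀ W : Euc n → Euc n, ContDiff ℝ (⊤ : ℕ∞) W → SobW 2 p δ W < ⊤ → MomEq τ J φ W →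
    ∀ x, 0 ≤ HamExpr τ σ ρ φm W x

/-! ### The Japanese bracket and weighted kernel integrals -/

lemma jap_ge_one {n : ℕ} (x : Euc n) : 1 ≤ jap x := by
  unfold jap
  rw [Real.one_le_sqrt]
  nlinarith [sq_nonneg ‖x‖]

lemma jap_pos {n : ℕ} (x : Euc n) : 0 < jap x := lt_of_lt_of_le one_pos (jap_ge_one x)

lemma jap_sq {n : ℕ} (x : Euc n) : jap x ^ 2 = 1 + ‖x‖ ^ 2 := by
  unfold jap
  rw [Real.sq_sqrt]
  positivity

lemma norm_le_jap {n : ℕ} (x : Euc n) : ‖x‖ ≤ jap x := by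
  unfold jap
  apply Real.le_sqrt_of_sq_le
  linarith

lemma jap_le_one_add {n : ℕ} (x : Euc n) : jap x ≤ 1 + ‖x‖ := by
  unfold jap
  exact sqrt_one_add_norm_sq_le x

lemma jap_le_jap_add {n : ℕ} (x y : Euc n) : jap x ≤ jap y + ‖x - y‖ := by
  have h1 := norm_le_jap y
  have h2 : ‖x‖ ≤ ‖y‖ + ‖x - y‖ := by
    have := norm_add_le y (x - y)
    simpa using this
  have h0 := jap_pos y
  have h3 := norm_nonneg (x - y)
  have h4 := norm_nonneg x
  have : jap x ^ 2 ≤ (jap y + ‖x - y‖) ^ 2 := by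
    rw [jap_sq]
    nlinarith [jap_sq y, mul_le_mul_of_nonneg_right h1 h3, norm_nonneg y]
  exact le_of_sq_le_sq this (by positivity)
where
  le_of_sq_le_sq {a b : ℝ} (h : a ^ 2 ≤ b ^ 2) (hb : 0 ≤ b) : a ≤ b := by
    nlinarith [abs_le_of_sq_le_sq h hb, le_abs_self a]

lemma continuous_jap {n : ℕ} : Continuous (jap : Euc n → ℝ) := by
  unfold jap
  fun_prop

lemma continuous_jap_rpow {n : ℕ} (r : ℝ) : Continuous (fun x : Euc n => jap x ^ r) :=
  continuous_jap.rpow_const fun x => Or.inl (jap_pos x).ne'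

lemma measurable_jap {n : ℕ} : Measurable (jap : Euc n → ℝ) := continuous_jap.measurable

lemma lint_smul {n : ℕ} (R : ℝ) (hR : 0 < R) (f : Euc n → ℝ≥0∞) (hf : Measurable f) :
    ∫⁻ z, f z = ENNReal.ofReal (R ^ n) * ∫⁻ z, f (R • z) := by
  have h1 : ∫⁻ z, f (R • z) = ∫⁻ z, f z ∂(Measure.map (R • ·) volume) :=
    (lintegral_map hf (measurable_const_smul R)).symm
  rw [h1, Measure.map_addHaar_smul _ hR.ne', lintegral_smul_measure, smul_eq_mul, ← mul_assoc,
    ← ENNReal.ofReal_mul (by positivity)]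
  have : R ^ n * |(R ^ Module.finrank ℝ (Euc n))⁻¹| = 1 := by
    rw [abs_of_pos (by positivity)]
    simp [hR.ne']
  rw [this]; simp

/-- `∫_{‖z‖<1} ‖z‖^{-a} < ∞` for `a < n`. -/
lemma lint_ball_one {n : ℕ} (hn : 3 ≤ n) {a : ℝ} (ha : a < n) :
    ∫⁻ z : Euc n, (if ‖z‖ < 1 then ENNReal.ofReal (‖z‖ ^ (-a)) else 0) < ⊤ := by
  have : Nontrivial (Euc n) := by
    have : Nonempty (Fin n) := ⟨⟨0, by omega⟩⟩
    infer_instance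
  have h := (integrableOn_fun_norm_addHaar (E := Euc n) volume (f := fun y : ℝ => y ^ (-a))
    (r := 1)).2 ?_
  · have h2 := h.2
    rw [hasFiniteIntegral_iff_enorm, ← lintegral_indicator measurableSet_ball] at h2
    refine lt_of_le_of_lt (lintegral_mono fun z => ?_) h2
    simp only [Set.indicator, Metric.mem_ball, dist_zero_right]
    split_ifs
    · rw [Real.enorm_eq_ofReal (by positivity)]
    · exact le_rfl
  · have h3 : IntegrableOn (fun y : ℝ => y ^ ((n : ℝ) - 1 - a)) (Set.Ioo 0 1) :=
      (intervalIntegral.integrableOn_Ioo_rpow_iff one_pos).2 (by linarith)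
    refine h3.congr_fun (fun y hy => ?_) measurableSet_Ioo
    simp only [smul_eq_mul]
    rw [← Real.rpow_natCast, ← Real.rpow_add hy.1]
    congr 1
    have : 1 ≤ n := by omega
    simp only [finrank_euclideanSpace, Fintype.card_fin]
    push_cast [Nat.cast_sub this]
    ring

/-- `∫_{‖z‖≥1} ‖z‖^{-a} < ∞` for `a > n`. -/
lemma lint_compl_one {n : ℕ} {a : ℝ} (ha : n < a) :
    ∫⁻ z : Euc n, (if 1 ≤ ‖z‖ then ENNReal.ofReal (‖z‖ ^ (-a)) else 0) < ⊤ := by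
  have ha0 : 0 < a := lt_of_le_of_lt (Nat.cast_nonneg n) ha
  have h := finite_integral_one_add_norm (E := Euc n) (μ := volume) (r := a) (by simpa using ha)
  have h2 : ENNReal.ofReal (2 ^ a) * ∫⁻ z : Euc n, ENNReal.ofReal ((1 + ‖z‖) ^ (-a)) < ⊤ :=
    ENNReal.mul_lt_top (by simp) h
  refine lt_of_le_of_lt ?_ h2
  rw [← lintegral_const_mul' _ _ (by simp)]
  refine lintegral_mono fun z => ?_
  simp only
  split_ifs with hz
  · rw [← ENNReal.ofReal_mul (by positivity)]
    apply ENNReal.ofReal_le_ofReal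
    have h0 : 0 < ‖z‖ := by linarith
    have h3 : (2 : ℝ) ^ a = (2⁻¹ : ℝ) ^ (-a) := by
      rw [Real.inv_rpow (by norm_num), Real.rpow_neg (by norm_num), inv_inv]
    rw [h3, ← Real.mul_rpow (by norm_num) (by positivity)]
    apply Real.rpow_le_rpow_of_nonpos (by positivity) (by linarith) (by linarith)
  · exact zero_le

lemma lint_ball {n : ℕ} (hn : 3 ≤ n) {a : ℝ} (ha : a < n) : ∃ C : ℝ, 0 ≤ C ∧ ∀ R : ℝ, 0 < R →
    ∫⁻ z : Euc n, (if ‖z‖ < R then ENNReal.ofReal (‖z‖ ^ (-a)) else 0) ≤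
      ENNReal.ofReal (C * R ^ ((n : ℝ) - a)) := by
  refine ⟨(∫⁻ z : Euc n, (if ‖z‖ < 1 then ENNReal.ofReal (‖z‖ ^ (-a)) else 0)).toReal,
    ENNReal.toReal_nonneg, fun R hR => ?_⟩
  rw [lint_smul R hR]
  · have : ∀ z : Euc n, (if ‖R • z‖ < R then ENNReal.ofReal (‖R • z‖ ^ (-a)) else 0) =
        ENNReal.ofReal (R ^ (-a)) * (if ‖z‖ < 1 then ENNReal.ofReal (‖z‖ ^ (-a)) else 0) := by
      intro z
      rw [norm_smul, Real.norm_of_nonneg hR.le, Real.mul_rpow hR.le (norm_nonneg _),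
        ENNReal.ofReal_mul (by positivity)]
      have : R * ‖z‖ < R ↔ ‖z‖ < 1 := by
        rw [mul_lt_iff_lt_one_right hR]
      simp only [this]
      split_ifs <;> simp
    simp_rw [this]
    rw [lintegral_const_mul' _ _ (by simp), ← mul_assoc, ← ENNReal.ofReal_mul (by positivity),
      ← Real.rpow_natCast, ← Real.rpow_add hR, ← sub_eq_add_neg,
      mul_comm _ (R ^ ((n : ℝ) - a)), ENNReal.ofReal_mul (p := R ^ ((n : ℝ) - a)) (by positivity),
      ENNReal.ofReal_toReal (lint_ball_one hn ha).ne]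
  · exact Measurable.ite (measurableSet_lt measurable_norm measurable_const) (by fun_prop)
      measurable_const

lemma lint_compl {n : ℕ} {a : ℝ} (ha : n < a) : ∃ C : ℝ, 0 ≤ C ∧ ∀ R : ℝ, 0 < R →
    ∫⁻ z : Euc n, (if R ≤ ‖z‖ then ENNReal.ofReal (‖z‖ ^ (-a)) else 0) ≤
      ENNReal.ofReal (C * R ^ ((n : ℝ) - a)) := by
  refine ⟨(∫⁻ z : Euc n, (if 1 ≤ ‖z‖ then ENNReal.ofReal (‖z‖ ^ (-a)) else 0)).toReal,
    ENNReal.toReal_nonneg, fun R hR => ?_⟩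
  rw [lint_smul R hR]
  · have : ∀ z : Euc n, (if R ≤ ‖R • z‖ then ENNReal.ofReal (‖R • z‖ ^ (-a)) else 0) =
        ENNReal.ofReal (R ^ (-a)) * (if 1 ≤ ‖z‖ then ENNReal.ofReal (‖z‖ ^ (-a)) else 0) := by
      intro z
      rw [norm_smul, Real.norm_of_nonneg hR.le, Real.mul_rpow hR.le (norm_nonneg _),
        ENNReal.ofReal_mul (by positivity)]
      have : R ≤ R * ‖z‖ ↔ 1 ≤ ‖z‖ := by
        rw [le_mul_iff_one_le_right hR]
      simp only [this]
      split_ifs <;> simp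
    simp_rw [this]
    rw [lintegral_const_mul' _ _ (by simp), ← mul_assoc, ← ENNReal.ofReal_mul (by positivity),
      ← Real.rpow_natCast, ← Real.rpow_add hR, ← sub_eq_add_neg,
      mul_comm _ (R ^ ((n : ℝ) - a)), ENNReal.ofReal_mul (p := R ^ ((n : ℝ) - a)) (by positivity),
      ENNReal.ofReal_toReal (lint_compl_one ha).ne]
  · exact Measurable.ite (measurableSet_le measurable_const measurable_norm) (by fun_prop)
      measurable_const

lemma ae_ne_pt {n : ℕ} (hn : 3 ≤ n) (x : Euc n) : ∀ᵐ y : Euc n, y ≠ x := by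
  have : Nonempty (Fin n) := ⟨⟨0, by omega⟩⟩
  have : Nontrivial (Euc n) := by infer_instance
  exact compl_mem_ae_iff.2 (measure_singleton x)

/-- The basic weighted kernel estimate: `∫ ‖x-y‖^{-a} ⟨y⟩^{-b} dy ≤ C ⟨x⟩^{n-a-b}` for
`0 < a, b < n < a + b`. The three pieces are the neighbourhood `‖x-y‖ < ⟨x⟩/4` of `x`, the region
`⟨y⟩ ≤ 8⟨x⟩` away from `x`, and the region `⟨y⟩ > 8⟨x⟩`, where `‖x-y‖` is comparable to `‖y‖`. -/
lemma ker_bound {n : ℕ} (hn : 3 ≤ n) {a b : ℝ} (ha0 : 0 < a) (ha : a < n) (hb0 : 0 < b)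
    (hb : b < n) (hab : n < a + b) : ∃ C : ℝ, 0 ≤ C ∧ ∀ x : Euc n,
    ∫⁻ y : Euc n, ENNReal.ofReal (‖x - y‖ ^ (-a) * jap y ^ (-b)) ≤
      ENNReal.ofReal (C * jap x ^ ((n : ℝ) - a - b)) := by
  obtain ⟨C1, hC1, h1⟩ := lint_ball hn ha
  obtain ⟨C2, hC2, h2⟩ := lint_ball hn hb
  obtain ⟨C3, hC3, h3⟩ := lint_compl hab
  have key : ∀ x y : Euc n, y ≠ 0 → ENNReal.ofReal (‖x - y‖ ^ (-a) * jap y ^ (-b)) ≤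
      ENNReal.ofReal ((jap x / 2) ^ (-b)) *
          (if ‖x - y‖ < jap x then ENNReal.ofReal (‖x - y‖ ^ (-a)) else 0) +
      (ENNReal.ofReal ((jap x / 4) ^ (-a)) *
          (if ‖y‖ < 9 * jap x then ENNReal.ofReal (‖y‖ ^ (-b)) else 0) +
      ENNReal.ofReal (2 ^ a) *
          (if jap x ≤ ‖y‖ then ENNReal.ofReal (‖y‖ ^ (-(a + b))) else 0)) := by
    intro x y hy00
    have hx := jap_pos x
    have hy := jap_pos y
    have hx1 := jap_ge_one x
    have hy1 := jap_ge_one y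
    have hyn := norm_le_jap y
    have hyn' := jap_le_one_add y
    have hxy := jap_le_jap_add x y
    have hyx : jap y ≤ jap x + ‖x - y‖ := by
      have := jap_le_jap_add y x
      rwa [norm_sub_rev] at this
    have hm : ∀ {s t c : ℝ}, 0 < s → s ≤ t → 0 < c → t ^ (-c) ≤ s ^ (-c) := fun h0 h1 hc =>
      Real.rpow_le_rpow_of_nonpos h0 h1 (by linarith)
    by_cases hA : ‖x - y‖ < jap x / 4
    · refine le_add_right ?_
      rw [if_pos (by linarith), ← ENNReal.ofReal_mul (by positivity)]
      apply ENNReal.ofReal_le_ofReal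
      rw [mul_comm]
      gcongr ?_ * _
      exact hm (by positivity) (by linarith) hb0
    push Not at hA
    refine le_add_left ?_
    by_cases hB : jap y ≤ 8 * jap x
    · refine le_add_right ?_
      rw [if_pos (by linarith), ← ENNReal.ofReal_mul (by positivity)]
      apply ENNReal.ofReal_le_ofReal
      have h1 := hm (by positivity) hA ha0
      have h2 := hm (norm_pos_iff.2 hy00) hyn hb0
      gcongr
    · push Not at hB
      refine le_add_left ?_
      rw [if_pos (by linarith), ← ENNReal.ofReal_mul (by positivity)]
      apply ENNReal.ofReal_le_ofReal
      have hy0 : 0 < ‖y‖ := by linarith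
      have h1 : ‖x - y‖ ^ (-a) ≤ 2 ^ a * ‖y‖ ^ (-a) := by
        have h3 : (2 : ℝ) ^ a = (2⁻¹ : ℝ) ^ (-a) := by
          rw [Real.inv_rpow (by norm_num), Real.rpow_neg (by norm_num), inv_inv]
        rw [h3, ← Real.mul_rpow (by norm_num) (by positivity)]
        exact hm (by positivity) (by linarith) ha0
      have h2 := hm hy0 hyn hb0
      rw [neg_add, Real.rpow_add hy0, ← mul_assoc]
      gcongr
  refine ⟨2 ^ b * C1 + 4 ^ a * C2 * 9 ^ ((n : ℝ) - b) + 2 ^ a * C3, by positivity, fun x => ?_⟩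
  have hx := jap_pos x
  have hmA : Measurable fun y : Euc n =>
      (if ‖x - y‖ < jap x then ENNReal.ofReal (‖x - y‖ ^ (-a)) else 0) :=
    Measurable.ite (measurableSet_lt (by fun_prop) measurable_const) (by fun_prop) measurable_const
  have hmB : Measurable fun y : Euc n =>
      (if ‖y‖ < 9 * jap x then ENNReal.ofReal (‖y‖ ^ (-b)) else 0) :=
    Measurable.ite (measurableSet_lt (by fun_prop) measurable_const) (by fun_prop) measurable_const
  refine (lintegral_mono_ae ((ae_ne_pt hn 0).mono fun y hy => key x y hy)).trans ?_
  rw [lintegral_add_left (by fun_prop), lintegral_add_left (by fun_prop),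
    lintegral_const_mul' _ _ (by simp), lintegral_const_mul' _ _ (by simp),
    lintegral_const_mul' _ _ (by simp)]
  have e1 : ∫⁻ y : Euc n, (if ‖x - y‖ < jap x then ENNReal.ofReal (‖x - y‖ ^ (-a)) else 0) =
      ∫⁻ z : Euc n, (if ‖z‖ < jap x then ENNReal.ofReal (‖z‖ ^ (-a)) else 0) :=
    lintegral_sub_left_eq_self (fun z : Euc n =>
      if ‖z‖ < jap x then ENNReal.ofReal (‖z‖ ^ (-a)) else 0) x
  rw [e1]
  have g1 := h1 (jap x) hx
  have g2 := h2 (9 * jap x) (by positivity)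
  have g3 := h3 (jap x) hx
  refine (add_le_add (mul_le_mul_right g1 _) (add_le_add (mul_le_mul_right g2 _)
    (mul_le_mul_right g3 _))).trans ?_
  rw [← ENNReal.ofReal_mul (by positivity), ← ENNReal.ofReal_mul (by positivity),
    ← ENNReal.ofReal_mul (by positivity), ← ENNReal.ofReal_add (by positivity) (by positivity),
    ← ENNReal.ofReal_add (by positivity) (by positivity)]
  apply ENNReal.ofReal_le_ofReal
  apply le_of_eq
  have i2 : (jap x / 2) ^ (-b) = 2 ^ b * jap x ^ (-b) := by
    rw [Real.div_rpow hx.le (by norm_num), Real.rpow_neg (by norm_num : (0:ℝ) ≤ 2)]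
    field_simp
  have i4 : (jap x / 4) ^ (-a) = 4 ^ a * jap x ^ (-a) := by
    rw [Real.div_rpow hx.le (by norm_num), Real.rpow_neg (by norm_num : (0:ℝ) ≤ 4)]
    field_simp
  have j1 : jap x ^ ((n : ℝ) - a - b) = jap x ^ (-b) * jap x ^ ((n : ℝ) - a) := by
    rw [← Real.rpow_add hx]; congr 1; ring
  have j2 : jap x ^ ((n : ℝ) - a - b) = jap x ^ (-a) * jap x ^ ((n : ℝ) - b) := by
    rw [← Real.rpow_add hx]; congr 1; ring
  have j3 : jap x ^ ((n : ℝ) - a - b) = jap x ^ ((n : ℝ) - (a + b)) := by congr 1; ring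
  rw [i2, i4, Real.mul_rpow (by norm_num) hx.le, add_mul, add_mul]
  nth_rw 1 [j1]
  nth_rw 1 [j2]
  rw [j3]
  ring

/-! ### Weighted bounds for Riesz potentials -/

/-- The Japanese bracket as an extended nonnegative real. -/
def eJ {n : ℕ} (x : Euc n) : ℝ≥0∞ := ENNReal.ofReal (jap x)

lemma eJ_ne_zero {n : ℕ} (x : Euc n) : eJ x ≠ 0 := by simp [eJ, jap_pos x]
lemma eJ_ne_top {n : ℕ} (x : Euc n) : eJ x ≠ ⊤ := by simp [eJ]
lemma eJ_rpow {n : ℕ} (x : Euc n) (r : ℝ) : ENNReal.ofReal (jap x ^ r) = eJ x ^ r :=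
  (ENNReal.ofReal_rpow_of_pos (jap_pos x)).symm
lemma eJ_add {n : ℕ} (x : Euc n) (r s : ℝ) : eJ x ^ (r + s) = eJ x ^ r * eJ x ^ s :=
  ENNReal.rpow_add r s (eJ_ne_zero x) (eJ_ne_top x)
@[fun_prop]
lemma measurable_eJ {n : ℕ} : Measurable (eJ : Euc n → ℝ≥0∞) :=
  ENNReal.measurable_ofReal.comp measurable_jap

/-- The integrand of the weighted `L^p` norm. -/
lemma LpW_integrand {n : ℕ} {F : Type*} [NormedAddCommGroup F] {p : ℝ} (hp : 0 < p) (r : ℝ)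
    (x : Euc n) (v : F) :
    ENNReal.ofReal ((jap x ^ r * ‖v‖) ^ p) = (eJ x ^ r * ‖v‖ₑ) ^ p := by
  rw [← ENNReal.ofReal_rpow_of_nonneg (by have := jap_pos x; positivity) hp.le,
    ENNReal.ofReal_mul (by have := jap_pos x; positivity), eJ_rpow, ofReal_norm]

/-- The Riesz potential `∫ ‖x-y‖^{-a} |g(y)| dy`. -/
def RP {n : ℕ} {F : Type*} [NormedAddCommGroup F] (a : ℝ) (g : Euc n → F) (x : Euc n) : ℝ≥0∞ :=
  ∫⁻ y, ENNReal.ofReal (‖x - y‖ ^ (-a)) * ‖g y‖ₑ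

lemma ker_bound' {n : ℕ} (hn : 3 ≤ n) {a b : ℝ} (ha0 : 0 < a) (ha : a < n) (hb0 : 0 < b)
    (hb : b < n) (hab : n < a + b) : ∃ C : ℝ, 0 ≤ C ∧ ∀ x : Euc n,
    ∫⁻ y : Euc n, ENNReal.ofReal (‖x - y‖ ^ (-a)) * eJ y ^ (-b) ≤
      ENNReal.ofReal C * eJ x ^ ((n : ℝ) - a - b) := by
  obtain ⟨C, hC, h⟩ := ker_bound hn ha0 ha hb0 hb hab
  refine ⟨C, hC, fun x => ?_⟩
  rw [← eJ_rpow, ← ENNReal.ofReal_mul hC]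
  refine le_trans (le_of_eq ?_) (h x)
  congr 1; ext y
  rw [← eJ_rpow, ← ENNReal.ofReal_mul (by positivity)]

/-- Pointwise decay of Riesz potentials of `L^p_μ` functions (Hölder's inequality). -/
lemma RP_pointwise {n : ℕ} (hn : 3 ≤ n) {p q a μ : ℝ} (hpq : p.HolderConjugate q)
    (ha0 : 0 < a) (haq : a * q < n) (hb0 : 0 < -μ - n / p) (hbq : (-μ - n / p) * q < n)
    (hab : n < (a + (-μ - n / p)) * q) : ∃ C : ℝ, 0 ≤ C ∧
    ∀ {F : Type} [NormedAddCommGroup F] (g : Euc n → F), Measurable (fun y => ‖g y‖ₑ) →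
    ∀ x : Euc n, RP a g x ≤ ENNReal.ofReal C * eJ x ^ (μ + n - a) * LpW p μ g := by
  have hp := hpq.pos
  have hq := hpq.symm.pos
  set b := -μ - n / p with hb
  obtain ⟨C, hC, h⟩ := ker_bound' hn (mul_pos ha0 hq) haq (mul_pos hb0 hq) hbq (by linarith)
  refine ⟨C ^ (1 / q), by positivity, fun {F} _ g hg x => ?_⟩
  have e0 : ∀ y : Euc n, ENNReal.ofReal (‖x - y‖ ^ (-a)) * ‖g y‖ₑ =
      ((fun y => ENNReal.ofReal (‖x - y‖ ^ (-a)) * eJ y ^ (-b)) *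
        (fun y => eJ y ^ b * ‖g y‖ₑ)) y := by
    intro y
    simp only [Pi.mul_apply]
    have : eJ y ^ (-b) * eJ y ^ b = 1 := by
      rw [← eJ_add]; simp
    calc _ = ENNReal.ofReal (‖x - y‖ ^ (-a)) * (eJ y ^ (-b) * eJ y ^ b) * ‖g y‖ₑ := by
          rw [this, mul_one]
      _ = _ := by ring
  unfold RP
  simp_rw [e0]
  refine (ENNReal.lintegral_mul_le_Lp_mul_Lq volume hpq.symm (by fun_prop)
    (by fun_prop)).trans ?_
  have e1 : (∫⁻ y : Euc n, (eJ y ^ b * ‖g y‖ₑ) ^ p) ^ (1 / p) = LpW p μ g := by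
    unfold LpW
    simp_rw [LpW_integrand hp]
    rfl
  rw [e1]
  gcongr
  have e2 : ∀ y : Euc n, (ENNReal.ofReal (‖x - y‖ ^ (-a)) * eJ y ^ (-b)) ^ q =
      ENNReal.ofReal (‖x - y‖ ^ (-(a * q))) * eJ y ^ (-(b * q)) := by
    intro y
    rw [ENNReal.mul_rpow_of_nonneg _ _ hq.le, ← ENNReal.rpow_mul,
      ENNReal.ofReal_rpow_of_nonneg (by positivity) hq.le, ← Real.rpow_mul (norm_nonneg _)]
    simp only [neg_mul]
  simp_rw [e2]
  refine (ENNReal.rpow_le_rpow (h x) (by positivity)).trans (le_of_eq ?_)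
  rw [ENNReal.mul_rpow_of_nonneg _ _ (by positivity), ← ENNReal.rpow_mul,
    ENNReal.ofReal_rpow_of_nonneg hC (by positivity)]
  congr 2
  have : 1 / q = 1 - 1 / p := by have := hpq.inv_add_inv_eq_one; field_simp at this ⊢; linarith
  have hq' : q * (1 / q) = 1 := by field_simp
  calc ((n : ℝ) - a * q - b * q) * (1 / q) = n * (1 / q) - a * (q * (1 / q)) - b * (q * (1 / q)) := by
        ring
    _ = _ := by rw [hq', this, hb]; ring

/-- Weighted `L^p` bound for Riesz potentials of order `m = n - a` (Schur test). -/
lemma RP_Lp {n : ℕ} (hn : 3 ≤ n) {p q a m μ θ : ℝ} (hpq : p.HolderConjugate q)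
    (ham : a = n - m) (ha0 : 0 < a) (hm : 0 < m) (h1 : m < θ * q) (h2 : θ * q < n)
    (h3 : m < (μ + m) * p + n - (m / q - θ) * p) (h4 : (μ + m) * p + n - (m / q - θ) * p < n) :
    ∃ C : ℝ, 0 ≤ C ∧
    ∀ {F : Type} [NormedAddCommGroup F] (g : Euc n → F), Measurable (fun y => ‖g y‖ₑ) →
    ∫⁻ x, (eJ x ^ (-(μ + m) - n / p) * RP a g x) ^ p ≤
      ENNReal.ofReal C * ∫⁻ x, (eJ x ^ (-μ - n / p) * ‖g x‖ₑ) ^ p := by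
  have hp := hpq.pos
  have hq := hpq.symm.pos
  obtain ⟨C1, hC1, k1⟩ := ker_bound' hn (a := a) (b := θ * q) ha0 (by linarith) (by linarith) h2
    (by linarith)
  set b := (μ + m) * p + n - (m / q - θ) * p with hb
  obtain ⟨C2, hC2, k2⟩ := ker_bound' hn (a := a) (b := b) ha0 (by linarith) (by linarith) h4
    (by linarith)
  refine ⟨C1 ^ (p / q) * C2, by positivity, fun {F} _ g hg => ?_⟩
  have step1 : ∀ x : Euc n, (RP a g x) ^ p ≤ ENNReal.ofReal (C1 ^ (p / q)) *
      eJ x ^ ((m - θ * q) * (p / q)) *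
      ∫⁻ y, ENNReal.ofReal (‖x - y‖ ^ (-a)) * (eJ y ^ (θ * p) * ‖g y‖ₑ ^ p) := by
    intro x
    -- Hölder after splitting the kernel `k` as `k^{1/q} ⟨y⟩^{-θ} · k^{1/p} ⟨y⟩^θ`
    have hk : ∀ y : Euc n, ENNReal.ofReal (‖x - y‖ ^ (-a)) * ‖g y‖ₑ =
        ((fun y => ENNReal.ofReal (‖x - y‖ ^ (-a)) ^ (1 / q) * eJ y ^ (-θ)) *
        (fun y => ENNReal.ofReal (‖x - y‖ ^ (-a)) ^ (1 / p) * (eJ y ^ θ * ‖g y‖ₑ))) y := by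
      intro y
      simp only [Pi.mul_apply]
      have e1 : eJ y ^ (-θ) * eJ y ^ θ = 1 := by rw [← eJ_add]; simp
      have e2 : ENNReal.ofReal (‖x - y‖ ^ (-a)) ^ (1 / q) *
          ENNReal.ofReal (‖x - y‖ ^ (-a)) ^ (1 / p) = ENNReal.ofReal (‖x - y‖ ^ (-a)) := by
        rw [← ENNReal.rpow_add_of_nonneg _ _ (by positivity) (by positivity)]
        have : 1 / q + 1 / p = 1 := by
          have := hpq.inv_add_inv_eq_one
          simp only [one_div]; linarith
        rw [this, ENNReal.rpow_one]
      nth_rw 1 [← e2]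
      calc ENNReal.ofReal (‖x - y‖ ^ (-a)) ^ (1 / q) * ENNReal.ofReal (‖x - y‖ ^ (-a)) ^ (1 / p) *
            ‖g y‖ₑ = ENNReal.ofReal (‖x - y‖ ^ (-a)) ^ (1 / q) *
            ENNReal.ofReal (‖x - y‖ ^ (-a)) ^ (1 / p) * (eJ y ^ (-θ) * eJ y ^ θ) * ‖g y‖ₑ := by
            rw [e1, mul_one]
        _ = _ := by ring
    unfold RP
    simp_rw [hk]
    refine (ENNReal.rpow_le_rpow (ENNReal.lintegral_mul_le_Lp_mul_Lq volume hpq.symm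
      (by fun_prop) (by fun_prop)) hp.le).trans ?_
    rw [ENNReal.mul_rpow_of_nonneg _ _ hp.le, ← ENNReal.rpow_mul, ← ENNReal.rpow_mul]
    have e3 : 1 / p * p = 1 := by field_simp
    rw [e3, ENNReal.rpow_one]
    have e4 : ∀ y : Euc n, (ENNReal.ofReal (‖x - y‖ ^ (-a)) ^ (1 / q) * eJ y ^ (-θ)) ^ q =
        ENNReal.ofReal (‖x - y‖ ^ (-a)) * eJ y ^ (-(θ * q)) := by
      intro y
      rw [ENNReal.mul_rpow_of_nonneg _ _ hq.le, ← ENNReal.rpow_mul, ← ENNReal.rpow_mul]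
      have : 1 / q * q = 1 := by field_simp
      rw [this, ENNReal.rpow_one, neg_mul]
    have e5 : ∀ y : Euc n, (ENNReal.ofReal (‖x - y‖ ^ (-a)) ^ (1 / p) * (eJ y ^ θ * ‖g y‖ₑ)) ^ p =
        ENNReal.ofReal (‖x - y‖ ^ (-a)) * (eJ y ^ (θ * p) * ‖g y‖ₑ ^ p) := by
      intro y
      rw [ENNReal.mul_rpow_of_nonneg _ _ hp.le, ENNReal.mul_rpow_of_nonneg _ _ hp.le,
        ← ENNReal.rpow_mul, ← ENNReal.rpow_mul, e3, ENNReal.rpow_one]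
    simp_rw [e4, e5]
    gcongr
    have e6 : 1 / q * p = p / q := by ring
    rw [e6]
    refine (ENNReal.rpow_le_rpow (k1 x) (by positivity)).trans (le_of_eq ?_)
    rw [ENNReal.mul_rpow_of_nonneg _ _ (by positivity), ← ENNReal.rpow_mul,
      ENNReal.ofReal_rpow_of_nonneg hC1 (by positivity)]
    congr 3
    linarith
  have hmeas : Measurable (Function.uncurry fun (x y : Euc n) =>
      eJ x ^ (-b) * (ENNReal.ofReal (‖x - y‖ ^ (-a)) * (eJ y ^ (θ * p) * ‖g y‖ₑ ^ p))) := by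
    have hg' : Measurable fun z : Euc n × Euc n => ‖g z.2‖ₑ := hg.comp measurable_snd
    simp only [Function.uncurry_def]
    fun_prop
  calc ∫⁻ x, (eJ x ^ (-(μ + m) - n / p) * RP a g x) ^ p
      ≤ ∫⁻ x, ENNReal.ofReal (C1 ^ (p / q)) * ∫⁻ y, eJ x ^ (-b) *
        (ENNReal.ofReal (‖x - y‖ ^ (-a)) * (eJ y ^ (θ * p) * ‖g y‖ₑ ^ p)) := by
        refine lintegral_mono fun x => ?_
        simp only
        rw [ENNReal.mul_rpow_of_nonneg _ _ hp.le, ← ENNReal.rpow_mul]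
        refine (mul_le_mul_right (step1 x) _).trans (le_of_eq ?_)
        rw [lintegral_const_mul' _ _ (by simp [ENNReal.rpow_eq_top_iff, eJ_ne_zero, eJ_ne_top])]
        have : -b = (-(μ + m) - n / p) * p + (m - θ * q) * (p / q) := by
          rw [hb]
          field_simp
          ring
        rw [this, eJ_add]
        ring
    _ = ENNReal.ofReal (C1 ^ (p / q)) * ∫⁻ y, ∫⁻ x, eJ x ^ (-b) *
        (ENNReal.ofReal (‖x - y‖ ^ (-a)) * (eJ y ^ (θ * p) * ‖g y‖ₑ ^ p)) := by
        rw [lintegral_const_mul' _ _ (by simp), lintegral_lintegral_swap hmeas.aemeasurable]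
    _ ≤ ENNReal.ofReal (C1 ^ (p / q)) * ∫⁻ y, ENNReal.ofReal C2 *
          (eJ y ^ (-μ - n / p) * ‖g y‖ₑ) ^ p := by
        gcongr with y
        have e7 : ∀ x : Euc n, eJ x ^ (-b) * (ENNReal.ofReal (‖x - y‖ ^ (-a)) *
            (eJ y ^ (θ * p) * ‖g y‖ₑ ^ p)) = (ENNReal.ofReal (‖y - x‖ ^ (-a)) * eJ x ^ (-b)) *
            (eJ y ^ (θ * p) * ‖g y‖ₑ ^ p) := by
          intro x; rw [norm_sub_rev]; ring
        simp_rw [e7]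
        rw [lintegral_mul_const _ (by fun_prop)]
        refine (mul_le_mul_left (k2 y) _).trans (le_of_eq ?_)
        rw [ENNReal.mul_rpow_of_nonneg _ _ hp.le, ← ENNReal.rpow_mul]
        have e8 : (-μ - n / p) * p = ((n : ℝ) - a - b) + θ * p := by
          rw [hb, ham]
          have : m / q * p = m * (p - 1) := by
            have h := hpq.sub_one_mul_conj
            rw [div_mul_eq_mul_div, div_eq_iff hq.ne']
            linear_combination (-m) * h
          have h' : (n : ℝ) / p * p = n := by field_simp
          linear_combination (1:ℝ) * (-1) * h' - this
        rw [e8, eJ_add]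
        ring
    _ = _ := by
        rw [lintegral_const_mul' _ _ (by simp), ← mul_assoc, ← ENNReal.ofReal_mul (by positivity)]

/-! ### Homogeneous kernels and their potentials -/

/-- A kernel that is smooth off the origin and positively homogeneous of degree `-a`. The value at
the origin is irrelevant. -/
def IsKer {n : ℕ} {F : Type} [NormedAddCommGroup F] [NormedSpace ℝ F] (a : ℝ) (k : Euc n → F) :
    Prop :=
  ContDiffOn ℝ (⊤ : ℕ∞) k {0}ᶜ ∧ ∀ c : ℝ, 0 < c → ∀ x, x ≠ 0 → k (c • x) = c ^ (-a) • k x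

/-- The potential `∫ g(y) k(x-y) dy`. -/
def Pot {n : ℕ} {F : Type} [NormedAddCommGroup F] [NormedSpace ℝ F] (k : Euc n → F)
    (g : Euc n → ℝ) (x : Euc n) : F := ∫ y, g y • k (x - y)

/-- Integrability of `g` against the weight `⟨y⟩^{-a}`, the natural condition for a density of a
potential of order `a`. -/
def IntW {n : ℕ} (a : ℝ) (g : Euc n → ℝ) : Prop := Integrable fun y => jap y ^ (-a) * g y

section
variable {n : ℕ} {F : Type} [NormedAddCommGroup F] [NormedSpace ℝ F]

lemma IsKer.contDiffAt {a : ℝ} {k : Euc n → F} (hk : IsKer a k) {x : Euc n} (hx : x ≠ 0) :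
    ContDiffAt ℝ (⊤ : ℕ∞) k x :=
  hk.1.contDiffAt (isOpen_compl_singleton.mem_nhds hx)

lemma IsKer.differentiableAt {a : ℝ} {k : Euc n → F} (hk : IsKer a k) {x : Euc n} (hx : x ≠ 0) :
    DifferentiableAt ℝ k x :=
  (hk.contDiffAt hx).differentiableAt (by simp)

lemma IsKer.bound {a : ℝ} {k : Euc n → F} (hk : IsKer a k) :
    ∃ C : ℝ, 0 ≤ C ∧ ∀ x, x ≠ 0 → ‖k x‖ ≤ C * ‖x‖ ^ (-a) := by
  have hc : ContinuousOn k (Metric.sphere 0 1) := hk.1.continuousOn.mono (by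
    intro x hx hx0
    simp only [Set.mem_singleton_iff] at hx0
    simp [hx0] at hx)
  obtain ⟨C, hC⟩ := (isCompact_sphere (0 : Euc n) 1).exists_bound_of_continuousOn hc
  refine ⟨max C 0, le_max_right _ _, fun x hx => ?_⟩
  have hx' : 0 < ‖x‖ := norm_pos_iff.2 hx
  have h1 : k x = ‖x‖ ^ (-a) • k (‖x‖⁻¹ • x) := by
    rw [← hk.2 ‖x‖ hx' _ (by simp [hx]), smul_smul, mul_inv_cancel₀ hx'.ne', one_smul]
  rw [h1, norm_smul, Real.norm_of_nonneg (by positivity), mul_comm]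
  gcongr
  refine le_trans (hC _ ?_) (le_max_left _ _)
  simp [norm_smul, hx'.ne']

lemma IsKer.fderiv {a : ℝ} {k : Euc n → F} (hk : IsKer a k) : IsKer (a + 1) (fderiv ℝ k) := by
  refine ⟨?_, fun c hc x hx => ?_⟩
  · exact hk.1.fderiv_of_isOpen isOpen_compl_singleton (by simp)
  · have hcx : c • x ≠ 0 := by simp [hc.ne', hx]
    have h1 : HasFDerivAt (fun y => k (c • y)) (c • _root_.fderiv ℝ k (c • x)) x := by
      have := (hk.differentiableAt hcx).hasFDerivAt.comp x
        ((hasFDerivAt_id (𝕜 := ℝ) x).const_smul c)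
      have e : c • _root_.fderiv ℝ k (c • x) =
          _root_.fderiv ℝ k (c • x) ∘SL (c • ContinuousLinearMap.id ℝ (Euc n)) := by
        ext v; simp
      rw [e]; exact this
    have h2 : HasFDerivAt (fun y => k (c • y)) (c ^ (-a) • _root_.fderiv ℝ k x) x := by
      refine ((hk.differentiableAt hx).hasFDerivAt.const_smul (c ^ (-a))).congr_of_eventuallyEq ?_
      filter_upwards [isOpen_compl_singleton.mem_nhds hx] with y hy
      exact hk.2 c hc y hy
    have h3 := h1.unique h2
    have : c ^ (-(a + 1)) = c⁻¹ * c ^ (-a) := by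
      rw [show -(a + 1) = -1 + -a by ring, Real.rpow_add hc, Real.rpow_neg_one]
    rw [this, mul_smul, ← h3, smul_smul, inv_mul_cancel₀ hc.ne', one_smul]

lemma IsKer.clm {G : Type} [NormedAddCommGroup G] [NormedSpace ℝ G] {a : ℝ} {k : Euc n → F}
    (hk : IsKer a k) (L : F →L[ℝ] G) : IsKer a (fun x => L (k x)) :=
  ⟨L.contDiff.comp_contDiffOn hk.1, fun c hc x hx => by beta_reduce; rw [hk.2 c hc x hx, map_smul]⟩

lemma IsKer.pd {a : ℝ} {k : Euc n → ℝ} (hk : IsKer a k) (i : Fin n) :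
    IsKer (a + 1) (_root_.pd i k) :=
  hk.fderiv.clm (ContinuousLinearMap.apply ℝ ℝ (EuclideanSpace.single i (1 : ℝ)))

lemma IsKer.add {a : ℝ} {k l : Euc n → F} (hk : IsKer a k) (hl : IsKer a l) :
    IsKer a (fun x => k x + l x) :=
  ⟨hk.1.add hl.1, fun c hc x hx => by beta_reduce; rw [hk.2 c hc x hx, hl.2 c hc x hx, smul_add]⟩

lemma IsKer.const_smul {a : ℝ} {k : Euc n → F} (hk : IsKer a k) (b : ℝ) :
    IsKer a (fun x => b • k x) :=
  ⟨hk.1.const_smul b, fun c hc x hx => by beta_reduce; rw [hk.2 c hc x hx, smul_comm]⟩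

lemma IsKer.aesm (hn : 3 ≤ n) {a : ℝ} {k : Euc n → F} (hk : IsKer a k) :
    AEStronglyMeasurable k volume := by
  have h := hk.1.continuousOn.aestronglyMeasurable (μ := volume)
    (isOpen_compl_singleton (x := (0 : Euc n))).measurableSet
  rwa [Measure.restrict_eq_self_of_ae_mem] at h
  exact ae_ne_pt hn 0

lemma IsKer.aesm_sub (hn : 3 ≤ n) {a : ℝ} {k : Euc n → F} (hk : IsKer a k) (x : Euc n) :
    AEStronglyMeasurable (fun y => k (x - y)) volume :=
  (hk.aesm hn).comp_quasiMeasurePreserving (quasiMeasurePreserving_sub_left volume x)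

lemma IntW.mono {a b : ℝ} {g : Euc n → ℝ} (h : IntW a g) (hab : a ≤ b) : IntW b g := by
  have h1 : Integrable fun y => jap y ^ (a - b) * (jap y ^ (-a) * g y) := by
    refine Integrable.mono h ?_ (ae_of_all _ fun y => ?_)
    · exact (continuous_jap_rpow _).aestronglyMeasurable.mul h.aestronglyMeasurable
    · rw [norm_mul]
      refine mul_le_of_le_one_left (norm_nonneg _) ?_
      rw [Real.norm_of_nonneg (by have := jap_pos y; positivity)]
      exact Real.rpow_le_one_of_one_le_of_nonpos (jap_ge_one y) (by linarith)
  refine h1.congr (ae_of_all _ fun y => ?_)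
  simp only
  rw [← mul_assoc, ← Real.rpow_add (jap_pos y)]
  congr 2; ring

lemma IntW.aesm {a : ℝ} {g : Euc n → ℝ} (h : IntW a g) : AEStronglyMeasurable g volume := by
  have h1 := (continuous_jap_rpow (n := n) a).aestronglyMeasurable (μ := volume) |>.mul
    h.aestronglyMeasurable
  refine h1.congr (ae_of_all _ fun y => ?_)
  simp only [Pi.mul_apply]
  rw [← mul_assoc, ← Real.rpow_add (jap_pos y)]
  simp

lemma intW_of_RP (hn : 3 ≤ n) {a : ℝ} (ha : 0 ≤ a) {g : Euc n → ℝ} (hg : Continuous g)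
    (h : RP a g 0 < ⊤) : IntW a g := by
  refine ⟨((continuous_jap_rpow _).mul hg).aestronglyMeasurable, ?_⟩
  refine lt_of_le_of_lt (lintegral_mono_ae ?_) h
  filter_upwards [ae_ne_pt hn 0] with y hy
  rw [enorm_mul]
  gcongr
  rw [Real.enorm_of_nonneg (by have := jap_pos y; positivity)]
  refine ENNReal.ofReal_le_ofReal ?_
  rw [zero_sub, norm_neg]
  exact Real.rpow_le_rpow_of_nonpos (norm_pos_iff.2 hy) (norm_le_jap y) (by linarith)

/-- Away from a ball around `x₀`, the distance to points near `x₀` controls `⟨y⟩`. -/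
lemma far_ker_le {a R : ℝ} (ha : 0 ≤ a) (hR : 0 < R) (x₀ x y : Euc n) (hx : x ∈ Metric.ball x₀ R)
    (hy : R ≤ ‖x - y‖) :
    ‖x - y‖ ^ (-a) ≤ (1 + (jap x₀ + R) / R) ^ a * jap y ^ (-a) := by
  have h0 := jap_pos x₀
  have h1 : jap y ≤ (1 + (jap x₀ + R) / R) * ‖x - y‖ := by
    have h2 := jap_le_jap_add y x
    have h3 := jap_le_jap_add x x₀
    rw [Metric.mem_ball, dist_eq_norm] at hx
    rw [norm_sub_rev] at h2
    have : jap x₀ + R ≤ (jap x₀ + R) / R * ‖x - y‖ := by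
      rw [div_mul_eq_mul_div, le_div_iff₀ hR]
      gcongr
    linarith
  have hxy : 0 < ‖x - y‖ := by linarith
  have hc : 0 < 1 + (jap x₀ + R) / R := by positivity
  rw [Real.rpow_neg hxy.le, Real.rpow_neg (jap_pos y).le, ← div_eq_mul_inv, ← one_div,
    div_le_div_iff₀ (by positivity) (Real.rpow_pos_of_pos (jap_pos y) _), one_mul,
    ← Real.mul_rpow hc.le hxy.le]
  exact Real.rpow_le_rpow (jap_pos y).le h1 ha

/-- Differentiation under the integral sign when the density vanishes near the point. -/
lemma far_hasFDerivAt [CompleteSpace F] (hn : 3 ≤ n) {a : ℝ} (ha : 0 ≤ a) {k : Euc n → F}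
    (hk : IsKer a k) {g : Euc n → ℝ}
    (hg : IntW a g) {x₀ : Euc n} {R : ℝ} (hR : 0 < R)
    (hg0 : ∀ y ∈ Metric.ball x₀ (2 * R), g y = 0) :
    ∀ x ∈ Metric.ball x₀ R, HasFDerivAt (Pot k g) (Pot (fderiv ℝ k) g x) x := by
  intro x hx
  have hdist : ∀ x ∈ Metric.ball x₀ R, ∀ y, g y ≠ 0 → R ≤ ‖x - y‖ := by
    intro x hx y hy
    by_contra hlt
    push Not at hlt
    refine hy (hg0 y ?_)
    rw [Metric.mem_ball] at hx ⊢
    rw [← dist_eq_norm] at hlt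
    have := dist_triangle y x x₀
    rw [dist_comm y x] at this
    linarith
  obtain ⟨C, hC, hCb⟩ := hk.bound
  obtain ⟨C', hC', hCb'⟩ := hk.fderiv.bound
  set B := (1 + (jap x₀ + R) / R) ^ a
  set B' := (1 + (jap x₀ + R) / R) ^ (a + 1)
  have hj : 0 < jap x₀ := jap_pos x₀
  have hb1 : ∀ x ∈ Metric.ball x₀ R, ∀ y, ‖g y • k (x - y)‖ ≤ C * B * ‖jap y ^ (-a) * g y‖ := by
    intro x hx y
    by_cases hy : g y = 0
    · simp [hy]
    have h1 := hdist x hx y hy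
    have h2 := hCb (x - y) (by intro h; rw [h] at h1; simp at h1; linarith)
    have h3 := far_ker_le ha hR x₀ x y hx h1
    rw [norm_smul, norm_mul, Real.norm_of_nonneg (r := jap y ^ (-a)) (by have := jap_pos y; positivity)]
    calc ‖g y‖ * ‖k (x - y)‖ ≤ ‖g y‖ * (C * (B * jap y ^ (-a))) := by gcongr; exact h2.trans (by gcongr)
      _ = _ := by ring
  have hb2 : ∀ x ∈ Metric.ball x₀ R, ∀ y, ‖g y • fderiv ℝ k (x - y)‖ ≤
      C' * B' * ‖jap y ^ (-(a + 1)) * g y‖ := by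
    intro x hx y
    by_cases hy : g y = 0
    · simp [hy]
    have h1 := hdist x hx y hy
    have h2 := hCb' (x - y) (by intro h; rw [h] at h1; simp at h1; linarith)
    have h3 := far_ker_le (a := a + 1) (by linarith) hR x₀ x y hx h1
    rw [norm_smul, norm_mul, Real.norm_of_nonneg (r := jap y ^ (-(a + 1))) (by have := jap_pos y; positivity)]
    calc ‖g y‖ * ‖fderiv ℝ k (x - y)‖ ≤ ‖g y‖ * (C' * (B' * jap y ^ (-(a + 1)))) := by
          gcongr; exact h2.trans (by gcongr)
      _ = _ := by ring
  have := hasFDerivAt_integral_of_dominated_of_fderiv_le (𝕜 := ℝ) (μ := (volume : Measure (Euc n)))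
    (F := fun x y => g y • k (x - y)) (F' := fun x y => g y • fderiv ℝ k (x - y)) (x₀ := x)
    (s := Metric.ball x₀ R)
    (bound := fun y => C' * B' * ‖jap y ^ (-(a + 1)) * g y‖)
    (Metric.isOpen_ball.mem_nhds hx)
    (Eventually.of_forall fun x => hg.aesm.smul (hk.aesm_sub hn x))
    ?_ (hg.aesm.smul (hk.fderiv.aesm_sub hn x)) ?_ ?_ ?_
  · exact this
  · exact ((Integrable.norm hg).const_mul (C * B)).mono' (hg.aesm.smul (hk.aesm_sub hn x))
      (ae_of_all _ (hb1 x hx))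
  · exact ae_of_all _ fun y x hx => hb2 x hx y
  · exact (Integrable.norm (hg.mono (by linarith : a ≤ a + 1))).const_mul _
  · refine ae_of_all _ fun y x hx => ?_
    by_cases hy : g y = 0
    · simp only [hy, zero_smul]; exact hasFDerivAt_const _ _
    have h1 := hdist x hx y hy
    have hxy : x - y ≠ 0 := by intro h; rw [h] at h1; simp at h1; linarith
    have := (hk.differentiableAt hxy).hasFDerivAt.comp x ((hasFDerivAt_id (𝕜 := ℝ) x).sub_const y)
    exact this.const_smul (g y)

lemma far_contDiffOn (hn : 3 ≤ n) (m : ℕ) : ∀ {F : Type} [NormedAddCommGroup F] [NormedSpace ℝ F]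
    [CompleteSpace F] {a : ℝ} (_ : 0 ≤ a) {k : Euc n → F}
    (_ : IsKer a k) {g : Euc n → ℝ} (_ : IntW a g) {x₀ : Euc n} {R : ℝ} (_ : 0 < R)
    (_ : ∀ y ∈ Metric.ball x₀ (2 * R), g y = 0),
    ContDiffOn ℝ m (Pot k g) (Metric.ball x₀ R) := by
  induction m with
  | zero =>
    intro F _ _ _ a ha k hk g hg x₀ R hR hg0
    simp only [Nat.cast_zero, contDiffOn_zero]
    intro x hx
    exact (far_hasFDerivAt hn ha hk hg hR hg0 x hx).continuousAt.continuousWithinAt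
  | succ m ih =>
    intro F _ _ _ a ha k hk g hg x₀ R hR hg0
    have hd := far_hasFDerivAt hn ha hk hg hR hg0
    push_cast
    rw [contDiffOn_succ_iff_fderiv_of_isOpen Metric.isOpen_ball]
    refine ⟨fun x hx => (hd x hx).differentiableAt.differentiableWithinAt, by simp, ?_⟩
    refine (ih (by linarith : 0 ≤ a + 1) hk.fderiv (hg.mono (by linarith)) hR hg0).congr ?_
    intro x hx
    exact (hd x hx).fderiv

end

/-! ### Regularity of potentials -/

section
variable {n : ℕ} {F : Type} [NormedAddCommGroup F] [NormedSpace ℝ F]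

lemma IsKer.enorm_le {a : ℝ} {k : Euc n → F} (hk : IsKer a k) : ∃ C : ℝ, 0 ≤ C ∧
    ∀ x, x ≠ 0 → ‖k x‖ₑ ≤ ENNReal.ofReal C * ENNReal.ofReal (‖x‖ ^ (-a)) := by
  obtain ⟨C, hC, h⟩ := hk.bound
  refine ⟨C, hC, fun x hx => ?_⟩
  rw [← ENNReal.ofReal_mul hC, ← ofReal_norm]
  exact ENNReal.ofReal_le_ofReal (h x hx)

lemma IsKer.locallyIntegrable (hn : 3 ≤ n) {a : ℝ} (ha : a < n) {k : Euc n → F}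
    (hk : IsKer a k) : LocallyIntegrable k volume := by
  obtain ⟨C, hC, h⟩ := hk.enorm_le
  obtain ⟨C1, hC1, h1⟩ := lint_ball hn ha
  have key : ∀ R : ℝ, 0 < R → IntegrableOn k (Metric.ball 0 R) := by
    intro R hR
    refine ⟨(hk.aesm hn).restrict, ?_⟩
    have : ∫⁻ z in Metric.ball (0 : Euc n) R, ‖k z‖ₑ ≤ ENNReal.ofReal C *
        ∫⁻ z : Euc n, (if ‖z‖ < R then ENNReal.ofReal (‖z‖ ^ (-a)) else 0) := by
      rw [← lintegral_const_mul' _ _ (by simp), ← lintegral_indicator measurableSet_ball]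
      refine lintegral_mono_ae ?_
      filter_upwards [ae_ne_pt hn 0] with z hz
      by_cases hzR : ‖z‖ < R
      · simpa [Set.indicator, hzR] using h z hz
      · simp [Set.indicator, hzR]
    exact this.trans_lt (ENNReal.mul_lt_top (by simp) ((h1 R hR).trans_lt (by simp)))
  intro x
  refine ⟨Metric.ball 0 (‖x‖ + 1), Metric.isOpen_ball.mem_nhds (by simp), key _ (by positivity)⟩

/-- Riesz potentials are locally bounded: on the unit ball around `x` the density is bounded and the
kernel integrable, elsewhere the kernel is at most a multiple of `⟨y⟩^{-a}`. -/
lemma RP_loc_bdd (hn : 3 ≤ n) {a : ℝ} (ha0 : 0 ≤ a) (ha : a < n) {g : Euc n → ℝ}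
    (hg : Continuous g) (hgi : IntW a g) (R : ℝ) : ∃ M : ℝ≥0∞, M < ⊤ ∧
    ∀ x : Euc n, ‖x‖ ≤ R → RP a g x ≤ M := by
  obtain ⟨C1, hC1, h1⟩ := lint_ball hn ha
  obtain ⟨G, hG⟩ := (isCompact_closedBall (0 : Euc n) (R + 1)).exists_bound_of_continuousOn
    hg.continuousOn
  set B := (1 + (jap (0 : Euc n) + (|R| + 1)) / 1) ^ a with hB
  refine ⟨ENNReal.ofReal G * ENNReal.ofReal (C1 * 1 ^ ((n : ℝ) - a)) + ENNReal.ofReal B *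
    ∫⁻ y, ‖jap y ^ (-a) * g y‖ₑ, ?_, fun x hx => ?_⟩
  · exact ENNReal.add_lt_top.2 ⟨ENNReal.mul_lt_top (by simp) (by simp),
      ENNReal.mul_lt_top (by simp) hgi.2⟩
  have hpt : ∀ y : Euc n, ENNReal.ofReal (‖x - y‖ ^ (-a)) * ‖g y‖ₑ ≤
      ENNReal.ofReal G * (if ‖x - y‖ < 1 then ENNReal.ofReal (‖x - y‖ ^ (-a)) else 0) +
      ENNReal.ofReal B * ‖jap y ^ (-a) * g y‖ₑ := by
    intro y
    by_cases hxy : ‖x - y‖ < 1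
    · simp only [hxy, if_true]
      refine le_add_right ?_
      rw [mul_comm]
      gcongr
      rw [← ofReal_norm]
      refine ENNReal.ofReal_le_ofReal (hG y ?_)
      rw [mem_closedBall_zero_iff]
      have := norm_sub_norm_le y x
      rw [norm_sub_rev] at this
      linarith
    · push Not at hxy
      simp only [hxy.not_gt, if_false, mul_zero, zero_add]
      rw [enorm_mul, ← mul_assoc]
      gcongr
      rw [Real.enorm_of_nonneg (by have := jap_pos y; positivity), ← ENNReal.ofReal_mul
        (by have := jap_pos (0 : Euc n); positivity)]
      refine ENNReal.ofReal_le_ofReal ?_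
      have h2 : jap y ≤ (1 + (jap (0 : Euc n) + (|R| + 1)) / 1) * ‖x - y‖ := by
        have e1 := jap_le_jap_add y x
        have e2 := jap_le_jap_add x 0
        rw [norm_sub_rev] at e1
        have e3 := le_abs_self R
        have e4 := jap_pos (0 : Euc n)
        rw [sub_zero] at e2
        have e5 : jap (0 : Euc n) + (|R| + 1) ≤ (jap (0 : Euc n) + (|R| + 1)) * ‖x - y‖ :=
          le_mul_of_one_le_right (by positivity) hxy
        rw [div_one, add_mul, one_mul]
        linarith
      have hxy' : 0 < ‖x - y‖ := by linarith
      have hc : 0 < 1 + (jap (0 : Euc n) + (|R| + 1)) / 1 := by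
        have := jap_pos (0 : Euc n); positivity
      rw [Real.rpow_neg hxy'.le, Real.rpow_neg (jap_pos y).le, ← div_eq_mul_inv, ← one_div,
        div_le_div_iff₀ (by positivity) (Real.rpow_pos_of_pos (jap_pos y) _), one_mul, hB,
        ← Real.mul_rpow hc.le hxy'.le]
      exact Real.rpow_le_rpow (jap_pos y).le h2 ha0
  unfold RP
  refine (lintegral_mono hpt).trans ?_
  rw [lintegral_add_left (by
    refine Measurable.const_mul (Measurable.ite ?_ (by fun_prop) (by fun_prop)) _
    exact measurableSet_lt (by fun_prop) (by fun_prop)), lintegral_const_mul' _ _ (by simp),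
    lintegral_const_mul' _ _ (by simp)]
  gcongr
  rw [lintegral_sub_left_eq_self (μ := (volume : Measure (Euc n)))
    (fun z => if ‖z‖ < 1 then ENNReal.ofReal (‖z‖ ^ (-a)) else 0) x]
  exact h1 1 one_pos

lemma pot_enorm_int_le (hn : 3 ≤ n) {a : ℝ} {k : Euc n → F} (hk : IsKer a k) : ∃ C : ℝ, 0 ≤ C ∧
    ∀ (g : Euc n → ℝ) (x : Euc n),
    ∫⁻ y, ‖g y • k (x - y)‖ₑ ≤ ENNReal.ofReal C * RP a g x := by
  obtain ⟨C, hC, h⟩ := hk.enorm_le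
  refine ⟨C, hC, fun g x => ?_⟩
  unfold RP
  rw [← lintegral_const_mul' _ _ (by simp)]
  refine lintegral_mono_ae ?_
  filter_upwards [ae_ne_pt hn x] with y hy
  rw [enorm_smul, mul_comm, ← mul_assoc]
  gcongr
  exact h _ (sub_ne_zero.2 hy.symm)

lemma pot_integrable_of_RP (hn : 3 ≤ n) {a : ℝ} {k : Euc n → F}
    (hk : IsKer a k) {g : Euc n → ℝ} (hg : Continuous g) {x : Euc n} (h : RP a g x < ⊤) :
    Integrable (fun y => g y • k (x - y)) := by
  obtain ⟨C, hC, hb⟩ := pot_enorm_int_le hn hk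
  exact ⟨hg.aestronglyMeasurable.smul (hk.aesm_sub hn x),
    (hb g x).trans_lt (ENNReal.mul_lt_top (by simp) h)⟩

lemma pot_integrable (hn : 3 ≤ n) {a : ℝ} (ha0 : 0 ≤ a) (ha : a < n) {k : Euc n → F}
    (hk : IsKer a k) {g : Euc n → ℝ} (hg : Continuous g) (hgi : IntW a g) (x : Euc n) :
    Integrable (fun y => g y • k (x - y)) := by
  obtain ⟨M, hM, h⟩ := RP_loc_bdd hn ha0 ha hg hgi ‖x‖
  exact pot_integrable_of_RP hn hk hg ((h x le_rfl).trans_lt hM)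

lemma pot_enorm_le (hn : 3 ≤ n) {a : ℝ} {k : Euc n → F} (hk : IsKer a k) : ∃ C : ℝ, 0 ≤ C ∧
    ∀ (g : Euc n → ℝ) (x : Euc n), ‖Pot k g x‖ₑ ≤ ENNReal.ofReal C * RP a g x := by
  obtain ⟨C, hC, h⟩ := pot_enorm_int_le hn hk
  exact ⟨C, hC, fun g x => (enorm_integral_le_lintegral_enorm _).trans (h g x)⟩

/-- Potentials of order `a < n` preserve `C^m` regularity of the density: near a point the
derivatives fall on the (cut-off) density, away from it on the kernel. -/
lemma pot_contDiff [CompleteSpace F] (hn : 3 ≤ n) {a : ℝ} (ha0 : 0 ≤ a) (ha : a < n)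
    {k : Euc n → F} (hk : IsKer a k)
    {g : Euc n → ℝ} (m : ℕ) (hg : ContDiff ℝ m g) (hgi : IntW a g) :
    ContDiff ℝ m (Pot k g) := by
  rw [contDiff_iff_contDiffAt]
  intro x₀
  let χ : ContDiffBump x₀ := ⟨2, 3, by norm_num, by norm_num⟩
  have hχ : ContDiff ℝ m χ := χ.contDiff
  have hχc : ContDiff ℝ m (fun y => χ y * g y) := hχ.mul hg
  have hχs : HasCompactSupport (fun y => χ y * g y) := χ.hasCompactSupport.mul_right
  have hi2 : IntW a (fun y => (1 - χ y) * g y) := by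
    refine Integrable.mono hgi ((continuous_jap_rpow _).mul
      ((continuous_const.sub χ.continuous).mul hg.continuous)).aestronglyMeasurable
      (ae_of_all _ fun y => ?_)
    rw [norm_mul, norm_mul, norm_mul]
    gcongr
    refine mul_le_of_le_one_left (norm_nonneg _) ?_
    rw [Real.norm_of_nonneg (by linarith [χ.le_one (x := y)])]
    linarith [χ.nonneg (x := y)]
  have hi1 : IntW a (fun y => χ y * g y) := by
    have := Integrable.sub hgi hi2
    refine this.congr (ae_of_all _ fun y => ?_)
    simp only [Pi.sub_apply]; ring
  have hc2 : Continuous (fun y => (1 - χ y) * g y) :=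
    (continuous_const.sub χ.continuous).mul hg.continuous
  have hsplit : Pot k g = fun x => Pot k (fun y => χ y * g y) x +
      Pot k (fun y => (1 - χ y) * g y) x := by
    ext x
    unfold Pot
    rw [← integral_add (pot_integrable hn ha0 ha hk hχc.continuous hi1 x)
      (pot_integrable hn ha0 ha hk hc2 hi2 x)]
    congr 1; ext y
    rw [← add_smul]; congr 1; ring
  rw [hsplit]
  refine ContDiffAt.add ?_ ?_
  · have := HasCompactSupport.contDiff_convolution_left (μ := (volume : Measure (Euc n)))
      (ContinuousLinearMap.lsmul ℝ ℝ) hχs hχc (hk.locallyIntegrable hn ha)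
    exact this.contDiffAt
  · refine (far_contDiffOn hn m ha0 hk hi2 one_pos (x₀ := x₀) ?_).contDiffAt
      (Metric.isOpen_ball.mem_nhds (by simp))
    intro y hy
    have : χ y = 1 := χ.one_of_mem_closedBall (by
      have := Metric.mem_ball.1 hy
      simp only [Metric.mem_closedBall]
      change dist y x₀ ≤ 2
      linarith)
    simp [this]

lemma ae_not_mem_line (hn : 3 ≤ n) (x h : Euc n) :
    ∀ᵐ y : Euc n, ∀ t : ℝ, x + t • h - y ≠ 0 := by
  have hne : (line[ℝ, x, x + h] : AffineSubspace ℝ (Euc n)) ≠ ⊤ := by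
    intro htop
    have h1 : Collinear ℝ ({x, x + h} : Set (Euc n)) := collinear_pair ℝ x (x + h)
    have h2 := h1.finrank_le_one
    rw [← direction_affineSpan, htop, AffineSubspace.direction_top, finrank_top] at h2
    simp at h2
    omega
  have h0 := Measure.addHaar_affineSubspace (volume : Measure (Euc n)) _ hne
  have : ∀ᵐ y : Euc n, y ∉ (line[ℝ, x, x + h] : AffineSubspace ℝ (Euc n)) :=
    compl_mem_ae_iff.2 (by simpa using h0)
  filter_upwards [this] with y hy t ht
  apply hy
  have : y = AffineMap.lineMap x (x + h) t := by
    rw [AffineMap.lineMap_apply]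
    simp only [vsub_eq_sub, add_sub_cancel_left, vadd_eq_add]
    rw [add_comm]; exact (sub_eq_zero.1 ht).symm
  rw [this]
  exact AffineMap.lineMap_mem_affineSpan_pair t x (x + h)

/-- A potential of order `a < n - 1` is differentiable, the derivative falling on the kernel: the
increment is `∫₀¹ ∫ g(y) Dk(x+th-y)h dy dt`. -/
lemma pot_hasFDerivAt (hn : 3 ≤ n) {a : ℝ} (ha0 : 0 ≤ a) (ha : a + 1 < n)
    {k : Euc n → ℝ} (hk : IsKer a k) {g : Euc n → ℝ} (hg : Continuous g) (hgi : IntW a g)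
    (x : Euc n) : HasFDerivAt (Pot k g) (Pot (fderiv ℝ k) g x) x := by
  have hgi1 : IntW (a + 1) g := hgi.mono (by linarith)
  have hVc : Continuous (Pot (fderiv ℝ k) g) := by
    have := pot_contDiff hn (by linarith : 0 ≤ a + 1) ha hk.fderiv 0 (by simpa using hg) hgi1
    exact this.continuous
  have hint1 := pot_integrable hn (by linarith : 0 ≤ a + 1) ha hk.fderiv hg hgi1
  have hint0 := pot_integrable hn ha0 (by linarith) hk hg hgi
  have hinc : ∀ h : Euc n, Pot k g (x + h) - Pot k g x =
      ∫ t in (0 : ℝ)..1, Pot (fderiv ℝ k) g (x + t • h) h := by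
    intro h
    have e1 : ∀ t : ℝ, Pot (fderiv ℝ k) g (x + t • h) h =
        ∫ y, g y * fderiv ℝ k (x + t • h - y) h := by
      intro t
      unfold Pot
      rw [ContinuousLinearMap.integral_apply (hint1 _)]
      rfl
    simp_rw [e1]
    rw [intervalIntegral_integral_swap ?_]
    · unfold Pot
      rw [← integral_sub (hint0 _) (hint0 _)]
      refine integral_congr_ae ?_
      filter_upwards [ae_not_mem_line hn x h] with y hy
      rw [← smul_sub, smul_eq_mul, intervalIntegral.integral_const_mul]
      congr 1
      have hd : ∀ t : ℝ, HasDerivAt (fun t : ℝ => k (x + t • h - y))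
          (fderiv ℝ k (x + t • h - y) h) t := by
        intro t
        have h1 := (hk.differentiableAt (hy t)).hasFDerivAt
        have h2 : HasDerivAt (fun t : ℝ => x + t • h - y) h t := by
          have := (((hasDerivAt_id t).smul_const h).const_add x).sub_const y
          simpa using this
        exact h1.comp_hasDerivAt t h2
      have hcont : Continuous fun t : ℝ => fderiv ℝ k (x + t • h - y) h := by
        rw [continuous_iff_continuousAt]
        intro t
        have h1 : ContinuousAt (fderiv ℝ k) (x + t • h - y) :=
          (hk.fderiv.differentiableAt (hy t)).continuousAt
        have h2 : ContinuousAt (fun t : ℝ => x + t • h - y) t := by fun_prop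
        exact (ContinuousAt.comp (f := fun t : ℝ => x + t • h - y) h1 h2).clm_apply
          continuousAt_const
      rw [intervalIntegral.integral_eq_sub_of_hasDerivAt (fun t _ => hd t)
        (hcont.intervalIntegrable _ _)]
      simp
    · rw [Set.uIoc_of_le zero_le_one]
      have hm : Measurable (Function.uncurry fun (t : ℝ) (y : Euc n) =>
          g y * fderiv ℝ k (x + t • h - y) h) := by
        have h1 : Measurable fun z : Euc n => fderiv ℝ k z h := measurable_fderiv_apply_const ℝ k h
        have h2 : Measurable fun z : ℝ × Euc n => x + z.1 • h - z.2 := by fun_prop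
        exact (hg.measurable.comp measurable_snd).mul (h1.comp h2)
      refine ⟨hm.aestronglyMeasurable, ?_⟩
      obtain ⟨M, hM, hMb⟩ := RP_loc_bdd hn (by linarith : 0 ≤ a + 1) ha hg hgi1 (‖x‖ + ‖h‖)
      obtain ⟨C, hC, hCb⟩ := pot_enorm_int_le hn
        (hk.fderiv.clm (ContinuousLinearMap.apply ℝ ℝ h))
      change ∫⁻ _, _ ∂_ < ⊤
      rw [lintegral_prod _ hm.enorm.aemeasurable]
      calc ∫⁻ t in Set.Ioc (0 : ℝ) 1, ∫⁻ y, ‖g y * fderiv ℝ k (x + t • h - y) h‖ₑ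
          ≤ ∫⁻ t in Set.Ioc (0 : ℝ) 1, ENNReal.ofReal C * M := by
            refine setLIntegral_mono measurable_const fun t ht => ?_
            refine (hCb g (x + t • h)).trans ?_
            gcongr
            refine hMb _ ((norm_add_le _ _).trans ?_)
            gcongr
            rw [norm_smul, Real.norm_of_nonneg ht.1.le]
            exact mul_le_of_le_one_left (norm_nonneg _) ht.2
        _ < ⊤ := by
            rw [setLIntegral_const]
            exact ENNReal.mul_lt_top (ENNReal.mul_lt_top (by simp) hM) (by simp)
  rw [hasFDerivAt_iff_isLittleO_nhds_zero, Asymptotics.isLittleO_iff]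
  intro ε hε
  have := Metric.continuousAt_iff.1 (hVc.continuousAt (x := x)) ε hε
  obtain ⟨r, hr, hV⟩ := this
  filter_upwards [Metric.ball_mem_nhds (0 : Euc n) hr] with h hh
  rw [hinc h]
  have e2 : (Pot (fderiv ℝ k) g x) h = ∫ t in (0 : ℝ)..1, Pot (fderiv ℝ k) g x h := by simp
  rw [e2, ← intervalIntegral.integral_sub]
  · have := intervalIntegral.norm_integral_le_of_norm_le_const (a := (0 : ℝ)) (b := 1)
      (f := fun t => Pot (fderiv ℝ k) g (x + t • h) h - Pot (fderiv ℝ k) g x h) (C := ε * ‖h‖) ?_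
    · simpa using this
    · intro t ht
      rw [Set.uIoc_of_le zero_le_one] at ht
      rw [← sub_apply]
      refine (ContinuousLinearMap.le_opNorm _ _).trans ?_
      gcongr
      rw [← dist_eq_norm]
      refine (hV ?_).le
      rw [dist_eq_norm, add_sub_cancel_left, norm_smul, Real.norm_of_nonneg ht.1.le]
      rw [mem_ball_zero_iff] at hh
      exact (mul_le_of_le_one_left (norm_nonneg _) ht.2).trans_lt hh
  · exact Continuous.intervalIntegrable (by fun_prop) _ _
  · exact Continuous.intervalIntegrable (by fun_prop) _ _

end

/-! ### Calculus of partial derivatives -/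

section
variable {n : ℕ}

/-- The standard basis vector `eᵢ`. -/
abbrev ev (i : Fin n) : Euc n := EuclideanSpace.single i (1 : ℝ)

lemma fderiv_eq_sum_pd (f : Euc n → ℝ) (x v : Euc n) : fderiv ℝ f x v = ∑ i, v i * pd i f x := by
  have hv : v = ∑ i, v i • ev i := by
    ext j
    simp [Finset.sum_apply, Pi.single_apply]
  conv_lhs => rw [hv]
  rw [map_sum]
  simp [pd]

lemma pd_add {f g : Euc n → ℝ} {x : Euc n} (hf : DifferentiableAt ℝ f x)
    (hg : DifferentiableAt ℝ g x) (i : Fin n) :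
    pd i (fun y => f y + g y) x = pd i f x + pd i g x := by
  unfold pd; rw [fderiv_fun_add hf hg]; rfl

lemma pd_sub {f g : Euc n → ℝ} {x : Euc n} (hf : DifferentiableAt ℝ f x)
    (hg : DifferentiableAt ℝ g x) (i : Fin n) :
    pd i (fun y => f y - g y) x = pd i f x - pd i g x := by
  unfold pd; rw [fderiv_fun_sub hf hg]; rfl

lemma pd_neg (f : Euc n → ℝ) (x : Euc n) (i : Fin n) :
    pd i (fun y => - f y) x = - pd i f x := by
  unfold pd; rw [fderiv_fun_neg]; rfl

lemma pd_mul {f g : Euc n → ℝ} {x : Euc n} (hf : DifferentiableAt ℝ f x)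
    (hg : DifferentiableAt ℝ g x) (i : Fin n) :
    pd i (fun y => f y * g y) x = f x * pd i g x + pd i f x * g x := by
  unfold pd; rw [fderiv_fun_mul hf hg]; simp [mul_comm]

lemma pd_const_mul {f : Euc n → ℝ} {x : Euc n} (hf : DifferentiableAt ℝ f x) (c : ℝ) (i : Fin n) :
    pd i (fun y => c * f y) x = c * pd i f x := by
  unfold pd; rw [fderiv_const_mul hf]; rfl

@[simp] lemma pd_const (c : ℝ) (x : Euc n) (i : Fin n) : pd i (fun _ => c) x = 0 := by
  simp [pd]

lemma pd_sum {ι : Type*} (s : Finset ι) {f : ι → Euc n → ℝ} {x : Euc n}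
    (hf : ∀ k ∈ s, DifferentiableAt ℝ (f k) x) (i : Fin n) :
    pd i (fun y => ∑ k ∈ s, f k y) x = ∑ k ∈ s, pd i (f k) x := by
  unfold pd; rw [fderiv_fun_sum hf]; simp

lemma pd_coord (j i : Fin n) (x : Euc n) : pd i (fun y : Euc n => y j) x = if i = j then 1 else 0 := by
  unfold pd
  have : HasFDerivAt (fun y : Euc n => y j) (EuclideanSpace.proj j : Euc n →L[ℝ] ℝ) x :=
    (EuclideanSpace.proj j : Euc n →L[ℝ] ℝ).hasFDerivAt
  rw [this.fderiv]
  simp [Pi.single_apply, eq_comm]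

lemma contDiff_coord (j : Fin n) {m : WithTop ℕ∞} : ContDiff ℝ m (fun y : Euc n => y j) :=
  (EuclideanSpace.proj j : Euc n →L[ℝ] ℝ).contDiff

lemma contDiff_pd_succ {f : Euc n → ℝ} {m : ℕ} (hf : ContDiff ℝ (m + 1 : ℕ) f) (i : Fin n) :
    ContDiff ℝ m (pd i f) := by
  have h := hf.fderiv_right (m := m) (by norm_cast)
  exact h.clm_apply contDiff_const

lemma contDiff_pd {f : Euc n → ℝ} (hf : ContDiff ℝ (⊤ : ℕ∞) f) (i : Fin n) :
    ContDiff ℝ (⊤ : ℕ∞) (pd i f) := by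
  have h := hf.fderiv_right (m := (⊤ : ℕ∞)) (by simp)
  exact h.clm_apply contDiff_const

lemma ContDiff.da {f : Euc n → ℝ} (hf : ContDiff ℝ (⊤ : ℕ∞) f) (x : Euc n) :
    DifferentiableAt ℝ f x := hf.differentiable (by simp) x

lemma pd_comm {f : Euc n → ℝ} (hf : ContDiff ℝ (⊤ : ℕ∞) f) (i j : Fin n) (x : Euc n) :
    pd i (pd j f) x = pd j (pd i f) x := by
  have hs : IsSymmSndFDerivAt ℝ f x := hf.contDiffAt.isSymmSndFDerivAt (by
    simp only [minSmoothness_of_isRCLikeNormedField]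
    exact WithTop.coe_le_coe.2 le_top)
  have h : ∀ i j, pd i (pd j f) x = fderiv ℝ (fderiv ℝ f) x (ev i) (ev j) := by
    intro i j
    have hd : DifferentiableAt ℝ (fderiv ℝ f) x :=
      (hf.fderiv_right (m := (⊤ : ℕ∞)) (by simp)).differentiable (by simp) x
    have : pd j f = fun y => (ContinuousLinearMap.apply ℝ ℝ (ev j)) (fderiv ℝ f y) := rfl
    rw [this]
    unfold pd
    have h2 := ((ContinuousLinearMap.apply ℝ ℝ (ev j)).hasFDerivAt.comp x hd.hasFDerivAt).fderiv
    simp only [Function.comp_def] at h2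
    rw [h2]; rfl
  rw [h, h, hs.eq]

lemma hasCompactSupport_pd {f : Euc n → ℝ} (hf : HasCompactSupport f) (i : Fin n) :
    HasCompactSupport (pd i f) := hf.fderiv_apply ℝ _

lemma pd_comp_sub {f : Euc n → ℝ} {x z : Euc n} (hf : DifferentiableAt ℝ f (x - z)) (i : Fin n) :
    pd i (fun y => f (x - y)) z = - pd i f (x - z) := by
  unfold pd
  have h := hf.hasFDerivAt.comp z ((hasFDerivAt_id z).const_sub x)
  have h' : fderiv ℝ (fun y => f (x - y)) z = _ := h.fderiv
  rw [h']; simp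

/-- A test function: smooth with compact support. -/
def Test (f : Euc n → ℝ) : Prop := ContDiff ℝ (⊤ : ℕ∞) f ∧ HasCompactSupport f

lemma Test.pd {f : Euc n → ℝ} (hf : Test f) (i : Fin n) : Test (pd i f) :=
  ⟨contDiff_pd hf.1 i, hasCompactSupport_pd hf.2 i⟩
lemma Test.cont {f : Euc n → ℝ} (hf : Test f) : Continuous f := hf.1.continuous
lemma Test.add {f g : Euc n → ℝ} (hf : Test f) (hg : Test g) : Test (fun x => f x + g x) :=
  ⟨hf.1.add hg.1, hf.2.add hg.2⟩
lemma Test.const_mul {f : Euc n → ℝ} (hf : Test f) (c : ℝ) : Test (fun x => c * f x) :=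
  ⟨contDiff_const.mul hf.1, hf.2.mul_left⟩
lemma Test.sum {ι : Type*} (s : Finset ι) {f : ι → Euc n → ℝ} (hf : ∀ i, Test (f i)) :
    Test (fun x => ∑ i ∈ s, f i x) := by
  classical
  refine ⟨ContDiff.sum fun i _ => (hf i).1, ?_⟩
  induction s using Finset.induction_on with
  | empty => simp only [Finset.sum_empty]; exact HasCompactSupport.zero
  | insert a s ha ih =>
    simp_rw [Finset.sum_insert ha]
    exact (hf a).2.add ih
lemma Test.mul_left {f g : Euc n → ℝ} (hf : Test f) (hg : ContDiff ℝ (⊤ : ℕ∞) g) :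
    Test (fun x => g x * f x) := ⟨hg.mul hf.1, hf.2.mul_left⟩
lemma Test.integrable {f : Euc n → ℝ} (hf : Test f) : Integrable f :=
  hf.cont.integrable_of_hasCompactSupport hf.2
lemma Test.lap {f : Euc n → ℝ} (hf : Test f) : Test (lap f) :=
  Test.sum _ fun i => (hf.pd i).pd i

lemma Test.comp_sub {f : Euc n → ℝ} (hf : Test f) (x : Euc n) : Test (fun y => f (x - y)) :=
  ⟨hf.1.comp (contDiff_const.sub contDiff_id), hf.2.comp_homeomorph (Homeomorph.subLeft x)⟩

lemma Test.intW {f : Euc n → ℝ} (hf : Test f) (a : ℝ) : IntW a f :=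
  ((continuous_jap_rpow _).mul hf.cont).integrable_of_hasCompactSupport hf.2.mul_left

/-- Integration by parts on `ℝⁿ`; only one factor needs compact support. -/
lemma integral_pd_mul {f g : Euc n → ℝ} (hf : ContDiff ℝ (⊤ : ℕ∞) f) (hg : Test g) (i : Fin n) :
    ∫ x, pd i f x * g x = - ∫ x, f x * pd i g x := by
  have := integral_mul_fderiv_eq_neg_fderiv_mul_of_integrable (μ := (volume : Measure (Euc n)))
    (f := f) (g := g) (v := ev i) (𝕜 := ℝ) ?_ ?_ ?_ (fun x _ => hf.da x)
    (fun x _ => hg.1.da x)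
  · have h : ∫ x, f x * pd i g x = - ∫ x, pd i f x * g x := this
    rw [h, neg_neg]
  · exact ((contDiff_pd hf i).continuous.mul hg.cont).integrable_of_hasCompactSupport hg.2.mul_left
  · exact (hf.continuous.mul (hg.pd i).cont).integrable_of_hasCompactSupport (hg.pd i).2.mul_left
  · exact (hf.continuous.mul hg.cont).integrable_of_hasCompactSupport hg.2.mul_left

/-! ### Derivatives of potentials -/

lemma pd_pot (hn : 3 ≤ n) {a : ℝ} (ha0 : 0 ≤ a) (ha : a + 1 < n)
    {k : Euc n → ℝ} (hk : IsKer a k) {g : Euc n → ℝ} (hg : Continuous g) (hgi : IntW a g)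
    (i : Fin n) (x : Euc n) : pd i (Pot k g) x = Pot (pd i k) g x := by
  have h := pot_hasFDerivAt hn ha0 ha hk hg hgi x
  unfold pd at *
  rw [h.fderiv]
  unfold Pot
  rw [ContinuousLinearMap.integral_apply
    (pot_integrable hn (by linarith : 0 ≤ a + 1) ha hk.fderiv hg (hgi.mono (by linarith)) x)]
  rfl

lemma pd_pot_test (hn : 3 ≤ n) {a : ℝ} (ha : a < n)
    {k : Euc n → ℝ} (hk : IsKer a k) {g : Euc n → ℝ} (hg : Test g)
    (i : Fin n) (x : Euc n) : pd i (Pot k g) x = Pot k (pd i g) x := by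
  have h := HasCompactSupport.hasFDerivAt_convolution_left (μ := (volume : Measure (Euc n)))
    (ContinuousLinearMap.lsmul ℝ ℝ) hg.2 (hg.1.of_le (by simp)) (hk.locallyIntegrable hn ha) x
  have h' : HasFDerivAt (Pot k g) _ x := h
  unfold pd
  rw [h'.fderiv]
  have hi : ConvolutionExistsAt (fderiv ℝ g) k x
      (ContinuousLinearMap.precompL (Euc n) (ContinuousLinearMap.lsmul ℝ ℝ)) volume :=
    HasCompactSupport.convolutionExists_left _ (hg.2.fderiv ℝ)
      (hg.1.continuous_fderiv (by simp)) (hk.locallyIntegrable hn ha) x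
  rw [convolution_def]
  rw [ContinuousLinearMap.integral_apply hi]
  rfl

/-- Derivatives may be moved from the kernel to a test density. -/
lemma pot_pd_ker (hn : 3 ≤ n) {a : ℝ} (ha0 : 0 ≤ a) (ha : a + 1 < n)
    {k : Euc n → ℝ} (hk : IsKer a k) {g : Euc n → ℝ} (hg : Test g) (i : Fin n) (x : Euc n) :
    Pot (pd i k) g x = Pot k (pd i g) x := by
  rw [← pd_pot hn ha0 ha hk hg.cont (hg.intW a), pd_pot_test hn (by linarith) hk hg]

lemma pot_add (hn : 3 ≤ n) {a : ℝ} (ha0 : 0 ≤ a) (ha : a < n) {k : Euc n → ℝ} (hk : IsKer a k)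
    {f g : Euc n → ℝ} (hf : Continuous f) (hfi : IntW a f) (hg : Continuous g) (hgi : IntW a g)
    (x : Euc n) : Pot k (fun y => f y + g y) x = Pot k f x + Pot k g x := by
  unfold Pot
  rw [← integral_add (pot_integrable hn ha0 ha hk hf hfi x) (pot_integrable hn ha0 ha hk hg hgi x)]
  simp_rw [add_smul]

lemma pot_const_mul {k : Euc n → ℝ} {f : Euc n → ℝ} (c : ℝ) 
    (x : Euc n) : Pot k (fun y => c * f y) x = c * Pot k f x := by
  unfold Pot
  rw [← integral_const_mul]
  simp [mul_assoc]

lemma pot_sum (hn : 3 ≤ n) {a : ℝ} (ha0 : 0 ≤ a) (ha : a < n) {k : Euc n → ℝ} (hk : IsKer a k)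
    {ι : Type*} (s : Finset ι)
    {f : ι → Euc n → ℝ} (hf : ∀ i, Test (f i))
    (x : Euc n) : Pot k (fun y => ∑ i ∈ s, f i y) x = ∑ i ∈ s, Pot k (f i) x := by
  unfold Pot
  rw [← integral_finsetSum _ fun i _ => pot_integrable hn ha0 ha hk (hf i).cont ((hf i).intW a) x]
  simp_rw [Finset.sum_smul]

end

/-! ### The fundamental solution of the Laplacian -/

section
variable {n : ℕ}

lemma pd_nsq {r e : ℝ} {x : Euc n} (h : 0 < ‖x‖ ^ 2 + e) (i : Fin n) :
    pd i (fun y : Euc n => (‖y‖ ^ 2 + e) ^ r) x = 2 * r * x i * (‖x‖ ^ 2 + e) ^ (r - 1) := by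
  have h1 : HasFDerivAt (fun y : Euc n => ‖y‖ ^ 2 + e) (2 • (innerSL ℝ x)) x :=
    (hasStrictFDerivAt_norm_sq x).hasFDerivAt.add_const e
  have h2 := h1.rpow_const (p := r) (Or.inl h.ne')
  unfold pd
  rw [h2.fderiv]
  have h3 : inner ℝ x (EuclideanSpace.single i (1 : ℝ)) = x i := by
    rw [EuclideanSpace.inner_single_right]; simp
  simp [h3]
  ring

lemma contDiffAt_nsq {r e : ℝ} {x : Euc n} (h : 0 < ‖x‖ ^ 2 + e) {m : WithTop ℕ∞} :
    ContDiffAt ℝ m (fun y : Euc n => (‖y‖ ^ 2 + e) ^ r) x :=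
  ((contDiff_norm_sq ℝ).add contDiff_const).contDiffAt.rpow_const_of_ne h.ne'

lemma contDiff_nsq {r e : ℝ} (h : 0 < e) {m : WithTop ℕ∞} :
    ContDiff ℝ m (fun y : Euc n => (‖y‖ ^ 2 + e) ^ r) :=
  contDiff_iff_contDiffAt.2 fun x => contDiffAt_nsq (by positivity)

lemma sum_coord_sq (x : Euc n) : ∑ i, x i * x i = ‖x‖ ^ 2 := by
  rw [EuclideanSpace.norm_sq_eq]
  simp [sq]

lemma lap_nsq {e : ℝ} (he : 0 < e) (x : Euc n) :
    lap (fun y : Euc n => (‖y‖ ^ 2 + e) ^ ((2 - (n : ℝ)) / 2)) x =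
      (2 - n) * n * (e * (‖x‖ ^ 2 + e) ^ (-(n : ℝ) / 2 - 1)) := by
  have hp : ∀ y : Euc n, 0 < ‖y‖ ^ 2 + e := fun y => by positivity
  have h1 : ∀ i : Fin n, pd i (fun y : Euc n => (‖y‖ ^ 2 + e) ^ ((2 - (n : ℝ)) / 2)) =
      fun y => (2 - n) * (y i * (‖y‖ ^ 2 + e) ^ (-(n : ℝ) / 2)) := by
    intro i; funext y
    rw [pd_nsq (hp y), show (2 - (n : ℝ)) / 2 - 1 = -n / 2 by ring]; ring
  unfold lap
  have hs : ∀ r : ℝ, DifferentiableAt ℝ (fun y : Euc n => (‖y‖ ^ 2 + e) ^ r) x :=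
    fun r => (contDiffAt_nsq (hp x) (m := 1)).differentiableAt (by simp)
  have hc : ∀ i : Fin n, DifferentiableAt ℝ (fun y : Euc n => y i) x :=
    fun i => (contDiff_coord i (m := 1)).differentiable (by simp) x
  have h2 : ∀ i : Fin n, pd i (pd i (fun y : Euc n => (‖y‖ ^ 2 + e) ^ ((2 - (n : ℝ)) / 2))) x =
      (2 - n) * (-n * (x i * x i) * (‖x‖ ^ 2 + e) ^ (-(n : ℝ) / 2 - 1) +
        (‖x‖ ^ 2 + e) ^ (-(n : ℝ) / 2)) := by
    intro i
    rw [h1 i, pd_const_mul ((hc i).fun_mul (hs _)), pd_mul (hc i) (hs _), pd_nsq (hp x), pd_coord]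
    simp
    left; ring
  simp_rw [h2]
  rw [← Finset.mul_sum, Finset.sum_add_distrib, ← Finset.sum_mul, ← Finset.mul_sum, sum_coord_sq]
  have h3 : (‖x‖ ^ 2 + e) ^ (-(n : ℝ) / 2) =
      (‖x‖ ^ 2 + e) * (‖x‖ ^ 2 + e) ^ (-(n : ℝ) / 2 - 1) := by
    rw [Real.rpow_sub_one (hp x).ne']; field_simp [(hp x).ne']
  simp only [Finset.sum_const, Finset.card_univ, Fintype.card_fin, nsmul_eq_mul]
  rw [h3]; ring

lemma integral_lap_mul {f g : Euc n → ℝ} (hf : ContDiff ℝ (⊤ : ℕ∞) f) (hg : Test g) :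
    ∫ x, f x * lap g x = ∫ x, lap f x * g x := by
  unfold lap
  simp_rw [Finset.mul_sum, Finset.sum_mul]
  rw [integral_finsetSum _ fun i _ => ((hg.pd i).pd i).mul_left hf |>.integrable,
    integral_finsetSum _ fun i _ => hg.mul_left (contDiff_pd (contDiff_pd hf i) i) |>.integrable]
  refine Finset.sum_congr rfl fun i _ => ?_
  rw [integral_pd_mul (contDiff_pd hf i) hg, integral_pd_mul hf (hg.pd i), neg_neg]

/-- `‖x‖^{2-n}`. -/
def Gam (n : ℕ) (x : Euc n) : ℝ := (‖x‖ ^ 2 + 0) ^ ((2 - (n : ℝ)) / 2)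

lemma isKer_nsq (r : ℝ) : IsKer (-(2 * r)) (fun x : Euc n => (‖x‖ ^ 2 + 0) ^ r) := by
  refine ⟨fun x hx => (contDiffAt_nsq ?_).contDiffWithinAt, fun c hc x hx => ?_⟩
  · have : 0 < ‖x‖ := norm_pos_iff.2 hx
    positivity
  · simp only [add_zero, norm_smul, Real.norm_eq_abs, abs_of_pos hc, smul_eq_mul, neg_neg]
    rw [mul_pow, Real.mul_rpow (by positivity) (by positivity), ← Real.rpow_natCast c 2,
      ← Real.rpow_mul hc.le]
    norm_num

lemma IsKer.mul {a b : ℝ} {k l : Euc n → ℝ} (hk : IsKer a k) (hl : IsKer b l) :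
    IsKer (a + b) (fun x => k x * l x) := by
  refine ⟨hk.1.mul hl.1, fun c hc x hx => ?_⟩
  beta_reduce
  rw [hk.2 c hc x hx, hl.2 c hc x hx, neg_add, Real.rpow_add hc]
  simp only [smul_eq_mul]; ring

lemma isKer_coord (i : Fin n) : IsKer (-1) (fun x : Euc n => x i) :=
  ⟨(contDiff_coord i).contDiffOn, fun c hc x hx => by simp⟩

lemma IsKer.congr_deg {a b : ℝ} {k : Euc n → ℝ} (hk : IsKer a k) (h : a = b) : IsKer b k := h ▸ hk

lemma isKer_Gam : IsKer ((n : ℝ) - 2) (Gam n) := (isKer_nsq _).congr_deg (by ring)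

/-- Regularising `‖x‖²` to `‖x‖² + e²`, the Laplacian becomes an approximate identity. -/
lemma exists_fund (hn : 3 ≤ n) : ∃ c : ℝ, c ≠ 0 ∧ ∀ φ : Euc n → ℝ, Test φ →
    ∫ z, Gam n z * lap φ z = c * φ 0 := by
  have hn' : (3 : ℝ) ≤ n := by exact_mod_cast hn
  set w : Euc n → ℝ := fun z => (‖z‖ ^ 2 + 1) ^ (-(n : ℝ) / 2 - 1) with hw
  have hwi : Integrable w := by
    have := integrable_rpow_neg_one_add_norm_sq (E := Euc n) (μ := volume) (r := n + 2)
      (by simp)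
    refine this.congr (ae_of_all _ fun z => ?_)
    simp only [hw]; rw [add_comm]; congr 1; ring
  have hwp : ∀ z, 0 < w z := fun z => by positivity
  have hwI : 0 < ∫ z, w z := by
    rw [integral_pos_iff_support_of_nonneg (fun z => (hwp z).le) hwi]
    have : Function.support w = Set.univ := by ext z; simp [(hwp z).ne']
    rw [this]; exact isOpen_univ.measure_pos _ Set.univ_nonempty
  refine ⟨(2 - n) * n * ∫ z, w z, ?_, fun φ hφ => ?_⟩
  · have : (2 - (n : ℝ)) < 0 := by linarith
    have h3 : (0 : ℝ) < n := by linarith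
    exact mul_ne_zero (mul_ne_zero this.ne h3.ne') hwI.ne'
  have hid : ∀ e : ℝ, 0 < e → ∫ z : Euc n, (‖z‖ ^ 2 + e ^ 2) ^ ((2 - (n : ℝ)) / 2) * lap φ z =
      (2 - n) * n * ∫ z, w z * φ (e • z) := by
    intro e he
    rw [integral_lap_mul (contDiff_nsq (by positivity)) hφ]
    simp_rw [lap_nsq (show 0 < e ^ 2 by positivity)]
    simp_rw [mul_assoc ((2 - (n : ℝ)) * n)]
    rw [integral_const_mul]
    congr 1
    have h := Measure.integral_comp_smul (volume : Measure (Euc n))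
      (fun x => e ^ 2 * (‖x‖ ^ 2 + e ^ 2) ^ (-(n : ℝ) / 2 - 1) * φ x) e
    have h2 : ∀ x : Euc n, e ^ 2 * (‖e • x‖ ^ 2 + e ^ 2) ^ (-(n : ℝ) / 2 - 1) * φ (e • x) =
        (e ^ n)⁻¹ * (w x * φ (e • x)) := by
      intro x
      have : ‖e • x‖ ^ 2 + e ^ 2 = e ^ 2 * (‖x‖ ^ 2 + 1) := by
        rw [norm_smul, Real.norm_eq_abs, mul_pow, sq_abs]; ring
      rw [this, Real.mul_rpow (by positivity) (by positivity), ← Real.rpow_natCast e 2,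
        ← Real.rpow_natCast e n, ← Real.rpow_mul he.le, ← Real.rpow_neg he.le]
      have : e ^ ((2 : ℕ) : ℝ) * e ^ (((2 : ℕ) : ℝ) * (-(n : ℝ) / 2 - 1)) = e ^ (-(n : ℝ)) := by
        rw [← Real.rpow_add he]; congr 1; push_cast; ring
      rw [← this]; ring
    simp_rw [h2] at h
    rw [integral_const_mul, finrank_euclideanSpace_fin, abs_of_pos (by positivity), smul_eq_mul] at h
    exact (mul_left_cancel₀ (by positivity) h).symm
  -- both sides converge as `e → 0`
  have hL : Tendsto (fun e : ℝ => ∫ z : Euc n, (‖z‖ ^ 2 + e ^ 2) ^ ((2 - (n : ℝ)) / 2) * lap φ z)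
      (𝓝[>] 0) (𝓝 (∫ z, Gam n z * lap φ z)) := by
    refine tendsto_integral_filter_of_dominated_convergence (fun z => ‖Gam n z * lap φ z‖) ?_ ?_ ?_ ?_
    · filter_upwards [self_mem_nhdsWithin] with e he
      have he : 0 < e := he
      exact ((contDiff_nsq (m := 1) (by positivity)).continuous.mul hφ.lap.cont).aestronglyMeasurable
    · filter_upwards [self_mem_nhdsWithin] with e he
      have he : 0 < e := he
      filter_upwards [ae_ne_pt hn 0] with z hz
      have : 0 < ‖z‖ := norm_pos_iff.2 hz
      rw [norm_mul, norm_mul]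
      refine mul_le_mul_of_nonneg_right ?_ (norm_nonneg _)
      unfold Gam
      rw [Real.norm_of_nonneg (by positivity), Real.norm_of_nonneg (by positivity)]
      exact Real.rpow_le_rpow_of_nonpos (by positivity) (by nlinarith) (by linarith)
    · have h := pot_integrable hn (by linarith) (by linarith) isKer_Gam
        ((hφ.comp_sub 0).lap).cont ((hφ.comp_sub 0).lap.intW _) 0
      have h2 := h.comp_neg
      refine Integrable.norm ?_
      have e1 : lap (fun y => φ (0 - y)) = fun y => lap φ (0 - y) := by
        funext y
        unfold lap
        refine Finset.sum_congr rfl fun i _ => ?_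
        have : pd i (fun y => φ (0 - y)) = fun y => - pd i φ (0 - y) := by
          funext y; exact pd_comp_sub (hφ.1.da _) i
        rw [this, pd_neg, pd_comp_sub ((hφ.pd i).1.da _) i, neg_neg]
      rw [e1] at h2
      refine h2.congr (ae_of_all _ fun y => ?_)
      simp [mul_comm]
    · filter_upwards [ae_ne_pt hn 0] with z hz
      have : 0 < ‖z‖ := norm_pos_iff.2 hz
      refine Tendsto.mul_const _ ?_
      unfold Gam
      have hc : ContinuousAt (fun e : ℝ => (‖z‖ ^ 2 + e ^ 2) ^ ((2 - (n : ℝ)) / 2)) 0 := by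
        refine ContinuousAt.rpow_const (by fun_prop) (Or.inl (by positivity))
      have := hc.tendsto.mono_left (nhdsWithin_le_nhds (s := Set.Ioi 0))
      simpa using this
  have hR : Tendsto (fun e : ℝ => (2 - n) * n * ∫ z, w z * φ (e • z)) (𝓝[>] 0)
      (𝓝 ((2 - n) * n * ∫ z, w z * φ 0)) := by
    refine Tendsto.const_mul _ ?_
    obtain ⟨B, hB⟩ := hφ.2.exists_bound_of_continuous hφ.cont
    refine tendsto_integral_filter_of_dominated_convergence (fun z => w z * B) ?_ ?_ ?_ ?_
    · refine Eventually.of_forall fun e => ?_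
      exact ((contDiff_nsq (m := 1) (by positivity)).continuous.mul
        (hφ.cont.comp (continuous_const_smul e))).aestronglyMeasurable
    · refine Eventually.of_forall fun e => ae_of_all _ fun z => ?_
      rw [norm_mul, Real.norm_of_nonneg (hwp z).le]
      exact mul_le_mul_of_nonneg_left (hB _) (hwp z).le
    · exact hwi.mul_const _
    · refine ae_of_all _ fun z => Tendsto.const_mul _ ?_
      have hc : Continuous fun e : ℝ => φ (e • z) := hφ.cont.comp (by fun_prop)
      have := (hc.tendsto 0).mono_left (nhdsWithin_le_nhds (s := Set.Ioi 0))
      simpa using this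
  rw [integral_mul_const] at hR
  rw [mul_assoc _ (∫ z, w z)]
  refine tendsto_nhds_unique hL (hR.congr' ?_)
  filter_upwards [self_mem_nhdsWithin] with e he
  exact (hid e he).symm

end

/-! ### The fundamental matrix of the Lamé operator -/

section
variable {n : ℕ}

lemma pot_eq (k g : Euc n → ℝ) (x : Euc n) : Pot k g x = ∫ z, k z * g (x - z) := by
  unfold Pot
  rw [← integral_sub_left_eq_self (fun z => k z * g (x - z)) volume x]
  simp [mul_comm]

lemma pot_congr (hn : 3 ≤ n) {k l : Euc n → ℝ} (h : ∀ x, x ≠ 0 → k x = l x) (g : Euc n → ℝ)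
    (x : Euc n) : Pot k g x = Pot l g x := by
  rw [pot_eq, pot_eq]
  refine integral_congr_ae ?_
  filter_upwards [ae_ne_pt hn 0] with z hz
  rw [h z hz]

lemma lap_comp_sub {φ : Euc n → ℝ} (hφ : ContDiff ℝ (⊤ : ℕ∞) φ) (x z : Euc n) :
    lap (fun y => φ (x - y)) z = lap φ (x - z) := by
  unfold lap
  refine Finset.sum_congr rfl fun i _ => ?_
  have : pd i (fun y => φ (x - y)) = fun y => - pd i φ (x - y) := by
    funext y; exact pd_comp_sub (hφ.da _) i
  rw [this, pd_neg, pd_comp_sub ((contDiff_pd hφ i).da _) i, neg_neg]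

/-- `x_k ‖x‖^{2-n}`, a kernel satisfying `Δ M_k = 2 ∂_k ‖x‖^{2-n}`. -/
def MM (k : Fin n) (x : Euc n) : ℝ := x k * Gam n x

lemma isKer_MM (k : Fin n) : IsKer ((n : ℝ) - 3) (MM k) :=
  ((isKer_coord k).mul isKer_Gam).congr_deg (by ring)

lemma pd_MM {x : Euc n} (hx : x ≠ 0) (j k : Fin n) : pd j (MM k) x =
    (if j = k then Gam n x else 0) + (2 - n) * (x j * x k * (‖x‖ ^ 2 + 0) ^ (-(n : ℝ) / 2)) := by
  have hp : 0 < ‖x‖ ^ 2 + 0 := by have := norm_pos_iff.2 hx; positivity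
  unfold MM
  rw [pd_mul ((contDiff_coord k (m := 1)).differentiable (by simp) x)
    (isKer_Gam.differentiableAt hx), pd_coord]
  have : pd j (Gam n) x = _ := pd_nsq hp j
  rw [this, show (2 - (n : ℝ)) / 2 - 1 = -n / 2 by ring]
  split_ifs <;> ring

lemma sum_pd_MM {x : Euc n} (hx : x ≠ 0) : ∑ k, pd k (MM k) x = 2 * Gam n x := by
  have hp : 0 < ‖x‖ ^ 2 + 0 := by have := norm_pos_iff.2 hx; positivity
  simp_rw [pd_MM hx]
  simp only [if_true]
  rw [Finset.sum_add_distrib, ← Finset.mul_sum, ← Finset.sum_mul, sum_coord_sq]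
  simp only [Finset.sum_const, Finset.card_univ, Fintype.card_fin, nsmul_eq_mul]
  have : ‖x‖ ^ 2 * (‖x‖ ^ 2 + 0) ^ (-(n : ℝ) / 2) = Gam n x := by
    unfold Gam
    rw [show (2 - (n : ℝ)) / 2 = 1 + (-n / 2) by ring, Real.rpow_add hp, Real.rpow_one, add_zero]
  rw [this]; ring

/-- The Lamé operator `(Lφ)_k = Δφ_k + κ ∂_k div φ` on fields given by their components. -/
def Lam (κ : ℝ) (φ : Fin n → Euc n → ℝ) (k : Fin n) (x : Euc n) : ℝ :=
  lap (φ k) x + κ * pd k (fun y => ∑ j, pd j (φ j) y) x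

lemma Test.lam {φ : Fin n → Euc n → ℝ} (hφ : ∀ j, Test (φ j)) (κ : ℝ) (k : Fin n) :
    Test (Lam κ φ k) :=
  (hφ k).lap.add (((Test.sum _ fun j => (hφ j).pd j).pd k).const_mul κ)

lemma pd_lap {φ : Euc n → ℝ} (hφ : ContDiff ℝ (⊤ : ℕ∞) φ) (j : Fin n) :
    pd j (lap φ) = lap (pd j φ) := by
  funext x
  have : lap φ = fun y => ∑ i, pd i (pd i φ) y := rfl
  rw [this, pd_sum _ fun i _ => (contDiff_pd (contDiff_pd hφ i) i).da x]
  unfold lap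
  refine Finset.sum_congr rfl fun i _ => ?_
  rw [pd_comm (contDiff_pd hφ i)]
  congr 1
  funext y
  exact pd_comm hφ _ _ _

/-- A fundamental matrix of the Lamé operator, homogeneous of degree `2 - n`, even and
symmetric. It is a combination `α Γ δ_{jk} + β ∂_j (x_k Γ)`, where `β` is chosen so that the terms
in `∂_j div φ` cancel. -/
theorem exists_lame_ker (hn : 3 ≤ n) {κ : ℝ} (hκ : 0 ≤ κ) :
    ∃ E : Fin n → Fin n → Euc n → ℝ, (∀ j k, IsKer ((n : ℝ) - 2) (E j k)) ∧
      (∀ j k x, E j k (-x) = E j k x) ∧ (∀ j k, E j k = E k j) ∧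
      ∀ φ : Fin n → Euc n → ℝ, (∀ j, Test (φ j)) → ∀ j x,
        ∑ k, Pot (E j k) (Lam κ φ k) x = φ j x := by
  obtain ⟨c, hc, hfund⟩ := exists_fund hn
  have hn' : (3 : ℝ) ≤ n := by exact_mod_cast hn
  have hG : ∀ φ : Euc n → ℝ, Test φ → ∀ x, Pot (Gam n) (lap φ) x = c * φ x := by
    intro φ hφ x
    rw [pot_eq]
    have := hfund _ (hφ.comp_sub x)
    simp_rw [lap_comp_sub hφ.1] at this
    simpa using this
  have hGi : ∀ g : Euc n → ℝ, Test g → ∀ x, Integrable fun z => Gam n z * g (x - z) := by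
    intro g hg x
    have h := pot_integrable hn (by linarith) (by linarith) isKer_Gam hg.cont (hg.intW _) x
    have h2 := h.comp_sub_left x
    refine h2.congr (ae_of_all _ fun z => ?_)
    simp [mul_comm]
  have hM : ∀ (k : Fin n) (φ : Euc n → ℝ), Test φ → ∀ x,
      Pot (MM k) (lap φ) x = 2 * Pot (Gam n) (pd k φ) x := by
    intro k φ hφ x
    set ψ : Euc n → ℝ := fun y => φ (x - y) with hψ
    have hψt : Test ψ := hφ.comp_sub x
    have h1 := hfund _ (hψt.mul_left (contDiff_coord k))
    have h2 : ∀ z, lap (fun y : Euc n => y k * ψ y) z = z k * lap ψ z + 2 * pd k ψ z := by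
      intro z
      have hc1 : ContDiff ℝ (⊤ : ℕ∞) (fun y : Euc n => y k) := contDiff_coord k
      have h3 : ∀ i, pd i (fun y : Euc n => y k * ψ y) =
          fun y => y k * pd i ψ y + (if i = k then 1 else 0) * ψ y := by
        intro i; funext y
        rw [pd_mul (hc1.da y) (hψt.1.da y), pd_coord]
      have h4 : ∀ i, pd i (pd i (fun y : Euc n => y k * ψ y)) z =
          z k * pd i (pd i ψ) z + 2 * (if i = k then pd i ψ z else 0) := by
        intro i
        rw [h3, pd_add ((hc1.da z).fun_mul ((hψt.pd i).1.da z))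
          ((hψt.const_mul _).1.da z), pd_mul (hc1.da z) ((hψt.pd i).1.da z), pd_coord,
          pd_const_mul (hψt.1.da z)]
        split_ifs <;> ring
      unfold lap
      simp_rw [h4]
      rw [Finset.sum_add_distrib, ← Finset.mul_sum, ← Finset.mul_sum]
      simp
    simp_rw [h2] at h1
    have h5 : ∀ z, Gam n z * (z k * lap ψ z + 2 * pd k ψ z) =
        MM k z * lap φ (x - z) - 2 * (Gam n z * pd k φ (x - z)) := by
      intro z
      rw [hψ, lap_comp_sub hφ.1, pd_comp_sub (hφ.1.da _)]
      unfold MM; ring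
    simp_rw [h5] at h1
    rw [integral_sub, integral_const_mul] at h1
    · rw [pot_eq, pot_eq]
      simp at h1
      linarith
    · have h := pot_integrable hn (by linarith) (by linarith) (isKer_MM k) hφ.lap.cont
        (hφ.lap.intW _) x
      have h2 := h.comp_sub_left x
      refine h2.congr (ae_of_all _ fun z => ?_)
      simp [mul_comm]
    · exact (hGi _ (hφ.pd k) x).const_mul 2
  set α := 1 / c with hα
  set β := - (α * κ) / (2 * (1 + κ)) with hβ
  have hdM : ∀ j k : Fin n, IsKer ((n : ℝ) - 2) (pd j (MM k)) :=
    fun j k => ((isKer_MM k).pd j).congr_deg (by ring)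
  set K : Fin n → Fin n → Euc n → ℝ := fun j k x => (if j = k then Gam n x else 0) +
    (2 - n) * (x j * x k * (‖x‖ ^ 2 + 0) ^ (-(n : ℝ) / 2)) with hK
  have hKe : ∀ j k x, x ≠ 0 → pd j (MM k) x = K j k x := fun j k x hx => pd_MM hx j k
  have hKk : ∀ j k, IsKer ((n : ℝ) - 2) (K j k) := by
    intro j k
    refine ⟨(hdM j k).1.congr fun x hx => (hKe j k x hx).symm, fun c hc x hx => ?_⟩
    rw [← hKe j k x hx, ← hKe j k _ (by simp [hc.ne', hx]), (hdM j k).2 c hc x hx]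
  have hD : ∀ j k : Fin n, IsKer ((n : ℝ) - 2) (fun x => if j = k then Gam n x else 0) := by
    intro j k
    by_cases h : j = k
    · simpa [h] using isKer_Gam (n := n)
    · simp only [h, if_false]; exact ⟨contDiffOn_const, by simp⟩
  refine ⟨fun j k x => α * (if j = k then Gam n x else 0) + β * K j k x, ?_, ?_, ?_, ?_⟩
  · intro j k
    exact ((hD j k).const_smul α).add ((hKk j k).const_smul β)
  · intro j k x
    simp [hK, Gam]
  · intro j k
    funext x
    simp only [hK, eq_comm (a := j) (b := k)]
    ring
  · intro φ hφ j x
    have hL := Test.lam hφ κ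
    set D : Euc n → ℝ := fun y => ∑ i, pd i (φ i) y with hDd
    have hDt : Test D := Test.sum _ fun i => (hφ i).pd i
    have hn2 : (0 : ℝ) ≤ n - 2 := by linarith
    have hn2' : (n : ℝ) - 2 < n := by linarith
    have s1 : ∀ k, Pot (fun x => α * (if j = k then Gam n x else 0) + β * K j k x) (Lam κ φ k) x =
        α * (if j = k then Pot (Gam n) (Lam κ φ k) x else 0) + β * Pot (pd j (MM k)) (Lam κ φ k) x := by
      intro k
      rw [pot_congr hn (hKe j k)]
      have i1 := pot_integrable hn hn2 hn2' (hD j k) (hL k).cont ((hL k).intW _) x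
      have i2 := pot_integrable hn hn2 hn2' (hKk j k) (hL k).cont ((hL k).intW _) x
      have : ∀ y, Lam κ φ k y • (α * (if j = k then Gam n (x - y) else 0) + β * K j k (x - y)) =
        α * (Lam κ φ k y • (if j = k then Gam n (x - y) else 0)) +
          β * (Lam κ φ k y • K j k (x - y)) := by
        intro y; simp only [smul_eq_mul]; ring
      unfold Pot
      simp_rw [this]
      rw [integral_add (i1.const_mul α) (i2.const_mul β), integral_const_mul, integral_const_mul]
      congr 2
      by_cases h : j = k <;> simp [h]
    have s2 : Pot (Gam n) (Lam κ φ j) x = c * φ j x + κ * Pot (Gam n) (pd j D) x := by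
      have : Lam κ φ j = fun y => lap (φ j) y + κ * pd j D y := rfl
      rw [this, pot_add hn hn2 hn2' isKer_Gam (hφ j).lap.cont ((hφ j).lap.intW _)
        ((hDt.pd j).const_mul κ).cont (((hDt.pd j).const_mul κ).intW _), hG _ (hφ j),
        pot_const_mul]
    have s3 : ∀ k, Pot (pd j (MM k)) (Lam κ φ k) x = 2 * Pot (Gam n) (pd j (pd k (φ k))) x +
        κ * Pot (pd k (MM k)) (pd j D) x := by
      intro k
      have : Lam κ φ k = fun y => lap (φ k) y + κ * pd k D y := rfl
      rw [this, pot_add hn hn2 hn2' (hdM j k) (hφ k).lap.cont ((hφ k).lap.intW _)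
        ((hDt.pd k).const_mul κ).cont (((hDt.pd k).const_mul κ).intW _), pot_const_mul,
        pot_pd_ker hn (by linarith) (by linarith) (isKer_MM k) (hφ k).lap,
        pot_pd_ker hn (by linarith) (by linarith) (isKer_MM k) (hDt.pd k),
        pot_pd_ker hn (by linarith) (by linarith) (isKer_MM k) (hDt.pd j),
        pd_lap (hφ k).1, hM k _ ((hφ k).pd j)]
      have e1 : pd j (pd k D) = pd k (pd j D) := funext fun y => pd_comm hDt.1 _ _ _
      have e2 : pd j (pd k (φ k)) = pd k (pd j (φ k)) := funext fun y => pd_comm (hφ k).1 _ _ _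
      rw [e1, e2]
    have s4 : ∑ k, Pot (Gam n) (pd j (pd k (φ k))) x = Pot (Gam n) (pd j D) x := by
      rw [← pot_sum hn hn2 hn2' isKer_Gam _ fun k => ((hφ k).pd k).pd j]
      congr 1
      funext y
      rw [hDd, pd_sum _ fun k _ => ((hφ k).pd k).1.da y]
    have s5 : ∑ k, Pot (pd k (MM k)) (pd j D) x = 2 * Pot (Gam n) (pd j D) x := by
      rw [pot_eq, ← integral_const_mul]
      simp_rw [pot_eq]
      rw [← integral_finsetSum]
      · refine integral_congr_ae ?_
        filter_upwards [ae_ne_pt hn 0] with z hz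
        rw [← Finset.sum_mul, sum_pd_MM hz]; ring
      · intro k _
        have h := pot_integrable hn hn2 hn2' (hdM k k) (hDt.pd j).cont ((hDt.pd j).intW _) x
        have h2 := h.comp_sub_left x
        refine h2.congr (ae_of_all _ fun z => ?_)
        simp [mul_comm]
    simp_rw [s1, s3]
    rw [Finset.sum_add_distrib, ← Finset.mul_sum, ← Finset.mul_sum, Finset.sum_add_distrib,
      ← Finset.mul_sum, ← Finset.mul_sum, s4, s5]
    simp only [Finset.sum_ite_eq, Finset.mem_univ, if_true]
    rw [s2, hβ, hα]
    have : 1 + κ ≠ 0 := by positivity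
    field_simp
    ring

end

/-! ### Solving the Lamé system by potentials -/

section
variable {n : ℕ}

/-- Fubini for potentials with even kernels. -/
lemma pot_adjoint (hn : 3 ≤ n) {a : ℝ} (ha0 : 0 ≤ a) (ha : a < n) {k : Euc n → ℝ}
    (hk : IsKer a k) (hev : ∀ x, k (-x) = k x) {g φ : Euc n → ℝ} (hg : Continuous g)
    (hgi : IntW a g) (hφ : Test φ) :
    ∫ x, Pot k g x * φ x = ∫ y, g y * Pot k φ y ∧ Integrable fun y => g y * Pot k φ y := by
  have hm : AEStronglyMeasurable (fun z : Euc n × Euc n => φ z.1 * (g z.2 * k (z.1 - z.2)))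
      (volume.prod volume) := by
    refine (hφ.cont.comp continuous_fst).aestronglyMeasurable.mul
      ((hg.comp continuous_snd).aestronglyMeasurable.mul ?_)
    exact (hk.aesm hn).comp_quasiMeasurePreserving
      (quasiMeasurePreserving_sub volume volume)
  obtain ⟨C, hC, hb⟩ := pot_enorm_int_le hn hk
  obtain ⟨R, hR⟩ : ∃ R : ℝ, ∀ x, R < ‖x‖ → φ x = 0 := by
    obtain ⟨R, hR⟩ := hφ.2.isCompact.isBounded.subset_closedBall (0 : Euc n)
    refine ⟨R, fun x hx => ?_⟩
    by_contra h
    have := hR (subset_tsupport _ h)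
    simp at this
    linarith
  obtain ⟨M, hM, hMb⟩ := RP_loc_bdd hn ha0 ha hg hgi R
  have hprodInt : Integrable (Function.uncurry fun (x y : Euc n) => φ x * (g y * k (x - y)))
      (volume.prod volume) := by
    refine ⟨hm, ?_⟩
    change ∫⁻ z : Euc n × Euc n, ‖φ z.1 * (g z.2 * k (z.1 - z.2))‖ₑ ∂_ < ⊤
    rw [lintegral_prod _ hm.enorm]
    have h1 : ∀ x : Euc n, ∫⁻ y, ‖φ x * (g y * k (x - y))‖ₑ ≤
        (ENNReal.ofReal C * M) * ‖φ x‖ₑ := by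
      intro x
      by_cases hx : R < ‖x‖
      · simp [hR x hx]
      · simp_rw [enorm_mul (φ x)]
        rw [lintegral_const_mul' _ _ (by simp), mul_comm]
        gcongr
        refine (hb g x).trans ?_
        gcongr
        exact hMb x (not_lt.1 hx)
    refine (lintegral_mono h1).trans_lt ?_
    rw [lintegral_const_mul' _ _ (ENNReal.mul_lt_top (by simp) hM).ne]
    exact ENNReal.mul_lt_top (ENNReal.mul_lt_top (by simp) hM) hφ.integrable.2
  have h := integral_integral_swap hprodInt
  have e1 : ∀ x, ∫ y, φ x * (g y * k (x - y)) = Pot k g x * φ x := by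
    intro x
    rw [integral_const_mul, mul_comm]; rfl
  have e2 : ∀ y, ∫ x, φ x * (g y * k (x - y)) = g y * Pot k φ y := by
    intro y
    unfold Pot
    rw [← integral_const_mul]
    refine integral_congr_ae (ae_of_all _ fun x => ?_)
    simp only [smul_eq_mul]
    rw [← hev (y - x), neg_sub]; ring
  have h3 := hprodInt.integral_prod_right
  simp only [Function.uncurry_apply_pair] at h3
  simp_rw [e1, e2] at h
  simp_rw [e2] at h3
  exact ⟨h, h3⟩

lemma contDiff_sum_pd {Y : Fin n → Euc n → ℝ} (hY : ∀ j, ContDiff ℝ (⊤ : ℕ∞) (Y j)) :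
    ContDiff ℝ (⊤ : ℕ∞) fun y => ∑ j, pd j (Y j) y :=
  ContDiff.sum fun j _ => contDiff_pd (hY j) j

lemma contDiff_lam {Y : Fin n → Euc n → ℝ} (hY : ∀ j, ContDiff ℝ (⊤ : ℕ∞) (Y j)) (κ : ℝ)
    (k : Fin n) : ContDiff ℝ (⊤ : ℕ∞) (Lam κ Y k) :=
  (ContDiff.sum fun i _ => contDiff_pd (contDiff_pd (hY k) i) i).add
    (contDiff_const.mul (contDiff_pd (contDiff_sum_pd hY) k))

/-- Formal self-adjointness of the Lamé operator. -/
lemma lam_adjoint (κ : ℝ) {Y φ : Fin n → Euc n → ℝ} (hY : ∀ j, ContDiff ℝ (⊤ : ℕ∞) (Y j))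
    (hφ : ∀ j, Test (φ j)) :
    ∑ j, ∫ x, Lam κ Y j x * φ j x = ∑ j, ∫ x, Y j x * Lam κ φ j x := by
  have hDY := contDiff_sum_pd hY
  set DY : Euc n → ℝ := fun y => ∑ j, pd j (Y j) y with hDYd
  set Dφ : Euc n → ℝ := fun y => ∑ j, pd j (φ j) y with hDφd
  have hDφ : Test Dφ := Test.sum _ fun j => (hφ j).pd j
  have hlapc : ∀ j, ContDiff ℝ (⊤ : ℕ∞) (lap (Y j)) := fun j =>
    ContDiff.sum fun i _ => contDiff_pd (contDiff_pd (hY j) i) i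
  have h1 : ∀ j, ∫ x, Lam κ Y j x * φ j x =
      (∫ x, Y j x * lap (φ j) x) - κ * ∫ x, DY x * pd j (φ j) x := by
    intro j
    have : ∀ x, Lam κ Y j x * φ j x = lap (Y j) x * φ j x + κ * (pd j DY x * φ j x) := by
      intro x; unfold Lam; ring
    simp_rw [this]
    rw [integral_add ((hφ j).mul_left (hlapc j)).integrable
      (((hφ j).mul_left (contDiff_pd hDY j)).const_mul κ).integrable,
      integral_const_mul, integral_pd_mul hDY (hφ j), ← integral_lap_mul (hY j) (hφ j)]
    ring
  have h2 : ∀ j, ∫ x, Y j x * Lam κ φ j x =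
      (∫ x, Y j x * lap (φ j) x) - κ * ∫ x, pd j (Y j) x * Dφ x := by
    intro j
    have : ∀ x, Y j x * Lam κ φ j x = Y j x * lap (φ j) x + κ * (Y j x * pd j Dφ x) := by
      intro x; unfold Lam; ring
    simp_rw [this]
    rw [integral_add ((hφ j).lap.mul_left (hY j)).integrable
      (((hDφ.pd j).mul_left (hY j)).const_mul κ).integrable,
      integral_const_mul, integral_pd_mul (hY j) hDφ]
    ring
  simp_rw [h1, h2]
  rw [Finset.sum_sub_distrib, Finset.sum_sub_distrib, ← Finset.mul_sum, ← Finset.mul_sum,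
    ← integral_finsetSum _ fun j _ => ((hφ j).pd j).mul_left hDY |>.integrable,
    ← integral_finsetSum _ fun j _ => hDφ.mul_left (contDiff_pd (hY j) j) |>.integrable]
  simp_rw [← Finset.sum_mul, ← Finset.mul_sum]
  rfl

lemma pot_contDiff_top (hn : 3 ≤ n) {a : ℝ} (ha0 : 0 ≤ a) (ha : a < n) {k : Euc n → ℝ}
    (hk : IsKer a k) {g : Euc n → ℝ} (hg : ContDiff ℝ (⊤ : ℕ∞) g) (hgi : IntW a g) :
    ContDiff ℝ (⊤ : ℕ∞) (Pot k g) :=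
  contDiff_infty.2 fun m => pot_contDiff hn ha0 ha hk m (hg.of_le (by exact_mod_cast le_top)) hgi

/-- Potentials with a fundamental matrix solve `LY = G`. The equation is tested against test fields,
using that `L` is self-adjoint and the matrix even and symmetric; it then holds almost everywhere,
hence everywhere by continuity. -/
theorem lame_solve (hn : 3 ≤ n) {κ : ℝ} {E : Fin n → Fin n → Euc n → ℝ}
    (hE : ∀ j k, IsKer ((n : ℝ) - 2) (E j k)) (hev : ∀ j k x, E j k (-x) = E j k x)
    (hsym : ∀ j k, E j k = E k j)
    (hfund : ∀ φ : Fin n → Euc n → ℝ, (∀ j, Test (φ j)) → ∀ j x,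
        ∑ k, Pot (E j k) (Lam κ φ k) x = φ j x)
    {G : Fin n → Euc n → ℝ} (hG : ∀ k, ContDiff ℝ (⊤ : ℕ∞) (G k))
    (hGi : ∀ k, IntW ((n : ℝ) - 2) (G k)) :
    (∀ j, ContDiff ℝ (⊤ : ℕ∞) (fun x => ∑ k, Pot (E j k) (G k) x)) ∧
    ∀ j x, Lam κ (fun j x => ∑ k, Pot (E j k) (G k) x) j x = G j x := by
  have hn' : (3 : ℝ) ≤ n := by exact_mod_cast hn
  have h0 : (0 : ℝ) ≤ n - 2 := by linarith
  have h1 : (n : ℝ) - 2 < n := by linarith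
  have hP : ∀ j k, ContDiff ℝ (⊤ : ℕ∞) (Pot (E j k) (G k)) := fun j k =>
    pot_contDiff_top hn h0 h1 (hE j k) (hG k) (hGi k)
  have hY : ∀ j, ContDiff ℝ (⊤ : ℕ∞) (fun x => ∑ k, Pot (E j k) (G k) x) := fun j =>
    ContDiff.sum fun k _ => hP j k
  refine ⟨hY, ?_⟩
  set Y : Fin n → Euc n → ℝ := fun j x => ∑ k, Pot (E j k) (G k) x with hYd
  intro j
  have hae : ∀ᵐ x, Lam κ Y j x = G j x := by
    refine ae_eq_of_integral_contDiff_smul_eq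
      (contDiff_lam hY κ j).continuous.locallyIntegrable (hG j).continuous.locallyIntegrable ?_
    intro ψ hψ1 hψ2
    have hψ : Test ψ := ⟨hψ1, hψ2⟩
    set φ : Fin n → Euc n → ℝ := fun i x => (if i = j then 1 else 0) * ψ x with hφd
    have hφ : ∀ i, Test (φ i) := fun i => hψ.const_mul _
    have hadj := lam_adjoint κ hY hφ
    have hL := Test.lam hφ κ
    have e1 : ∑ i, ∫ x, Lam κ Y i x * φ i x = ∫ x, ψ x • Lam κ Y j x := by
      rw [Finset.sum_eq_single j]
      · simp [hφd, mul_comm]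
      · intro i _ hij; simp [hφd, hij]
      · simp
    have e2 : ∑ i, ∫ x, Y i x * Lam κ φ i x = ∫ x, ψ x • G j x := by
      have s1 : ∀ i, ∫ x, Y i x * Lam κ φ i x =
          ∑ k, ∫ y, G k y * Pot (E k i) (Lam κ φ i) y := by
        intro i
        simp only [hYd, Finset.sum_mul]
        rw [integral_finsetSum _ fun k _ => ((hL i).mul_left (hP i k)).integrable]
        refine Finset.sum_congr rfl fun k _ => ?_
        rw [(pot_adjoint hn h0 h1 (hE i k) (hev i k) (hG k).continuous (hGi k) (hL i)).1, hsym]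
      simp_rw [s1]
      rw [Finset.sum_comm]
      have s2 : ∀ k, ∑ i, ∫ y, G k y * Pot (E k i) (Lam κ φ i) y = ∫ y, G k y * φ k y := by
        intro k
        simp_rw [← hfund φ hφ k, Finset.mul_sum]
        rw [integral_finsetSum]
        intro i _
        exact (pot_adjoint hn h0 h1 (hE k i) (hev k i) (hG k).continuous (hGi k) (hL i)).2
      simp_rw [s2]
      rw [Finset.sum_eq_single j]
      · simp [hφd, mul_comm]
      · intro i _ hij; simp [hφd, hij]
      · simp
    rw [← e1, hadj, e2]
  have := (contDiff_lam hY κ j).continuous.ae_eq_iff_eq volume (hG j).continuous |>.1 hae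
  exact fun x => congrFun this x

end

/-! ### The heat flow on test functions -/

section
variable {n : ℕ}

/-- Unnormalised Gaussian. -/
def gau0 (n : ℕ) (z : Euc n) : ℝ := Real.exp (-‖z‖ ^ 2 / 2)

lemma gau0_pos (z : Euc n) : 0 < gau0 n z := Real.exp_pos _

lemma gau0_contDiff {m : WithTop ℕ∞} : ContDiff ℝ m (gau0 n) :=
  Real.contDiff_exp.comp ((contDiff_norm_sq ℝ).neg.div_const 2)

lemma gau0_decay (k : ℕ) : ∃ C : ℝ, 0 ≤ C ∧ ∀ z : Euc n, gau0 n z ≤ C * (jap z ^ (2 * k))⁻¹ := by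
  refine ⟨k.factorial * 2 ^ k * Real.exp (1 / 2), by positivity, fun z => ?_⟩
  have h1 := Real.pow_div_factorial_le_exp ((1 + ‖z‖ ^ 2) / 2) (by positivity) k
  have h2 : gau0 n z = Real.exp (1 / 2) * (Real.exp ((1 + ‖z‖ ^ 2) / 2))⁻¹ := by
    rw [← Real.exp_neg, ← Real.exp_add]; unfold gau0; congr 1; ring
  have h3 : jap z ^ (2 * k) = (1 + ‖z‖ ^ 2) ^ k := by rw [pow_mul, jap_sq]
  have hE := Real.exp_pos ((1 + ‖z‖ ^ 2) / 2)
  rw [h2, h3]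
  have h4 : (1 + ‖z‖ ^ 2) ^ k ≤ k.factorial * 2 ^ k * Real.exp ((1 + ‖z‖ ^ 2) / 2) := by
    rw [div_pow] at h1
    rw [div_div, div_le_iff₀ (by positivity)] at h1
    linarith
  have h5 : (Real.exp ((1 + ‖z‖ ^ 2) / 2))⁻¹ ≤ k.factorial * 2 ^ k * ((1 + ‖z‖ ^ 2) ^ k)⁻¹ := by
    rw [inv_le_iff_one_le_mul₀ hE]
    have : 0 < (1 + ‖z‖ ^ 2) ^ k := by positivity
    field_simp
    linarith
  calc _ ≤ Real.exp (1 / 2) * (k.factorial * 2 ^ k * ((1 + ‖z‖ ^ 2) ^ k)⁻¹) := by gcongr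
    _ = _ := by ring

lemma jap_pow_integrable {k : ℕ} (hk : n < k) : Integrable fun z : Euc n => (jap z ^ k)⁻¹ := by
  have := integrable_rpow_neg_one_add_norm_sq (E := Euc n) (μ := volume) (r := k)
    (by simpa using hk)
  refine this.congr (ae_of_all _ fun z => ?_)
  beta_reduce
  unfold jap
  rw [Real.sqrt_eq_rpow, ← Real.rpow_natCast (_ ^ _) k, ← Real.rpow_mul (by positivity),
    ← Real.rpow_neg (by positivity)]
  congr 1; ring

lemma gau0_moment (k : ℕ) : Integrable fun z : Euc n => jap z ^ k * gau0 n z := by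
  obtain ⟨C, hC, h⟩ := gau0_decay (n := n) (k + n + 1)
  refine ((jap_pow_integrable (n := n) (k := k + 2 * n + 2) (by omega)).const_mul C).mono' ?_ ?_
  · exact ((continuous_jap.pow k).mul (gau0_contDiff (m := 0)).continuous).aestronglyMeasurable
  · refine ae_of_all _ fun z => ?_
    have hj := jap_pos z
    rw [Real.norm_of_nonneg (mul_nonneg (by positivity) (gau0_pos z).le)]
    calc _ ≤ jap z ^ k * (C * (jap z ^ (2 * (k + n + 1)))⁻¹) := by gcongr; exact h z
      _ = _ := by
        rw [show 2 * (k + n + 1) = k + (k + 2 * n + 2) by ring, pow_add]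
        field_simp

lemma gau0_integral_pos : 0 < ∫ z : Euc n, gau0 n z := by
  rw [integral_pos_iff_support_of_nonneg (fun z => (gau0_pos z).le)
    (by simpa using gau0_moment (n := n) 0)]
  have : Function.support (gau0 n) = Set.univ := by ext z; simp [(gau0_pos z).ne']
  rw [this]; exact isOpen_univ.measure_pos _ Set.univ_nonempty

/-- The standard Gaussian density. -/
def gau (n : ℕ) (z : Euc n) : ℝ := (∫ z : Euc n, gau0 n z)⁻¹ * gau0 n z

lemma gau_pos (z : Euc n) : 0 < gau n z := mul_pos (inv_pos.2 gau0_integral_pos) (gau0_pos z)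

lemma gau_contDiff {m : WithTop ℕ∞} : ContDiff ℝ m (gau n) := contDiff_const.mul gau0_contDiff

lemma gau_cont : Continuous (gau n) := (gau_contDiff (m := 0)).continuous

lemma gau_moment (k : ℕ) : Integrable fun z : Euc n => jap z ^ k * gau n z := by
  refine ((gau0_moment (n := n) k).const_mul (∫ z : Euc n, gau0 n z)⁻¹).congr
    (ae_of_all _ fun z => ?_)
  simp only [gau]; ring

lemma gau_integrable : Integrable (gau n) := by simpa using gau_moment (n := n) 0

lemma gau_integral : ∫ z, gau n z = 1 := by
  unfold gau
  rw [integral_const_mul, inv_mul_cancel₀ gau0_integral_pos.ne']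

lemma pd_gau (i : Fin n) (z : Euc n) : pd i (gau n) z = - (z i * gau n z) := by
  have h1 : HasFDerivAt (fun y : Euc n => -‖y‖ ^ 2 / 2) _ z :=
    ((hasStrictFDerivAt_norm_sq z).hasFDerivAt.neg).mul_const (2⁻¹ : ℝ)
  have h2 := (h1.exp).const_mul (∫ z : Euc n, gau0 n z)⁻¹
  unfold pd
  have h3 : fderiv ℝ (gau n) z = _ := h2.fderiv
  have h4 : inner ℝ z (EuclideanSpace.single i (1 : ℝ)) = z i := by
    rw [EuclideanSpace.inner_single_right]; simp
  rw [h3]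
  simp [h4]
  unfold gau gau0
  ring_nf

/-- The heat semigroup `P_t f`, generated by `½Δ`. -/
def Ht (f : Euc n → ℝ) (t : ℝ) (x : Euc n) : ℝ := ∫ z, f (x + √t • z) * gau n z

lemma Test.bdd {f : Euc n → ℝ} (hf : Test f) : ∃ B : ℝ, 0 ≤ B ∧ ∀ x, |f x| ≤ B := by
  obtain ⟨B, hB⟩ := hf.2.exists_bound_of_continuous hf.cont
  exact ⟨B, (norm_nonneg _).trans (hB 0), hB⟩

lemma ht_int {f : Euc n → ℝ} (hf : Test f) (t : ℝ) (x : Euc n) :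
    Integrable fun z => f (x + √t • z) * gau n z := by
  obtain ⟨B, hB0, hB⟩ := hf.bdd
  refine (gau_integrable.const_mul B).mono'
    ((hf.cont.comp (by fun_prop)).mul gau_cont).aestronglyMeasurable (ae_of_all _ fun z => ?_)
  rw [norm_mul, Real.norm_of_nonneg (gau_pos z).le]
  exact mul_le_mul_of_nonneg_right (hB _) (gau_pos z).le

lemma ht_zero (f : Euc n → ℝ) (x : Euc n) : Ht f 0 x = f x := by
  simp [Ht, integral_const_mul, gau_integral]

lemma ht_cont {f : Euc n → ℝ} (hf : Test f) : Continuous fun q : ℝ × Euc n => Ht f q.1 q.2 := by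
  obtain ⟨B, hB0, hB⟩ := hf.bdd
  refine continuous_of_dominated (bound := fun z => B * gau n z) ?_ ?_ ?_ ?_
  · exact fun q => (ht_int hf q.1 q.2).aestronglyMeasurable
  · refine fun q => ae_of_all _ fun z => ?_
    rw [norm_mul, Real.norm_of_nonneg (gau_pos z).le]
    exact mul_le_mul_of_nonneg_right (hB _) (gau_pos z).le
  · exact gau_integrable.const_mul B
  · refine ae_of_all _ fun z => ?_
    exact (hf.cont.comp (by fun_prop)).mul continuous_const

lemma ht_cont_x {f : Euc n → ℝ} (hf : Test f) (t : ℝ) : Continuous (Ht f t) :=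
  (ht_cont hf).comp (Continuous.prodMk_right t)

lemma fderiv_bdd {f : Euc n → ℝ} (hf : Test f) : ∃ B : ℝ, 0 ≤ B ∧ ∀ x, ‖fderiv ℝ f x‖ ≤ B := by
  obtain ⟨B, hB⟩ := (hf.2.fderiv ℝ).exists_bound_of_continuous (hf.1.continuous_fderiv (by simp))
  exact ⟨B, (norm_nonneg _).trans (hB 0), hB⟩

lemma ht_hasFDerivAt {f : Euc n → ℝ} (hf : Test f) (t : ℝ) (x : Euc n) :
    HasFDerivAt (Ht f t) (∫ z, gau n z • fderiv ℝ f (x + √t • z)) x := by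
  obtain ⟨B, hB0, hB⟩ := fderiv_bdd hf
  refine hasFDerivAt_integral_of_dominated_of_fderiv_le
    (F := fun x z => f (x + √t • z) * gau n z)
    (F' := fun x z => gau n z • fderiv ℝ f (x + √t • z)) (bound := fun z => B * gau n z)
    (s := Set.univ) univ_mem ?_ (ht_int hf t x) ?_ ?_ (gau_integrable.const_mul B) ?_
  · exact Eventually.of_forall fun y => (ht_int hf t y).aestronglyMeasurable
  · exact (gau_cont.smul ((hf.1.continuous_fderiv (by simp)).comp (by fun_prop))).aestronglyMeasurable
  · refine ae_of_all _ fun z y _ => ?_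
    rw [norm_smul, Real.norm_of_nonneg (gau_pos z).le, mul_comm]
    exact mul_le_mul_of_nonneg_right (hB _) (gau_pos z).le
  · refine ae_of_all _ fun z y _ => ?_
    have h := (hf.1.da (y + √t • z)).hasFDerivAt.comp y ((hasFDerivAt_id y).add_const (√t • z))
    exact h.mul_const (gau n z)

lemma ht_da {f : Euc n → ℝ} (hf : Test f) (t : ℝ) (x : Euc n) : DifferentiableAt ℝ (Ht f t) x :=
  (ht_hasFDerivAt hf t x).differentiableAt

lemma pd_ht {f : Euc n → ℝ} (hf : Test f) (t : ℝ) (i : Fin n) :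
    pd i (Ht f t) = Ht (pd i f) t := by
  funext x
  obtain ⟨B, hB0, hB⟩ := fderiv_bdd hf
  unfold pd
  rw [(ht_hasFDerivAt hf t x).fderiv, ContinuousLinearMap.integral_apply]
  · simp [Ht, mul_comm]
  · refine (gau_integrable.const_mul B).mono' (gau_cont.smul
      ((hf.1.continuous_fderiv (by simp)).comp (by fun_prop))).aestronglyMeasurable
      (ae_of_all _ fun z => ?_)
    rw [norm_smul, Real.norm_of_nonneg (gau_pos z).le, mul_comm]
    exact mul_le_mul_of_nonneg_right (hB _) (gau_pos z).le

lemma pd_comp_affine {f : Euc n → ℝ} (hf : ContDiff ℝ (⊤ : ℕ∞) f) (x : Euc n) (s : ℝ) (i : Fin n)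
    (z : Euc n) : pd i (fun z => f (x + s • z)) z = s * pd i f (x + s • z) := by
  have h := (hf.da (x + s • z)).hasFDerivAt.comp z
    (((hasFDerivAt_id z).const_smul s).const_add x)
  unfold pd
  have h' : fderiv ℝ (fun z => f (x + s • z)) z = _ := h.fderiv
  rw [h']; simp

lemma Test.comp_affine {f : Euc n → ℝ} (hf : Test f) (x : Euc n) {s : ℝ} (hs : s ≠ 0) :
    Test (fun z => f (x + s • z)) := by
  refine ⟨hf.1.comp (contDiff_const.add (contDiff_const_smul s)), ?_⟩
  exact hf.2.comp_homeomorph ((Homeomorph.smulOfNeZero s hs).trans (Homeomorph.addLeft x))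

/-- Gaussian integration by parts. -/
lemma gau_ibp {f : Euc n → ℝ} (hf : Test f) (x : Euc n) {s : ℝ} (hs : s ≠ 0) (i : Fin n) :
    ∫ z, f (x + s • z) * (z i * gau n z) = s * ∫ z, pd i f (x + s • z) * gau n z := by
  have h := integral_pd_mul (gau_contDiff (n := n)) (hf.comp_affine x hs) i
  simp_rw [pd_gau, pd_comp_affine hf.1] at h
  rw [← integral_const_mul]
  have e1 : ∫ z, f (x + s • z) * (z i * gau n z) = - ∫ z, -(z i * gau n z) * f (x + s • z) := by
    rw [← integral_neg]; congr 1; funext z; ring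
  rw [e1, h, neg_neg]
  congr 1; funext z; ring

lemma abs_coord_le (z : Euc n) (i : Fin n) : |z i| ≤ jap z := by
  have : ‖z i‖ ≤ ‖z‖ := PiLp.norm_apply_le z i
  exact this.trans (norm_le_jap z)

/-- The heat equation for the flow, by Gaussian integration by parts. -/
lemma ht_deriv {f : Euc n → ℝ} (hf : Test f) {t : ℝ} (ht : 0 < t) (x : Euc n) :
    HasDerivAt (fun t => Ht f t x) (1 / 2 * Ht (lap f) t x) t := by
  obtain ⟨B, hB0, hB⟩ := fderiv_bdd hf
  have hder : ∀ (z : Euc n) (s : ℝ), 0 < s → HasDerivAt (fun s => f (x + √s • z) * gau n z)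
      ((1 / (2 * √s)) * fderiv ℝ f (x + √s • z) z * gau n z) s := by
    intro z s hs
    have h1 : HasDerivAt (fun s => x + √s • z) ((1 / (2 * √s)) • z) s :=
      ((Real.hasDerivAt_sqrt hs.ne').smul_const z).const_add x
    have h2 := (hf.1.da (x + √s • z)).hasFDerivAt.comp_hasDerivAt s h1
    have h3 := h2.mul_const (gau n z)
    simpa using h3
  have hmain := (hasDerivAt_integral_of_dominated_loc_of_deriv_le
    (F := fun s z => f (x + √s • z) * gau n z)
    (F' := fun s z => (1 / (2 * √s)) * fderiv ℝ f (x + √s • z) z * gau n z)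
    (bound := fun z => (1 / √(t / 2) * B) * (jap z ^ 1 * gau n z)) (x₀ := t) (μ := volume)
    (s := Set.Ioi (t / 2)) (Ioi_mem_nhds (by linarith)) ?_ (ht_int hf t x) ?_ ?_
    ((gau_moment 1).const_mul _) ?_).2
  · have e : ∫ z, (1 / (2 * √t)) * fderiv ℝ f (x + √t • z) z * gau n z =
        1 / 2 * Ht (lap f) t x := by
      have hst : √t ≠ 0 := (Real.sqrt_pos.2 ht).ne'
      have e1 : ∀ z, (1 / (2 * √t)) * fderiv ℝ f (x + √t • z) z * gau n z =
          (1 / (2 * √t)) * ∑ i, pd i f (x + √t • z) * (z i * gau n z) := by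
        intro z
        rw [fderiv_eq_sum_pd, mul_assoc, Finset.sum_mul]
        congr 1; refine Finset.sum_congr rfl fun i _ => by ring
      simp_rw [e1]
      rw [integral_const_mul, integral_finsetSum]
      · simp_rw [gau_ibp (hf.pd _) x hst]
        rw [← Finset.mul_sum, ← integral_finsetSum _ fun i _ => ht_int ((hf.pd i).pd i) t x]
        unfold Ht lap
        simp_rw [Finset.sum_mul]
        field_simp
      · intro i _
        obtain ⟨B', hB0', hB'⟩ := (hf.pd i).bdd
        refine ((gau_moment (n := n) 1).const_mul B').mono' ?_ (ae_of_all _ fun z => ?_)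
        · exact (((hf.pd i).cont.comp (by fun_prop)).mul
            ((contDiff_coord i (m := 0)).continuous.mul gau_cont)).aestronglyMeasurable
        · rw [norm_mul, norm_mul, Real.norm_of_nonneg (gau_pos z).le, pow_one]
          exact mul_le_mul (hB' _) (mul_le_mul_of_nonneg_right (abs_coord_le z i) (gau_pos z).le)
            (mul_nonneg (norm_nonneg _) (gau_pos z).le) hB0'
    rw [← e]; exact hmain
  · exact Eventually.of_forall fun s => (ht_int hf s x).aestronglyMeasurable
  · refine Continuous.aestronglyMeasurable ?_
    exact (continuous_const.mul (((hf.1.continuous_fderiv (by simp)).comp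
      (by fun_prop)).clm_apply continuous_id)).mul gau_cont
  · refine ae_of_all _ fun z s hs => ?_
    have hs : t / 2 < s := hs
    rw [norm_mul, norm_mul, Real.norm_of_nonneg (gau_pos z).le, ← mul_assoc, pow_one]
    refine mul_le_mul_of_nonneg_right ?_ (gau_pos z).le
    rw [mul_assoc]
    have h1 : ‖1 / (2 * √s)‖ ≤ 1 / √(t / 2) := by
      rw [Real.norm_of_nonneg (by positivity)]
      have h2 : √(t / 2) ≤ √s := Real.sqrt_le_sqrt hs.le
      have h3 : 0 < √(t / 2) := Real.sqrt_pos.2 (by linarith)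
      exact one_div_le_one_div_of_le h3 (by linarith)
    refine mul_le_mul h1 ?_ (norm_nonneg _) (by positivity)
    refine (ContinuousLinearMap.le_opNorm _ _).trans ?_
    exact mul_le_mul (hB _) (norm_le_jap z) (norm_nonneg _) hB0
  · refine ae_of_all _ fun z s hs => hder z s ?_
    have hs : t / 2 < s := hs
    linarith

lemma Test.decay {f : Euc n → ℝ} (hf : Test f) (k : ℕ) :
    ∃ C : ℝ, 0 ≤ C ∧ ∀ x, |f x| ≤ C * (jap x ^ k)⁻¹ := by
  have h : HasCompactSupport fun x => jap x ^ k * f x := hf.2.mul_left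
  obtain ⟨B, hB⟩ := h.exists_bound_of_continuous ((continuous_jap.pow k).mul hf.cont)
  refine ⟨B, (norm_nonneg _).trans (hB 0), fun x => ?_⟩
  have h1 := hB x
  have hj : 0 < jap x ^ k := pow_pos (jap_pos x) k
  rw [norm_mul, Real.norm_of_nonneg hj.le] at h1
  rw [← div_eq_mul_inv, le_div_iff₀ hj, mul_comm]
  exact h1

/-- The heat flow of a test function decays faster than any power, uniformly for `t ≤ T`. -/
lemma ht_decay {f : Euc n → ℝ} (hf : Test f) (k : ℕ) (T : ℝ) :
    ∃ C : ℝ, 0 ≤ C ∧ ∀ t, t ≤ T → ∀ x, |Ht f t x| ≤ C * (jap x ^ k)⁻¹ := by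
  obtain ⟨C, hC, h⟩ := hf.decay k
  have hT : 0 ≤ √T := Real.sqrt_nonneg _
  set I := ∫ z : Euc n, jap z ^ k * gau n z
  have hI : 0 ≤ I := integral_nonneg fun z =>
    mul_nonneg (pow_nonneg (jap_pos z).le k) (gau_pos z).le
  refine ⟨C * (1 + √T) ^ k * I, by positivity, fun t ht x => ?_⟩
  have hb : ∀ z, |f (x + √t • z) * gau n z| ≤
      (C * (1 + √T) ^ k * (jap x ^ k)⁻¹) * (jap z ^ k * gau n z) := by
    intro z
    have hz := jap_pos z
    have hx := jap_pos x
    have hg := gau_pos z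
    rw [abs_mul, abs_of_pos hg, ← mul_assoc]
    refine mul_le_mul_of_nonneg_right ((h _).trans ?_) hg.le
    have h1 := jap_ge_one (x + √t • z)
    have h2 : jap x ≤ jap (x + √t • z) * ((1 + √T) * jap z) := by
      have h3 := jap_le_jap_add x (x + √t • z)
      have h4 : ‖x - (x + √t • z)‖ ≤ √T * jap z := by
        rw [sub_add_cancel_left, norm_neg, norm_smul, Real.norm_of_nonneg (Real.sqrt_nonneg _)]
        exact mul_le_mul (Real.sqrt_le_sqrt ht) (norm_le_jap z) (norm_nonneg _) hT
      have h5 := jap_ge_one z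
      nlinarith [mul_nonneg hT hz.le, mul_nonneg (sub_nonneg.2 h1) (mul_nonneg hT hz.le),
        mul_nonneg (sub_nonneg.2 h5) (sub_nonneg.2 h1)]
    have h6 : jap x ^ k ≤ jap (x + √t • z) ^ k * ((1 + √T) ^ k * jap z ^ k) := by
      rw [← mul_pow, ← mul_pow]; exact pow_le_pow_left₀ hx.le h2 k
    have h7 : (jap (x + √t • z) ^ k)⁻¹ ≤ (jap x ^ k)⁻¹ * ((1 + √T) ^ k * jap z ^ k) := by
      have : 0 < jap (x + √t • z) ^ k := by positivity
      rw [inv_le_iff_one_le_mul₀ this]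
      rw [mul_assoc, ← div_eq_inv_mul, one_le_div (by positivity)]
      linarith
    calc _ ≤ C * ((jap x ^ k)⁻¹ * ((1 + √T) ^ k * jap z ^ k)) := by gcongr
      _ = _ := by ring
  have h8 : |Ht f t x| ≤ ∫ z, (C * (1 + √T) ^ k * (jap x ^ k)⁻¹) * (jap z ^ k * gau n z) :=
    norm_integral_le_of_norm_le (f := fun z => f (x + √t • z) * gau n z)
      ((gau_moment k).const_mul _) (ae_of_all _ hb)
  rw [integral_const_mul] at h8
  calc _ ≤ _ := h8
    _ = _ := by ring

lemma ht_sup_decay {f : Euc n → ℝ} (hf : Test f) (i : Fin n) : ∃ C : ℝ, 0 ≤ C ∧ ∀ t, 0 < t → ∀ x,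
    |Ht (pd i f) t x| ≤ C / √t := by
  obtain ⟨B, hB0, hB⟩ := hf.bdd
  refine ⟨B * ∫ z : Euc n, jap z ^ 1 * gau n z, mul_nonneg hB0 (integral_nonneg fun z =>
    mul_nonneg (pow_nonneg (jap_pos z).le 1) (gau_pos z).le), fun t ht x => ?_⟩
  have hst : 0 < √t := Real.sqrt_pos.2 ht
  have h := gau_ibp hf x hst.ne' i
  rw [le_div_iff₀ hst]
  have e : Ht (pd i f) t x * √t = ∫ z, f (x + √t • z) * (z i * gau n z) := by
    rw [h, mul_comm]; rfl
  rw [← abs_of_pos hst, ← abs_mul, e, ← integral_const_mul]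
  refine norm_integral_le_of_norm_le (f := fun z => f (x + √t • z) * (z i * gau n z))
    ((gau_moment 1).const_mul B) (ae_of_all _ fun z => ?_)
  rw [norm_mul, norm_mul, Real.norm_of_nonneg (gau_pos z).le, pow_one]
  exact mul_le_mul (hB _) (mul_le_mul_of_nonneg_right (abs_coord_le z i) (gau_pos z).le)
    (mul_nonneg (norm_nonneg _) (gau_pos z).le) hB0

end

/-! ### Dissipation of convex functionals along the heat flow -/

section
variable {n : ℕ}

/-- A `C²` function on the plane vanishing at the origin, given with its partial derivatives. -/
structure C2Fn (Q Q1 Q2 Q11 Q12 Q22 : ℝ × ℝ → ℝ) : Prop where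
  d0 : ∀ z, HasFDerivAt Q (Q1 z • ContinuousLinearMap.fst ℝ ℝ ℝ +
    Q2 z • ContinuousLinearMap.snd ℝ ℝ ℝ) z
  d1 : ∀ z, HasFDerivAt Q1 (Q11 z • ContinuousLinearMap.fst ℝ ℝ ℝ +
    Q12 z • ContinuousLinearMap.snd ℝ ℝ ℝ) z
  d2 : ∀ z, HasFDerivAt Q2 (Q12 z • ContinuousLinearMap.fst ℝ ℝ ℝ +
    Q22 z • ContinuousLinearMap.snd ℝ ℝ ℝ) z
  c11 : Continuous Q11
  c12 : Continuous Q12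
  c22 : Continuous Q22
  z0 : Q (0, 0) = 0

lemma ht_bdd {f : Euc n → ℝ} (hf : Test f) : ∃ B : ℝ, 0 ≤ B ∧ ∀ t x, |Ht f t x| ≤ B := by
  obtain ⟨B, hB0, hB⟩ := hf.bdd
  refine ⟨B, hB0, fun t x => ?_⟩
  have h := norm_integral_le_of_norm_le (f := fun z => f (x + √t • z) * gau n z)
    (gau_integrable.const_mul B) (ae_of_all _ fun z => by
      rw [norm_mul, Real.norm_of_nonneg (gau_pos z).le]
      exact mul_le_mul_of_nonneg_right (hB _) (gau_pos z).le)
  rw [integral_const_mul, gau_integral, mul_one] at h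
  exact h

lemma int_of_decay {φ : Euc n → ℝ} (hφ : Continuous φ) {C : ℝ}
    (h : ∀ x, |φ x| ≤ C * (jap x ^ (n + 1))⁻¹) : Integrable φ :=
  ((jap_pow_integrable (n := n) (k := n + 1) (by omega)).const_mul C).mono'
    hφ.aestronglyMeasurable (ae_of_all _ h)

lemma ht_lap {f : Euc n → ℝ} (hf : Test f) (t : ℝ) (x : Euc n) :
    Ht (lap f) t x = ∑ i, Ht (pd i (pd i f)) t x := by
  unfold Ht lap
  simp_rw [Finset.sum_mul]
  rw [integral_finsetSum _ fun i _ => ht_int ((hf.pd i).pd i) t x]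

lemma comp_bdd {f g : Euc n → ℝ} (hf : Test f) (hg : Test g) {A : ℝ × ℝ → ℝ} (hA : Continuous A) :
    ∃ M : ℝ, 0 ≤ M ∧ ∀ t x, |A (Ht f t x, Ht g t x)| ≤ M := by
  obtain ⟨B, hB0, hB⟩ := ht_bdd hf
  obtain ⟨B', hB0', hB'⟩ := ht_bdd hg
  obtain ⟨M, hM⟩ := (isCompact_closedBall (0 : ℝ × ℝ) (max B B')).exists_bound_of_continuousOn
    hA.continuousOn
  have h : ∀ t x, |A (Ht f t x, Ht g t x)| ≤ M := by
    intro t x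
    refine hM _ ?_
    rw [mem_closedBall_zero_iff, Prod.norm_def]
    exact max_le_max (hB t x) (hB' t x)
  exact ⟨M, (abs_nonneg _).trans (h 0 0), h⟩

lemma C2Fn.lip {Q Q1 Q2 Q11 Q12 Q22 : ℝ × ℝ → ℝ} (hQ : C2Fn Q Q1 Q2 Q11 Q12 Q22)
    {f g : Euc n → ℝ} (hf : Test f) (hg : Test g) : ∃ M : ℝ, 0 ≤ M ∧ ∀ t x,
      |Q (Ht f t x, Ht g t x)| ≤ M * (|Ht f t x| + |Ht g t x|) := by
  have c1 : Continuous Q1 := continuous_iff_continuousAt.2 fun z => (hQ.d1 z).continuousAt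
  have c2 : Continuous Q2 := continuous_iff_continuousAt.2 fun z => (hQ.d2 z).continuousAt
  obtain ⟨B, hB0, hB⟩ := ht_bdd hf
  obtain ⟨B', hB0', hB'⟩ := ht_bdd hg
  have cD : Continuous fun z : ℝ × ℝ => (Q1 z • ContinuousLinearMap.fst ℝ ℝ ℝ +
    Q2 z • ContinuousLinearMap.snd ℝ ℝ ℝ) :=
    (c1.smul continuous_const).add (c2.smul continuous_const)
  obtain ⟨M, hM⟩ := (isCompact_closedBall (0 : ℝ × ℝ) (max B B')).exists_bound_of_continuousOn
    cD.continuousOn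
  have hM0 : 0 ≤ M := (norm_nonneg _).trans (hM 0 (by simp [hB0]))
  refine ⟨M, hM0, fun t x => ?_⟩
  have hmem : (Ht f t x, Ht g t x) ∈ Metric.closedBall (0 : ℝ × ℝ) (max B B') := by
    rw [mem_closedBall_zero_iff, Prod.norm_def]
    exact max_le_max (hB t x) (hB' t x)
  have h := Convex.norm_image_sub_le_of_norm_hasFDerivWithin_le
    (fun z _ => (hQ.d0 z).hasFDerivWithinAt) hM (convex_closedBall _ _)
    (show (0 : ℝ × ℝ) ∈ _ by simp [hB0]) hmem
  have h0 : Q 0 = 0 := hQ.z0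
  rw [h0, sub_zero, sub_zero] at h
  refine h.trans (mul_le_mul_of_nonneg_left ?_ hM0)
  rw [Prod.norm_def]
  simp only [Real.norm_eq_abs]
  exact max_le (by linarith [abs_nonneg (Ht g t x)]) (by linarith [abs_nonneg (Ht f t x)])

lemma ht_pair_cont {f g : Euc n → ℝ} (hf : Test f) (hg : Test g) :
    Continuous fun q : ℝ × Euc n => (Ht f q.1 q.2, Ht g q.1 q.2) :=
  (ht_cont hf).prodMk (ht_cont hg)

lemma ht_pair_cont_x {f g : Euc n → ℝ} (hf : Test f) (hg : Test g) (t : ℝ) :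
    Continuous fun x : Euc n => (Ht f t x, Ht g t x) :=
  (ht_cont_x hf t).prodMk (ht_cont_x hg t)

lemma pd_comp_pair {A A1 A2 : ℝ × ℝ → ℝ} (hA : ∀ z, HasFDerivAt A
    (A1 z • ContinuousLinearMap.fst ℝ ℝ ℝ + A2 z • ContinuousLinearMap.snd ℝ ℝ ℝ) z)
    {f g : Euc n → ℝ} (hf : Test f) (hg : Test g) (t : ℝ) (x : Euc n) (i : Fin n) :
    DifferentiableAt ℝ (fun x => A (Ht f t x, Ht g t x)) x ∧
    pd i (fun x => A (Ht f t x, Ht g t x)) x =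
      A1 (Ht f t x, Ht g t x) * Ht (pd i f) t x + A2 (Ht f t x, Ht g t x) * Ht (pd i g) t x := by
  have h := (hA (Ht f t x, Ht g t x)).comp x
    ((ht_da hf t x).hasFDerivAt.prodMk (ht_da hg t x).hasFDerivAt)
  have h' : HasFDerivAt (fun x => A (Ht f t x, Ht g t x)) _ x := h
  refine ⟨h'.differentiableAt, ?_⟩
  rw [← pd_ht hf, ← pd_ht hg]
  unfold pd
  rw [h'.fderiv]
  simp

/-- Integration by parts of a bounded factor against a heat flow. -/
lemma ht_ibp {A A1 A2 : ℝ × ℝ → ℝ} (hA : ∀ z, HasFDerivAt A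
    (A1 z • ContinuousLinearMap.fst ℝ ℝ ℝ + A2 z • ContinuousLinearMap.snd ℝ ℝ ℝ) z)
    (c1 : Continuous A1) (c2 : Continuous A2)
    {f g φ : Euc n → ℝ} (hf : Test f) (hg : Test g) (hφ : Test φ) (t : ℝ) (i : Fin n) :
    ∫ x, A (Ht f t x, Ht g t x) * Ht (pd i φ) t x =
      - ∫ x, (A1 (Ht f t x, Ht g t x) * Ht (pd i f) t x +
        A2 (Ht f t x, Ht g t x) * Ht (pd i g) t x) * Ht φ t x := by
  have c0 : Continuous A := continuous_iff_continuousAt.2 fun z => (hA z).continuousAt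
  have hX := ht_pair_cont_x hf hg t
  obtain ⟨M, hM0, hM⟩ := comp_bdd hf hg c0
  obtain ⟨M1, hM10, hM1⟩ := comp_bdd hf hg c1
  obtain ⟨M2, hM20, hM2⟩ := comp_bdd hf hg c2
  obtain ⟨B1, hB10, hB1⟩ := ht_bdd (hf.pd i)
  obtain ⟨B2, hB20, hB2⟩ := ht_bdd (hg.pd i)
  obtain ⟨C, hC, hd⟩ := ht_decay hφ (n + 1) t
  obtain ⟨C', hC', hd'⟩ := ht_decay (hφ.pd i) (n + 1) t
  have hbound : ∀ x, |A1 (Ht f t x, Ht g t x) * Ht (pd i f) t x +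
        A2 (Ht f t x, Ht g t x) * Ht (pd i g) t x| ≤ M1 * B1 + M2 * B2 := by
    intro x
    refine (abs_add_le _ _).trans (add_le_add ?_ ?_)
    · rw [abs_mul]; exact mul_le_mul (hM1 t x) (hB1 t x) (abs_nonneg _) hM10
    · rw [abs_mul]; exact mul_le_mul (hM2 t x) (hB2 t x) (abs_nonneg _) hM20
  have hpd : ∀ x, pd i (fun x => A (Ht f t x, Ht g t x)) x = _ :=
    fun x => (pd_comp_pair hA hf hg t x i).2
  have h := integral_mul_fderiv_eq_neg_fderiv_mul_of_integrable (μ := (volume : Measure (Euc n)))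
    (f := fun x => A (Ht f t x, Ht g t x)) (g := Ht φ t) (v := ev i) (𝕜 := ℝ) ?_ ?_ ?_
    (fun x _ => (pd_comp_pair hA hf hg t x i).1) (fun x _ => ht_da hφ t x)
  · have h2 : ∫ x, A (Ht f t x, Ht g t x) * pd i (Ht φ t) x =
        - ∫ x, pd i (fun x => A (Ht f t x, Ht g t x)) x * Ht φ t x := h
    rw [pd_ht hφ] at h2
    simp_rw [hpd] at h2
    exact h2
  · change Integrable fun x => pd i (fun x => A (Ht f t x, Ht g t x)) x * Ht φ t x
    simp_rw [hpd]
    refine int_of_decay (C := (M1 * B1 + M2 * B2) * C) ?_ fun x => ?_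
    · exact (((c1.comp hX).mul (ht_cont_x (hf.pd i) t)).add
        ((c2.comp hX).mul (ht_cont_x (hg.pd i) t))).mul (ht_cont_x hφ t)
    · rw [abs_mul, mul_assoc]
      exact mul_le_mul (hbound x) (hd t le_rfl x) (abs_nonneg _) (by positivity)
  · change Integrable fun x => A (Ht f t x, Ht g t x) * pd i (Ht φ t) x
    rw [pd_ht hφ]
    refine int_of_decay (C := M * C') ((c0.comp hX).mul (ht_cont_x (hφ.pd i) t)) fun x => ?_
    rw [abs_mul, mul_assoc]
    exact mul_le_mul (hM t x) (hd' t le_rfl x) (abs_nonneg _) hM0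
  · refine int_of_decay (C := M * C) ((c0.comp hX).mul (ht_cont_x hφ t)) fun x => ?_
    rw [abs_mul, mul_assoc]
    exact mul_le_mul (hM t x) (hd t le_rfl x) (abs_nonneg _) hM0

/-- The Hessian of `Q` along the `i`-th derivative of the pair of heat flows. -/
def hessTerm (Q11 Q12 Q22 : ℝ × ℝ → ℝ) (f g : Euc n → ℝ) (t : ℝ) (i : Fin n) (x : Euc n) : ℝ :=
  Q11 (Ht f t x, Ht g t x) * Ht (pd i f) t x ^ 2 +
    2 * Q12 (Ht f t x, Ht g t x) * (Ht (pd i f) t x * Ht (pd i g) t x) +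
    Q22 (Ht f t x, Ht g t x) * Ht (pd i g) t x ^ 2

lemma prod_decay {f g : Euc n → ℝ} (hf : Test f) (hg : Test g) {A : ℝ × ℝ → ℝ}
    (hA : Continuous A) {φ ψ : Euc n → ℝ} (hφ : Test φ) (hψ : Test ψ) (t : ℝ) :
    Integrable fun x => A (Ht f t x, Ht g t x) * (Ht φ t x * Ht ψ t x) := by
  obtain ⟨M, hM0, hM⟩ := comp_bdd hf hg hA
  obtain ⟨B, hB0, hB⟩ := ht_bdd hφ
  obtain ⟨C, hC, hd⟩ := ht_decay hψ (n + 1) t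
  refine int_of_decay (C := M * (B * C)) ((hA.comp (ht_pair_cont_x hf hg t)).mul
    ((ht_cont_x hφ t).mul (ht_cont_x hψ t))) fun x => ?_
  rw [abs_mul, abs_mul, mul_assoc, mul_assoc]
  exact mul_le_mul (hM t x) (mul_le_mul (hB t x) (hd t le_rfl x) (abs_nonneg _) hB0)
    (by positivity) hM0

lemma hessTerm_integrable {Q11 Q12 Q22 : ℝ × ℝ → ℝ} (c11 : Continuous Q11) (c12 : Continuous Q12)
    (c22 : Continuous Q22) {f g : Euc n → ℝ} (hf : Test f) (hg : Test g) (t : ℝ) (i : Fin n) :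
    Integrable (hessTerm Q11 Q12 Q22 f g t i) := by
  have h1 := prod_decay hf hg c11 (hf.pd i) (hf.pd i) t
  have h2 := (prod_decay hf hg c12 (hf.pd i) (hg.pd i) t).const_mul 2
  have h3 := prod_decay hf hg c22 (hg.pd i) (hg.pd i) t
  refine ((h1.add h2).add h3).congr (ae_of_all _ fun x => ?_)
  simp only [hessTerm, Pi.add_apply]; ring

/-- The dissipation identity: along the flow, `∫ Q(f, g)` changes at the rate
`-½ ∑ᵢ ∫ Hess Q (∂ᵢf, ∂ᵢg)`. -/
lemma flow_hasDerivAt {Q Q1 Q2 Q11 Q12 Q22 : ℝ × ℝ → ℝ} (hQ : C2Fn Q Q1 Q2 Q11 Q12 Q22)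
    {f g : Euc n → ℝ} (hf : Test f) (hg : Test g) {t : ℝ} (ht : 0 < t) :
    HasDerivAt (fun t => ∫ x, Q (Ht f t x, Ht g t x))
      (-(1 / 2) * ∑ i, ∫ x, hessTerm Q11 Q12 Q22 f g t i x) t := by
  have c0 : Continuous Q := continuous_iff_continuousAt.2 fun z => (hQ.d0 z).continuousAt
  have c1 : Continuous Q1 := continuous_iff_continuousAt.2 fun z => (hQ.d1 z).continuousAt
  have c2 : Continuous Q2 := continuous_iff_continuousAt.2 fun z => (hQ.d2 z).continuousAt
  obtain ⟨M1, hM10, hM1⟩ := comp_bdd hf hg c1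
  obtain ⟨M2, hM20, hM2⟩ := comp_bdd hf hg c2
  obtain ⟨M, hM0, hM⟩ := hQ.lip hf hg
  obtain ⟨C1, hC1, hd1⟩ := ht_decay hf (n + 1) t
  obtain ⟨C2, hC2, hd2⟩ := ht_decay hg (n + 1) t
  obtain ⟨C3, hC3, hd3⟩ := ht_decay hf.lap (n + 1) (2 * t)
  obtain ⟨C4, hC4, hd4⟩ := ht_decay hg.lap (n + 1) (2 * t)
  set F' : ℝ → Euc n → ℝ := fun s x => Q1 (Ht f s x, Ht g s x) * (1 / 2 * Ht (lap f) s x) +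
    Q2 (Ht f s x, Ht g s x) * (1 / 2 * Ht (lap g) s x) with hF'
  have hmain := (hasDerivAt_integral_of_dominated_loc_of_deriv_le (μ := (volume : Measure (Euc n)))
    (F := fun s x => Q (Ht f s x, Ht g s x)) (F' := F') (x₀ := t) (s := Set.Ioo 0 (2 * t))
    (bound := fun x => (M1 * (1 / 2 * C3) + M2 * (1 / 2 * C4)) * (jap x ^ (n + 1))⁻¹)
    (Ioo_mem_nhds ht (by linarith)) ?_ ?_ ?_ ?_ ?_ ?_).2
  · have e : ∫ x, F' t x = -(1 / 2) * ∑ i, ∫ x, hessTerm Q11 Q12 Q22 f g t i x := by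
      have hF2 : ∀ x, F' t x = 1 / 2 * ∑ i, (Q1 (Ht f t x, Ht g t x) * Ht (pd i (pd i f)) t x +
          Q2 (Ht f t x, Ht g t x) * Ht (pd i (pd i g)) t x) := by
        intro x
        simp only [hF', ht_lap hf, ht_lap hg]
        rw [Finset.sum_add_distrib, ← Finset.mul_sum, ← Finset.mul_sum]; ring
      simp_rw [hF2]
      have hi : ∀ {A : ℝ × ℝ → ℝ} (_ : Continuous A) {φ : Euc n → ℝ} (_ : Test φ),
          Integrable fun x => A (Ht f t x, Ht g t x) * Ht φ t x := by
        intro A hA φ hφ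
        obtain ⟨M, hM0, hM⟩ := comp_bdd hf hg hA
        obtain ⟨C, hC, hd⟩ := ht_decay hφ (n + 1) t
        refine int_of_decay (C := M * C) ((hA.comp (ht_pair_cont_x hf hg t)).mul
          (ht_cont_x hφ t)) fun x => ?_
        rw [abs_mul, mul_assoc]
        exact mul_le_mul (hM t x) (hd t le_rfl x) (abs_nonneg _) hM0
      have hs : ∀ i, Integrable fun x => Q1 (Ht f t x, Ht g t x) * Ht (pd i (pd i f)) t x +
          Q2 (Ht f t x, Ht g t x) * Ht (pd i (pd i g)) t x := fun i =>
        (hi c1 ((hf.pd i).pd i)).add (hi c2 ((hg.pd i).pd i))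
      rw [integral_const_mul, integral_finsetSum _ fun i _ => hs i, neg_mul, ← mul_neg,
        ← Finset.sum_neg_distrib]
      congr 1
      refine Finset.sum_congr rfl fun i _ => ?_
      rw [integral_add (hi c1 ((hf.pd i).pd i)) (hi c2 ((hg.pd i).pd i)),
        ht_ibp hQ.d1 hQ.c11 hQ.c12 hf hg (hf.pd i), ht_ibp hQ.d2 hQ.c12 hQ.c22 hf hg (hg.pd i),
        ← neg_add, ← integral_add]
      · congr 2
        funext x
        unfold hessTerm; ring
      · have h1 := prod_decay hf hg hQ.c11 (hf.pd i) (hf.pd i) t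
        have h2 := prod_decay hf hg hQ.c12 (hg.pd i) (hf.pd i) t
        refine (h1.add h2).congr (ae_of_all _ fun x => ?_)
        simp only [Pi.add_apply]; ring
      · have h1 := prod_decay hf hg hQ.c12 (hf.pd i) (hg.pd i) t
        have h2 := prod_decay hf hg hQ.c22 (hg.pd i) (hg.pd i) t
        refine (h1.add h2).congr (ae_of_all _ fun x => ?_)
        simp only [Pi.add_apply]; ring
    rw [← e]; exact hmain
  · exact Eventually.of_forall fun s => (c0.comp (ht_pair_cont_x hf hg s)).aestronglyMeasurable
  · refine int_of_decay (C := M * (C1 + C2)) (c0.comp (ht_pair_cont_x hf hg t)) fun x => ?_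
    refine (hM t x).trans ?_
    rw [mul_assoc, add_mul]
    exact mul_le_mul_of_nonneg_left (add_le_add (hd1 t le_rfl x) (hd2 t le_rfl x)) hM0
  · exact (((c1.comp (ht_pair_cont_x hf hg t)).mul (continuous_const.mul (ht_cont_x hf.lap t))).add
      ((c2.comp (ht_pair_cont_x hf hg t)).mul
        (continuous_const.mul (ht_cont_x hg.lap t)))).aestronglyMeasurable
  · refine ae_of_all _ fun x s hs => ?_
    have hs2 : s ≤ 2 * t := hs.2.le
    rw [add_mul, mul_assoc, mul_assoc, mul_assoc, mul_assoc]
    refine (norm_add_le _ _).trans (add_le_add ?_ ?_)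
    · rw [norm_mul, norm_mul]
      refine mul_le_mul (hM1 s x) ?_ (by positivity) hM10
      rw [Real.norm_of_nonneg (by norm_num : (0 : ℝ) ≤ 1 / 2)]
      exact mul_le_mul_of_nonneg_left (hd3 s hs2 x) (by norm_num)
    · rw [norm_mul, norm_mul]
      refine mul_le_mul (hM2 s x) ?_ (by positivity) hM20
      rw [Real.norm_of_nonneg (by norm_num : (0 : ℝ) ≤ 1 / 2)]
      exact mul_le_mul_of_nonneg_left (hd4 s hs2 x) (by norm_num)
  · exact (jap_pow_integrable (n := n) (k := n + 1) (by omega)).const_mul _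
  · refine ae_of_all _ fun x s hs => ?_
    have h := (hQ.d0 (Ht f s x, Ht g s x)).comp_hasDerivAt s
      ((ht_deriv hf hs.1 x).prodMk (ht_deriv hg hs.1 x))
    have h' : HasDerivAt (fun s => Q (Ht f s x, Ht g s x)) _ s := h
    simpa [hF'] using h'

lemma flow_continuousOn {Q Q1 Q2 Q11 Q12 Q22 : ℝ × ℝ → ℝ} (hQ : C2Fn Q Q1 Q2 Q11 Q12 Q22)
    {f g : Euc n → ℝ} (hf : Test f) (hg : Test g) :
    Continuous (fun t => ∫ x, Q (Ht f t x, Ht g t x)) := by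
  have c0 : Continuous Q := continuous_iff_continuousAt.2 fun z => (hQ.d0 z).continuousAt
  obtain ⟨M, hM0, hM⟩ := hQ.lip hf hg
  refine continuous_iff_continuousAt.2 fun t => ?_
  obtain ⟨C1, hC1, hd1⟩ := ht_decay hf (n + 1) (t + 1)
  obtain ⟨C2, hC2, hd2⟩ := ht_decay hg (n + 1) (t + 1)
  refine continuousAt_of_dominated (bound := fun x => M * (C1 + C2) * (jap x ^ (n + 1))⁻¹) ?_ ?_ ?_ ?_
  · exact Eventually.of_forall fun s => (c0.comp (ht_pair_cont_x hf hg s)).aestronglyMeasurable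
  · filter_upwards [Iio_mem_nhds (show t < t + 1 by linarith)] with s hs
    refine ae_of_all _ fun x => ?_
    have hs : s < t + 1 := hs
    refine (hM s x).trans ?_
    rw [mul_assoc, add_mul]
    exact mul_le_mul_of_nonneg_left (add_le_add (hd1 s hs.le x) (hd2 s hs.le x)) hM0
  · exact (jap_pow_integrable (n := n) (k := n + 1) (by omega)).const_mul _
  · refine ae_of_all _ fun x => ?_
    exact (c0.comp ((ht_pair_cont hf hg).comp (Continuous.prodMk_left x))).continuousAt

end

/-! ### A regularised Bellman function -/

section

/-- The regularised power `(s² + e²)^{r/2}`. -/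
def pw (r e s : ℝ) : ℝ := (s ^ 2 + e ^ 2) ^ (r / 2)

/-- First derivative of `pw r e`. -/
def pw1 (r e s : ℝ) : ℝ := r * s * (s ^ 2 + e ^ 2) ^ (r / 2 - 1)

/-- Second derivative of `pw r e`. -/
def pw2 (r e s : ℝ) : ℝ :=
  r * (s ^ 2 + e ^ 2) ^ (r / 2 - 1) + r * (r - 2) * s ^ 2 * (s ^ 2 + e ^ 2) ^ (r / 2 - 2)

variable {r e s : ℝ}

lemma base_pos (he : 0 < e) (s : ℝ) : 0 < s ^ 2 + e ^ 2 := by positivity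

lemma pw_pos (he : 0 < e) : 0 < pw r e s := Real.rpow_pos_of_pos (base_pos he s) _

lemma pw_hasDerivAt (he : 0 < e) (r s : ℝ) : HasDerivAt (pw r e) (pw1 r e s) s := by
  have h := ((hasDerivAt_pow 2 s).add_const (e ^ 2)).rpow_const (p := r / 2)
    (Or.inl (base_pos he s).ne')
  refine h.congr_deriv ?_
  unfold pw1; push_cast; ring

lemma pw1_hasDerivAt (he : 0 < e) (r s : ℝ) : HasDerivAt (pw1 r e) (pw2 r e s) s := by
  have h := ((hasDerivAt_id s).const_mul r).mul
    (((hasDerivAt_pow 2 s).add_const (e ^ 2)).rpow_const (p := r / 2 - 1)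
    (Or.inl (base_pos he s).ne'))
  refine h.congr_deriv ?_
  unfold pw2
  rw [show r / 2 - 1 - 1 = r / 2 - 2 by ring]
  simp only [id]
  push_cast; ring

lemma pw2_cont (he : 0 < e) (r : ℝ) : Continuous (pw2 r e) := by
  have h : ∀ k : ℝ, Continuous fun s : ℝ => (s ^ 2 + e ^ 2) ^ k := fun k =>
    ((continuous_pow 2).add continuous_const).rpow_const fun s => Or.inl (base_pos he s).ne'
  unfold pw2
  exact (continuous_const.mul (h _)).add ((continuous_const.mul (continuous_pow 2)).mul (h _))

lemma pw_ge_zero (he : 0 < e) (hr : 0 ≤ r) : pw r e 0 ≤ pw r e s := by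
  unfold pw
  exact Real.rpow_le_rpow (by positivity) (by nlinarith [sq_nonneg s]) (by positivity)

lemma pw1_mul (he : 0 < e) (hr : 0 ≤ r) : 0 ≤ s * pw1 r e s ∧ s * pw1 r e s ≤ r * pw r e s := by
  have hb := base_pos he s
  have e1 : s * pw1 r e s = r * (s ^ 2 * (s ^ 2 + e ^ 2) ^ (r / 2 - 1)) := by unfold pw1; ring
  have e2 : pw r e s = (s ^ 2 + e ^ 2) * (s ^ 2 + e ^ 2) ^ (r / 2 - 1) := by
    unfold pw
    nth_rw 2 [← Real.rpow_one (s ^ 2 + e ^ 2)]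
    rw [← Real.rpow_add hb]; ring_nf
  rw [e1, e2]
  have : 0 < (s ^ 2 + e ^ 2) ^ (r / 2 - 1) := Real.rpow_pos_of_pos hb _
  refine ⟨by positivity, mul_le_mul_of_nonneg_left (mul_le_mul_of_nonneg_right ?_ this.le) hr⟩
  nlinarith [sq_nonneg e]

lemma sq_le_pw (he : 0 < e) (hr : 0 < r) : s ^ 2 ≤ pw r e s ^ (2 / r) := by
  unfold pw
  rw [← Real.rpow_mul (base_pos he s).le, show r / 2 * (2 / r) = 1 by field_simp, Real.rpow_one]
  nlinarith [sq_nonneg e]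

lemma pw1_sq (he : 0 < e) :
    pw1 r e s ^ 2 ≤ r ^ 2 * ((s ^ 2 + e ^ 2) ^ (r / 2 - 1) * pw r e s) := by
  have hb := base_pos he s
  have hB : 0 < (s ^ 2 + e ^ 2) ^ (r / 2 - 1) := Real.rpow_pos_of_pos hb _
  have e2 : pw r e s = (s ^ 2 + e ^ 2) * (s ^ 2 + e ^ 2) ^ (r / 2 - 1) := by
    unfold pw
    nth_rw 2 [← Real.rpow_one (s ^ 2 + e ^ 2)]
    rw [← Real.rpow_add hb]; ring_nf
  rw [e2]; unfold pw1
  set B := (s ^ 2 + e ^ 2) ^ (r / 2 - 1)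
  have : 0 ≤ r ^ 2 * B ^ 2 * e ^ 2 := by positivity
  nlinarith

/-- Pointwise Hessian bound behind the Bellman function, in terms of the values of the
one-variable building blocks. -/
lemma hess_alg {p q θ κ S ζ a1 a2 b1 b2 B X X1 X2 x y : ℝ} (hp : 2 < p) (hq : 1 < q)
    (hθ0 : 0 < θ) (hθ1 : 1 - θ = 2 / p) (hS : 0 < S) (hX : 0 < X) (hX1 : X1 * S = X)
    (hX2 : X2 * S = X1) (ha0 : 0 ≤ ζ * a1) (ha1 : ζ * a1 ≤ p * S) (ha2 : 0 ≤ a2)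
    (hζ : ζ ^ 2 * X ≤ S) (hb1 : b1 ^ 2 ≤ q ^ 2 * (B * S))
    (hb1' : (ζ * b1 * X1) ^ 2 ≤ q ^ 2)
    (hb2 : q * (q - 1) * B ≤ b2) (hB : 1 ≤ B * X) (hκ : 0 < κ)
    (hk1 : 2 * κ * q * θ ≤ q - 1)
    (hk2 : κ * (64 * θ ^ 2 * q ^ 2) ≤ q * (q - 1)) (hk3 : 4 * κ ≤ q * (q - 1)) :
    κ * (X * x ^ 2 + X⁻¹ * y ^ 2) ≤
      (a2 + κ * (2 * X + 4 * θ * (ζ * a1) * X1 + θ * (θ - 1) * (ζ * a1) ^ 2 * X2 +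
          θ * ζ ^ 2 * X1 * a2)) * x ^ 2 +
      2 * (κ * (2 * θ * ζ * X1 * b1 + θ * (θ - 1) * ζ ^ 2 * X2 * a1 * b1)) * (x * y) +
      (b2 + κ * (θ * (θ - 1) * ζ ^ 2 * X2 * b1 ^ 2 + θ * ζ ^ 2 * X1 * b2)) * y ^ 2 := by
  have hX1p : 0 < X1 := by
    by_contra h; push Not at h; nlinarith
  have hX2p : 0 < X2 := by
    by_contra h; push Not at h; nlinarith
  have hp0 : 0 < p := by linarith
  have h1θ : 0 < 1 - θ := by rw [hθ1]; positivity
  have hθp : (1 - θ) * p = 2 := by rw [hθ1]; field_simp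
  have hBp : 0 < B := by
    by_contra h; push Not at h; nlinarith
  have hb2p : 0 ≤ b2 := le_trans (by have := sub_pos.2 hq; positivity) hb2
  -- the coefficient of `x²`
  have k1 : (1 - θ) * (ζ * a1) ^ 2 * X2 ≤ 2 * (ζ * a1) * X1 := by
    have : (1 - θ) * (ζ * a1) * (ζ * a1) * X2 ≤ (1 - θ) * (ζ * a1) * (p * S) * X2 := by
      have : 0 ≤ (1 - θ) * (ζ * a1) := by positivity
      gcongr
    calc (1 - θ) * (ζ * a1) ^ 2 * X2 = (1 - θ) * (ζ * a1) * (ζ * a1) * X2 := by ring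
      _ ≤ _ := this
      _ = ((1 - θ) * p) * (ζ * a1) * (X2 * S) := by ring
      _ = _ := by rw [hθp, hX2]
  have c11 : 2 * κ * X ≤ a2 + κ * (2 * X + 4 * θ * (ζ * a1) * X1 +
      θ * (θ - 1) * (ζ * a1) ^ 2 * X2 + θ * ζ ^ 2 * X1 * a2) := by
    have h1 : 0 ≤ 4 * θ * (ζ * a1) * X1 + θ * (θ - 1) * (ζ * a1) ^ 2 * X2 := by
      have h2 := mul_le_mul_of_nonneg_left k1 hθ0.le
      have h3 : 0 ≤ θ * ((ζ * a1) * X1) := by positivity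
      linear_combination h2 + 2 * h3
    have h4 : 0 ≤ θ * ζ ^ 2 * X1 * a2 := by positivity
    have h5 := mul_nonneg hκ.le (add_nonneg h1 h4)
    linear_combination h5 + ha2
  -- the mixed coefficient
  have c12 : (2 * θ * ζ * X1 * b1 + θ * (θ - 1) * ζ ^ 2 * X2 * a1 * b1) ^ 2 ≤ (2 * θ * q) ^ 2 := by
    have e1 : 2 * θ * ζ * X1 * b1 + θ * (θ - 1) * ζ ^ 2 * X2 * a1 * b1 =
        θ * (2 - (1 - θ) * (ζ * a1) / S) * (ζ * b1 * X1) := by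
      rw [← hX2]; field_simp; ring
    have h0 : 0 ≤ (1 - θ) * (ζ * a1) / S := by positivity
    have h1 : (1 - θ) * (ζ * a1) / S ≤ 2 := by
      rw [div_le_iff₀ hS]
      calc (1 - θ) * (ζ * a1) ≤ (1 - θ) * (p * S) := by gcongr
        _ = 2 * S := by rw [← mul_assoc, hθp]
    rw [e1, mul_pow, mul_pow]
    have h2 : (2 - (1 - θ) * (ζ * a1) / S) ^ 2 ≤ 2 ^ 2 := by
      apply pow_le_pow_left₀ <;> linarith
    calc θ ^ 2 * (2 - (1 - θ) * (ζ * a1) / S) ^ 2 * (ζ * b1 * X1) ^ 2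
        ≤ θ ^ 2 * 2 ^ 2 * q ^ 2 := by gcongr
      _ = _ := by ring
  -- the coefficient of `y²`
  have c22 : q * (q - 1) / 2 * X⁻¹ ≤
      b2 + κ * (θ * (θ - 1) * ζ ^ 2 * X2 * b1 ^ 2 + θ * ζ ^ 2 * X1 * b2) := by
    have h1 : (1 - θ) * (ζ ^ 2 * X2 * b1 ^ 2) ≤ q ^ 2 * B := by
      have e1 : ζ ^ 2 * X2 * (S * S) = ζ ^ 2 * X := by rw [← hX1, ← hX2]; ring
      have h2 : ζ ^ 2 * X2 * S ≤ 1 := by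
        have : ζ ^ 2 * X2 * S * S ≤ 1 * S := by nlinarith
        exact le_of_mul_le_mul_right this hS
      have h3 : ζ ^ 2 * X2 * b1 ^ 2 ≤ q ^ 2 * B := by
        calc ζ ^ 2 * X2 * b1 ^ 2 ≤ ζ ^ 2 * X2 * (q ^ 2 * (B * S)) := by gcongr
          _ = (ζ ^ 2 * X2 * S) * (q ^ 2 * B) := by ring
          _ ≤ 1 * (q ^ 2 * B) := by gcongr
          _ = _ := one_mul _
      have h4 : 0 ≤ ζ ^ 2 * X2 * b1 ^ 2 := by positivity
      have h5 := mul_nonneg hθ0.le h4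
      linear_combination h3 + h5
    have h5 : 0 ≤ θ * ζ ^ 2 * X1 * b2 := by positivity
    have h6 : κ * (θ * ((1 - θ) * (ζ ^ 2 * X2 * b1 ^ 2))) ≤ q * (q - 1) / 2 * B := by
      calc κ * (θ * ((1 - θ) * (ζ ^ 2 * X2 * b1 ^ 2))) ≤ κ * (θ * (q ^ 2 * B)) := by gcongr
        _ = (2 * κ * q * θ) * (q / 2 * B) := by ring
        _ ≤ (q - 1) * (q / 2 * B) := by gcongr
        _ = _ := by ring
    have h7 : X⁻¹ ≤ B := by
      rw [inv_le_iff_one_le_mul₀ hX]; exact hB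
    have h8 : 0 < q * (q - 1) / 2 := by have := sub_pos.2 hq; positivity
    have h9 := mul_le_mul_of_nonneg_left h7 h8.le
    have h10 := mul_nonneg hκ.le h5
    linear_combination h9 + hb2 + h6 + h10
  set C12 := 2 * θ * ζ * X1 * b1 + θ * (θ - 1) * ζ ^ 2 * X2 * a1 * b1 with hC12
  have m1 : -(κ * X * x ^ 2 + κ * (2 * θ * q) ^ 2 * X⁻¹ * y ^ 2) ≤ 2 * (κ * C12) * (x * y) := by
    have h1 : 0 ≤ κ * X * (x + C12 * X⁻¹ * y) ^ 2 := by positivity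
    have e1 : κ * X * (x + C12 * X⁻¹ * y) ^ 2 =
        κ * X * x ^ 2 + 2 * (κ * C12) * (x * y) + κ * C12 ^ 2 * X⁻¹ * y ^ 2 := by
      field_simp; ring
    have h2 : κ * C12 ^ 2 * X⁻¹ * y ^ 2 ≤ κ * (2 * θ * q) ^ 2 * X⁻¹ * y ^ 2 := by gcongr
    linarith
  have m2 := mul_le_mul_of_nonneg_right c11 (sq_nonneg x)
  have m3 := mul_le_mul_of_nonneg_right c22 (sq_nonneg y)
  have hXi : 0 < X⁻¹ := by positivity
  have m4 : (κ + κ * (2 * θ * q) ^ 2) * (X⁻¹ * y ^ 2) ≤ q * (q - 1) / 2 * (X⁻¹ * y ^ 2) := by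
    refine mul_le_mul_of_nonneg_right ?_ (by positivity)
    have hqq : 0 ≤ q * (q - 1) := by have := sub_pos.2 hq; positivity
    linear_combination hk3 / 4 + hk2 / 16 + 3 / 16 * hqq
  linear_combination m1 + m2 + m3 + m4

/-- `S = (ζ² + e²)^{p/2} + (η² + e²)^{q/2}`. -/
def Sb (p q e : ℝ) (z : ℝ × ℝ) : ℝ := pw p e z.1 + pw q e z.2

/-- The regularised Bellman function
`(ζ² + e²)^{p/2} + (η² + e²)^{q/2} + κ ζ² S^θ`, normalised to vanish at the origin. -/
def Bel (p q θ κ e : ℝ) (z : ℝ × ℝ) : ℝ :=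
  (pw p e z.1 - pw p e 0) + (pw q e z.2 - pw q e 0) + κ * (z.1 ^ 2 * Sb p q e z ^ θ)

/-- The partial derivative `∂_ζ` of `Bel`. -/
def Bel1 (p q θ κ e : ℝ) (z : ℝ × ℝ) : ℝ :=
  pw1 p e z.1 + κ * (2 * z.1 * Sb p q e z ^ θ + θ * z.1 ^ 2 * Sb p q e z ^ (θ - 1) * pw1 p e z.1)

/-- The partial derivative `∂_η` of `Bel`. -/
def Bel2 (p q θ κ e : ℝ) (z : ℝ × ℝ) : ℝ :=
  pw1 q e z.2 + κ * (θ * z.1 ^ 2 * Sb p q e z ^ (θ - 1) * pw1 q e z.2)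

/-- The second partial derivative `∂_ζ ∂_ζ` of `Bel`. -/
def Bel11 (p q θ κ e : ℝ) (z : ℝ × ℝ) : ℝ :=
  pw2 p e z.1 + κ * (2 * Sb p q e z ^ θ + 4 * θ * (z.1 * pw1 p e z.1) * Sb p q e z ^ (θ - 1) +
    θ * (θ - 1) * (z.1 * pw1 p e z.1) ^ 2 * Sb p q e z ^ (θ - 2) +
    θ * z.1 ^ 2 * Sb p q e z ^ (θ - 1) * pw2 p e z.1)

/-- The mixed partial derivative `∂_ζ ∂_η` of `Bel`. -/
def Bel12 (p q θ κ e : ℝ) (z : ℝ × ℝ) : ℝ :=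
  κ * (2 * θ * z.1 * Sb p q e z ^ (θ - 1) * pw1 q e z.2 +
    θ * (θ - 1) * z.1 ^ 2 * Sb p q e z ^ (θ - 2) * pw1 p e z.1 * pw1 q e z.2)

/-- The second partial derivative `∂_η ∂_η` of `Bel`. -/
def Bel22 (p q θ κ e : ℝ) (z : ℝ × ℝ) : ℝ :=
  pw2 q e z.2 + κ * (θ * (θ - 1) * z.1 ^ 2 * Sb p q e z ^ (θ - 2) * pw1 q e z.2 ^ 2 +
    θ * z.1 ^ 2 * Sb p q e z ^ (θ - 1) * pw2 q e z.2)

lemma Sb_pos {p q : ℝ} (he : 0 < e) (z : ℝ × ℝ) : 0 < Sb p q e z := add_pos (pw_pos he) (pw_pos he)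

lemma hasFDerivAt_comp_fst {f : ℝ → ℝ} {f' : ℝ} {z : ℝ × ℝ} (h : HasDerivAt f f' z.1) :
    HasFDerivAt (fun z : ℝ × ℝ => f z.1) (f' • ContinuousLinearMap.fst ℝ ℝ ℝ) z :=
  h.comp_hasFDerivAt z hasFDerivAt_fst

lemma hasFDerivAt_comp_snd {f : ℝ → ℝ} {f' : ℝ} {z : ℝ × ℝ} (h : HasDerivAt f f' z.2) :
    HasFDerivAt (fun z : ℝ × ℝ => f z.2) (f' • ContinuousLinearMap.snd ℝ ℝ ℝ) z :=
  h.comp_hasFDerivAt z hasFDerivAt_snd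

lemma Sb_rpow_hasFDerivAt {p q : ℝ} (he : 0 < e) (k : ℝ) (z : ℝ × ℝ) :
    HasFDerivAt (fun z => Sb p q e z ^ k) ((k * Sb p q e z ^ (k - 1)) •
      (pw1 p e z.1 • ContinuousLinearMap.fst ℝ ℝ ℝ +
        pw1 q e z.2 • ContinuousLinearMap.snd ℝ ℝ ℝ)) z := by
  have h : HasFDerivAt (Sb p q e) _ z := (hasFDerivAt_comp_fst (pw_hasDerivAt he p z.1)).add
    (hasFDerivAt_comp_snd (pw_hasDerivAt he q z.2))
  exact h.rpow_const (Or.inl (Sb_pos he z).ne')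

lemma bel_c2 (p q θ κ : ℝ) (he : 0 < e) : C2Fn (Bel p q θ κ e) (Bel1 p q θ κ e) (Bel2 p q θ κ e)
    (Bel11 p q θ κ e) (Bel12 p q θ κ e) (Bel22 p q θ κ e) := by
  have hSc : ∀ k : ℝ, Continuous fun z => Sb p q e z ^ k := fun k =>
    continuous_iff_continuousAt.2 fun z => (Sb_rpow_hasFDerivAt he k z).continuousAt
  have c1 : ∀ r, Continuous (pw1 r e) := fun r =>
    continuous_iff_continuousAt.2 fun s => (pw1_hasDerivAt he r s).continuousAt
  have c2 : ∀ r, Continuous (pw2 r e) := pw2_cont he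
  have hsq : ∀ z : ℝ × ℝ, HasFDerivAt (fun z : ℝ × ℝ => z.1 ^ 2)
      ((2 * z.1) • ContinuousLinearMap.fst ℝ ℝ ℝ) z := fun z =>
    hasFDerivAt_comp_fst (f := fun s => s ^ 2) (by simpa using hasDerivAt_pow 2 z.1)
  have hlin : ∀ z : ℝ × ℝ, HasFDerivAt (fun z : ℝ × ℝ => 2 * z.1)
      ((2 : ℝ) • ContinuousLinearMap.fst ℝ ℝ ℝ) z := fun z =>
    hasFDerivAt_comp_fst (f := fun s => 2 * s) (by simpa using (hasDerivAt_id z.1).const_mul 2)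
  have e1 : θ - 1 - 1 = θ - 2 := by ring
  refine ⟨fun z => ?_, fun z => ?_, fun z => ?_, ?_, ?_, ?_, ?_⟩
  · have h := (((hasFDerivAt_comp_fst (pw_hasDerivAt he p z.1)).sub_const (pw p e 0)).add
      ((hasFDerivAt_comp_snd (pw_hasDerivAt he q z.2)).sub_const (pw q e 0))).add
      (((hsq z).mul (Sb_rpow_hasFDerivAt (p := p) (q := q) he θ z)).const_mul κ)
    refine HasFDerivAt.congr_fderiv h ?_
    ext <;> simp [-mul_eq_mul_left_iff, -add_right_inj, -add_left_inj, Bel1, Bel2] <;> ring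
  · have h := (hasFDerivAt_comp_fst (pw1_hasDerivAt he p z.1)).add
      ((((hlin z).mul (Sb_rpow_hasFDerivAt (p := p) (q := q) he θ z)).add
        ((((hsq z).const_mul θ).mul (Sb_rpow_hasFDerivAt (p := p) (q := q) he (θ - 1) z)).mul
          (hasFDerivAt_comp_fst (pw1_hasDerivAt he p z.1)))).const_mul κ)
    refine HasFDerivAt.congr_fderiv h ?_
    ext <;> simp [-mul_eq_mul_left_iff, -add_right_inj, -add_left_inj, Bel11, Bel12, e1] <;> ring
  · have h := (hasFDerivAt_comp_snd (pw1_hasDerivAt he q z.2)).add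
      (((((hsq z).const_mul θ).mul (Sb_rpow_hasFDerivAt (p := p) (q := q) he (θ - 1) z)).mul
          (hasFDerivAt_comp_snd (pw1_hasDerivAt he q z.2))).const_mul κ)
    refine HasFDerivAt.congr_fderiv h ?_
    ext <;> simp [-mul_eq_mul_left_iff, -add_right_inj, -add_left_inj, Bel12, Bel22, e1] <;> ring
  · have h0 := hSc θ
    have h1 := hSc (θ - 1)
    have h2 := hSc (θ - 2)
    have h3 := c1 p
    have h4 := c2 p
    unfold Bel11; fun_prop
  · have h1 := hSc (θ - 1)
    have h2 := hSc (θ - 2)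
    have h3 := c1 p
    have h4 := c1 q
    unfold Bel12; fun_prop
  · have h1 := hSc (θ - 1)
    have h2 := hSc (θ - 2)
    have h3 := c1 q
    have h4 := c2 q
    unfold Bel22; fun_prop
  · simp [Bel]

lemma bel_nonneg {p q θ κ : ℝ} (he : 0 < e) (hp : 0 ≤ p) (hq : 0 ≤ q) (hκ : 0 ≤ κ) (z : ℝ × ℝ) :
    0 ≤ Bel p q θ κ e z := by
  have h1 := pw_ge_zero (s := z.1) he hp
  have h2 := pw_ge_zero (s := z.2) he hq
  have h3 := Real.rpow_nonneg (Sb_pos (p := p) (q := q) he z).le θ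
  have : 0 ≤ κ * (z.1 ^ 2 * Sb p q e z ^ θ) := by positivity
  unfold Bel; linarith

lemma sq_mul_Sb {p q θ : ℝ} (he : 0 < e) (hp : 0 < p) (hθ1 : 1 - θ = 2 / p) (z : ℝ × ℝ) :
    z.1 ^ 2 * Sb p q e z ^ θ ≤ Sb p q e z := by
  have hS := Sb_pos (p := p) (q := q) he z
  have h1 : z.1 ^ 2 ≤ Sb p q e z ^ (2 / p) := (sq_le_pw he hp).trans
    (Real.rpow_le_rpow (pw_pos he).le (by unfold Sb; linarith [pw_pos (r := q) (s := z.2) he])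
      (by positivity))
  calc z.1 ^ 2 * Sb p q e z ^ θ ≤ Sb p q e z ^ (2 / p) * Sb p q e z ^ θ :=
        mul_le_mul_of_nonneg_right h1 (Real.rpow_nonneg hS.le _)
    _ = Sb p q e z := by rw [← Real.rpow_add hS, ← hθ1]; simp

lemma bel_le {p q θ κ : ℝ} (he : 0 < e) (hp : 0 < p) (hθ1 : 1 - θ = 2 / p) (hκ : 0 ≤ κ)
    (z : ℝ × ℝ) : Bel p q θ κ e z ≤ (1 + κ) * Sb p q e z := by
  have h := mul_le_mul_of_nonneg_left (sq_mul_Sb (q := q) he hp hθ1 z) hκ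
  have h1 := pw_pos (r := p) (s := 0) he
  have h2 := pw_pos (r := q) (s := 0) he
  have e1 : Sb p q e z = pw p e z.1 + pw q e z.2 := rfl
  unfold Bel; linarith

/-- Quantitative convexity of the Bellman function. -/
lemma bel_hess {p q θ κ : ℝ} (he : 0 < e) (hp : 2 < p) (hq1 : 1 < q) (hq2 : q < 2)
    (hθ0 : 0 < θ) (hθ1 : 1 - θ = 2 / p) (hθ2 : θ = 2 / q - 1) (hκ : 0 < κ)
    (hk1 : 2 * κ * q * θ ≤ q - 1)
    (hk2 : κ * (64 * θ ^ 2 * q ^ 2) ≤ q * (q - 1)) (hk3 : 4 * κ ≤ q * (q - 1)) (z : ℝ × ℝ) :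
    ∃ m > 0, ∀ x y : ℝ, κ * (m * x ^ 2 + m⁻¹ * y ^ 2) ≤
      Bel11 p q θ κ e z * x ^ 2 + 2 * Bel12 p q θ κ e z * (x * y) + Bel22 p q θ κ e z * y ^ 2 := by
  have hS := Sb_pos (p := p) (q := q) he z
  have hp0 : 0 < p := by linarith
  have hq0 : 0 < q := by linarith
  have hbp := pw_pos (r := q) (s := z.2) he
  have hap := pw_pos (r := p) (s := z.1) he
  have hbS : pw q e z.2 ≤ Sb p q e z := by unfold Sb; linarith
  have haS : pw p e z.1 ≤ Sb p q e z := by unfold Sb; linarith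
  have hB := base_pos he z.2
  have hBp : 0 < (z.2 ^ 2 + e ^ 2) ^ (q / 2 - 1) := Real.rpow_pos_of_pos hB _
  have hb1 : pw1 q e z.2 ^ 2 ≤ q ^ 2 * ((z.2 ^ 2 + e ^ 2) ^ (q / 2 - 1) * Sb p q e z) :=
    (pw1_sq he).trans (by gcongr)
  have hX1 : Sb p q e z ^ (θ - 1) * Sb p q e z = Sb p q e z ^ θ := by
    rw [Real.rpow_sub_one hS.ne']; field_simp
  have hX2 : Sb p q e z ^ (θ - 2) * Sb p q e z = Sb p q e z ^ (θ - 1) := by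
    rw [show θ - 2 = θ - 1 - 1 by ring, Real.rpow_sub_one hS.ne' (θ - 1)]; field_simp
  have hsq := sq_mul_Sb (q := q) he hp0 hθ1 z
  -- `(η² + e²)^{q/2 - 1} = b^{-θ}` with `b = (η² + e²)^{q/2}`
  have hBb : (z.2 ^ 2 + e ^ 2) ^ (q / 2 - 1) = pw q e z.2 ^ (-θ) := by
    unfold pw
    rw [← Real.rpow_mul hB.le, hθ2]; congr 1; field_simp; ring
  have hb1' : (z.1 * pw1 q e z.2 * Sb p q e z ^ (θ - 1)) ^ 2 ≤ q ^ 2 := by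
    have h1 : pw1 q e z.2 ^ 2 ≤ q ^ 2 * Sb p q e z ^ (1 - θ) := by
      refine (pw1_sq he).trans ?_
      rw [hBb]
      have : pw q e z.2 ^ (-θ) * pw q e z.2 = pw q e z.2 ^ (1 - θ) := by
        rw [sub_eq_add_neg, add_comm, Real.rpow_add_one hbp.ne']
      rw [this]
      have : 0 ≤ 1 - θ := by rw [hθ1]; positivity
      gcongr
    have h2 : z.1 ^ 2 ≤ Sb p q e z ^ (1 - θ) := by
      rw [hθ1]
      exact (sq_le_pw he hp0).trans (Real.rpow_le_rpow hap.le haS (by positivity))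
    calc (z.1 * pw1 q e z.2 * Sb p q e z ^ (θ - 1)) ^ 2
        = z.1 ^ 2 * pw1 q e z.2 ^ 2 * (Sb p q e z ^ (θ - 1)) ^ 2 := by ring
      _ ≤ Sb p q e z ^ (1 - θ) * (q ^ 2 * Sb p q e z ^ (1 - θ)) * (Sb p q e z ^ (θ - 1)) ^ 2 := by
          gcongr
      _ = q ^ 2 * (Sb p q e z ^ (1 - θ) * Sb p q e z ^ (θ - 1)) ^ 2 := by ring
      _ = q ^ 2 := by rw [← Real.rpow_add hS]; simp
  refine ⟨Sb p q e z ^ θ, Real.rpow_pos_of_pos hS _, fun x y => ?_⟩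
  refine hess_alg (B := (z.2 ^ 2 + e ^ 2) ^ (q / 2 - 1)) hp hq1 hθ0 hθ1 hS
    (Real.rpow_pos_of_pos hS _) hX1 hX2 (pw1_mul he hp0.le).1
    ((pw1_mul he hp0.le).2.trans (by gcongr)) ?_ hsq hb1 hb1' ?_ ?_ hκ hk1 hk2 hk3
  · have h1 : 0 < (z.1 ^ 2 + e ^ 2) ^ (p / 2 - 1) := Real.rpow_pos_of_pos (base_pos he _) _
    have h2 : 0 < (z.1 ^ 2 + e ^ 2) ^ (p / 2 - 2) := Real.rpow_pos_of_pos (base_pos he _) _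
    have h3 : 0 < p - 2 := by linarith
    unfold pw2; positivity
  · have h2 : 0 < (z.2 ^ 2 + e ^ 2) ^ (q / 2 - 2) := Real.rpow_pos_of_pos hB _
    have e2 : (z.2 ^ 2 + e ^ 2) ^ (q / 2 - 1) =
        (z.2 ^ 2 + e ^ 2) * (z.2 ^ 2 + e ^ 2) ^ (q / 2 - 2) := by
      nth_rw 2 [← Real.rpow_one (z.2 ^ 2 + e ^ 2)]
      rw [← Real.rpow_add hB]; ring_nf
    unfold pw2
    rw [e2]
    have h3 : 0 ≤ q * (2 - q) * e ^ 2 * (z.2 ^ 2 + e ^ 2) ^ (q / 2 - 2) := by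
      have : 0 < 2 - q := by linarith
      positivity
    linear_combination h3
  · rw [hBb, Real.rpow_neg hbp.le, inv_mul_eq_div, one_le_div (Real.rpow_pos_of_pos hbp _)]
    exact Real.rpow_le_rpow hbp.le hbS hθ0.le

end

/-! ### The bilinear embedding and the `L^p` bound for second derivatives -/

section
variable {n : ℕ}

lemma ht_ibp' {φ ψ : Euc n → ℝ} (hφ : Test φ) (hψ : Test ψ) (t : ℝ) (i : Fin n) :
    ∫ x, Ht φ t x * Ht (pd i ψ) t x = - ∫ x, Ht (pd i φ) t x * Ht ψ t x := by
  have h := ht_ibp (A := fun z => z.1) (A1 := fun _ => 1) (A2 := fun _ => 0) (fun z => by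
    simpa using (hasFDerivAt_fst : HasFDerivAt (fun z : ℝ × ℝ => z.1) _ z))
    continuous_const continuous_const hφ hφ hψ t i
  simpa using h

lemma mul_c2 : C2Fn (fun z => z.1 * z.2) (fun z => z.2) (fun z => z.1) (fun _ => 0) (fun _ => 1)
    (fun _ => 0) := by
  refine ⟨fun z => ?_, fun z => ?_, fun z => ?_, continuous_const, continuous_const,
    continuous_const, by simp⟩
  · have h := (hasFDerivAt_fst (𝕜 := ℝ) (p := z)).mul (hasFDerivAt_snd (𝕜 := ℝ) (p := z))
    refine HasFDerivAt.congr_fderiv h ?_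
    ext <;> simp
  · simpa using (hasFDerivAt_snd : HasFDerivAt (fun z : ℝ × ℝ => z.2) _ z)
  · simpa using (hasFDerivAt_fst : HasFDerivAt (fun z : ℝ × ℝ => z.1) _ z)

lemma ht_mul_integrable {φ ψ : Euc n → ℝ} (hφ : Test φ) (hψ : Test ψ) (t : ℝ) :
    Integrable fun x => Ht φ t x * Ht ψ t x := by
  simpa using prod_decay hφ hψ (A := fun _ => 1) continuous_const hφ hψ t

/-- The heat flow contracts `L¹`. -/
lemma ht_l1 {g : Euc n → ℝ} (hg : Test g) (t : ℝ) : ∫ x, |Ht g t x| ≤ ∫ x, |g x| := by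
  have h1 : ∫⁻ x, ‖Ht g t x‖ₑ ≤ ∫⁻ x, ‖g x‖ₑ := by
    calc ∫⁻ x, ‖Ht g t x‖ₑ ≤ ∫⁻ x, ∫⁻ z, ‖g (x + √t • z) * gau n z‖ₑ :=
          lintegral_mono fun x => enorm_integral_le_lintegral_enorm _
      _ = ∫⁻ z, ∫⁻ x, ‖g (x + √t • z) * gau n z‖ₑ := by
          refine lintegral_lintegral_swap (Continuous.aemeasurable ?_)
          have := hg.cont
          have := gau_cont (n := n)
          simp only [Function.uncurry_def]
          fun_prop
      _ = ∫⁻ z, (∫⁻ x, ‖g x‖ₑ) * ‖gau n z‖ₑ := by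
          refine lintegral_congr fun z => ?_
          simp_rw [enorm_mul]
          rw [lintegral_mul_const']
          · rw [lintegral_add_right_eq_self (fun x => ‖g x‖ₑ)]
          · simp
      _ = (∫⁻ x, ‖g x‖ₑ) * ∫⁻ z, ‖gau n z‖ₑ := by
          rw [lintegral_const_mul']
          have := hg.integrable.2
          exact this.ne
      _ = ∫⁻ x, ‖g x‖ₑ := by
          have : ∫⁻ z, ‖gau n z‖ₑ = 1 := by
            rw [← ofReal_integral_norm_eq_lintegral_enorm gau_integrable]
            simp_rw [Real.norm_of_nonneg (gau_pos _).le, gau_integral]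
            simp
          rw [this, mul_one]
  have hi : Integrable (Ht g t) := by
    obtain ⟨C, hC, hd⟩ := ht_decay hg (n + 1) t
    exact int_of_decay (ht_cont_x hg t) fun x => hd t le_rfl x
  rw [← ofReal_integral_norm_eq_lintegral_enorm hi,
    ← ofReal_integral_norm_eq_lintegral_enorm hg.integrable] at h1
  exact (ENNReal.ofReal_le_ofReal_iff (integral_nonneg fun _ => norm_nonneg _)).1 h1

/-- Bilinear embedding: if `Δh = Σ_k ∂_{a k} ∂_{b k} f_k`, the pairing of `h` with a test function is
controlled by any nonnegative function whose Hessian dominates `κ (m x² + m⁻¹ y²)`. The difference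
of the two sides, evaluated along the heat flow, is nondecreasing in time, and its limit is at most
`0` because `h = ∂_{i0} h1` is a derivative of a test function. -/
lemma bilinear_embedding {Q Q1 Q2 Q11 Q12 Q22 : ℝ × ℝ → ℝ} (hQ : C2Fn Q Q1 Q2 Q11 Q12 Q22)
    (hQ0 : ∀ z, 0 ≤ Q z) {κ : ℝ} (hκ : 0 < κ)
    (hH : ∀ z, ∃ m > 0, ∀ x y : ℝ, κ * (m * x ^ 2 + m⁻¹ * y ^ 2) ≤
      Q11 z * x ^ 2 + 2 * Q12 z * (x * y) + Q22 z * y ^ 2)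
    {ι : Type} [Fintype ι] (a b : ι → Fin n) {f : ι → Euc n → ℝ} (hf : ∀ k, Test (f k))
    {h1 g : Euc n → ℝ} (hh1 : Test h1) (i0 : Fin n) (hg : Test g)
    (hlap : ∀ x, lap (pd i0 h1) x = ∑ k, pd (a k) (pd (b k) (f k)) x) :
    ∫ x, pd i0 h1 x * g x ≤ κ⁻¹ * ∑ k, ∫ x, Q (f k x, g x) := by
  set h := pd i0 h1 with hh_def
  have hh : Test h := hh1.pd i0
  set D : ℝ → ℝ := fun t => (∫ x, Ht h t x * Ht g t x) -
    κ⁻¹ * ∑ k, ∫ x, Q (Ht (f k) t x, Ht g t x) with hD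
  have hDc : Continuous D := (flow_continuousOn mul_c2 hh hg).sub
    (continuous_const.mul (continuous_finsetSum _ fun k _ => flow_continuousOn hQ (hf k) hg))
  have hDd : ∀ t, 0 < t → ∃ d, 0 ≤ d ∧ HasDerivAt D d t := by
    intro t ht
    have d1 := flow_hasDerivAt mul_c2 hh hg ht
    have d2 := fun k => flow_hasDerivAt hQ (hf k) hg ht
    have d3 := d1.sub ((HasDerivAt.fun_sum fun k (_ : k ∈ Finset.univ) => d2 k).const_mul κ⁻¹)
    refine ⟨_, ?_, d3⟩
    have e1 : ∑ i, ∫ x, hessTerm (fun _ => 0) (fun _ => 1) (fun _ => 0) h g t i x =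
        2 * ∑ k, ∫ x, Ht (pd (b k) (f k)) t x * Ht (pd (a k) g) t x := by
      have e2 : ∀ i, ∫ x, hessTerm (fun _ => 0) (fun _ => 1) (fun _ => 0) h g t i x =
          -(2 * ∫ x, Ht (pd i (pd i h)) t x * Ht g t x) := by
        intro i
        have : ∀ x, hessTerm (fun _ => 0) (fun _ => 1) (fun _ => 0) h g t i x =
            2 * (Ht (pd i h) t x * Ht (pd i g) t x) := by intro x; simp [hessTerm]
        simp_rw [this]
        rw [integral_const_mul, ht_ibp' (hh.pd i) hg, mul_neg]
      have e3 : ∀ k, ∫ x, Ht (pd (b k) (f k)) t x * Ht (pd (a k) g) t x =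
          -∫ x, Ht (pd (a k) (pd (b k) (f k))) t x * Ht g t x := fun k =>
        ht_ibp' ((hf k).pd (b k)) hg t (a k)
      simp_rw [e2, e3]
      rw [Finset.sum_neg_distrib, Finset.sum_neg_distrib, ← Finset.mul_sum, mul_neg,
        ← integral_finsetSum _ fun i _ => ht_mul_integrable ((hh.pd i).pd i) hg t,
        ← integral_finsetSum _ fun k _ => ht_mul_integrable (((hf k).pd (b k)).pd (a k)) hg t]
      congr 3
      funext x
      rw [← Finset.sum_mul, ← Finset.sum_mul, ← ht_lap hh]
      congr 1
      rw [show lap h = fun x => ∑ k, pd (a k) (pd (b k) (f k)) x from funext hlap]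
      unfold Ht
      simp_rw [Finset.sum_mul]
      rw [integral_finsetSum _ fun k _ => ht_int (((hf k).pd (b k)).pd (a k)) t x]
    have e4 : ∀ k, 2 * κ * ∫ x, Ht (pd (b k) (f k)) t x * Ht (pd (a k) g) t x ≤
        ∑ i, ∫ x, hessTerm Q11 Q12 Q22 (f k) g t i x := by
      intro k
      rw [← integral_finsetSum _ fun i _ => hessTerm_integrable hQ.c11 hQ.c12 hQ.c22 (hf k) hg t i,
        ← integral_const_mul]
      refine integral_mono ((ht_mul_integrable ((hf k).pd (b k)) (hg.pd (a k)) t).const_mul _)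
        (integrable_finsetSum _ fun i _ =>
          hessTerm_integrable hQ.c11 hQ.c12 hQ.c22 (hf k) hg t i) fun x => ?_
      obtain ⟨m, hm, hmb⟩ := hH (Ht (f k) t x, Ht g t x)
      have k1 : ∀ i, κ * (m * Ht (pd i (f k)) t x ^ 2 + m⁻¹ * Ht (pd i g) t x ^ 2) ≤
          hessTerm Q11 Q12 Q22 (f k) g t i x := fun i => hmb _ _
      have k2 := Finset.sum_le_sum fun i (_ : i ∈ Finset.univ) => k1 i
      refine le_trans ?_ k2
      have k3 : m * Ht (pd (b k) (f k)) t x ^ 2 ≤ ∑ i, m * Ht (pd i (f k)) t x ^ 2 :=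
        Finset.single_le_sum (f := fun i => m * Ht (pd i (f k)) t x ^ 2)
          (fun i _ => by positivity) (Finset.mem_univ (b k))
      have k4 : m⁻¹ * Ht (pd (a k) g) t x ^ 2 ≤ ∑ i, m⁻¹ * Ht (pd i g) t x ^ 2 :=
        Finset.single_le_sum (f := fun i => m⁻¹ * Ht (pd i g) t x ^ 2)
          (fun i _ => by positivity) (Finset.mem_univ (a k))
      rw [← Finset.mul_sum, Finset.sum_add_distrib]
      beta_reduce
      set X := Ht (pd (b k) (f k)) t x
      set Y := Ht (pd (a k) g) t x
      have k5 : 0 ≤ m * (X - m⁻¹ * Y) ^ 2 := by positivity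
      have e5 : m * (X - m⁻¹ * Y) ^ 2 = m * X ^ 2 + m⁻¹ * Y ^ 2 - 2 * (X * Y) := by
        field_simp
        ring
      rw [show 2 * κ * (X * Y) = κ * (2 * (X * Y)) by ring]
      exact mul_le_mul_of_nonneg_left (by linarith) hκ.le
    rw [e1]
    have e5 := Finset.sum_le_sum fun k (_ : k ∈ Finset.univ) => e4 k
    rw [← Finset.mul_sum, ] at e5
    have e6 := mul_le_mul_of_nonneg_left e5 (inv_nonneg.2 hκ.le)
    rw [show ∀ s : ℝ, κ⁻¹ * (2 * κ * s) = 2 * s from fun s => by field_simp] at e6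
    rw [← Finset.mul_sum]
    linarith
  have hmono : MonotoneOn D (Set.Ici 0) := by
    refine monotoneOn_of_deriv_nonneg (convex_Ici 0) hDc.continuousOn ?_ ?_
    · intro t ht
      rw [interior_Ici] at ht
      obtain ⟨d, -, hd⟩ := hDd t ht
      exact hd.differentiableAt.differentiableWithinAt
    · intro t ht
      rw [interior_Ici] at ht
      obtain ⟨d, hd0, hd⟩ := hDd t ht
      rw [hd.deriv]; exact hd0
  obtain ⟨C, hC0, hC⟩ := ht_sup_decay hh1 i0
  have hfin : ∀ t, 0 < t → D 0 ≤ C / √t * ∫ x, |g x| := by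
    intro t ht
    refine (hmono (Set.mem_Ici.2 le_rfl) (Set.mem_Ici.2 ht.le) ht.le).trans ?_
    have k1 : 0 ≤ κ⁻¹ * ∑ k, ∫ x, Q (Ht (f k) t x, Ht g t x) :=
      mul_nonneg (inv_nonneg.2 hκ.le) (Finset.sum_nonneg fun k _ => integral_nonneg fun x => hQ0 _)
    have k2 : ∫ x, Ht h t x * Ht g t x ≤ C / √t * ∫ x, |g x| := by
      have hi : Integrable fun x => |Ht g t x| := by
        obtain ⟨C, hC, hd⟩ := ht_decay hg (n + 1) t
        exact (int_of_decay (ht_cont_x hg t) fun x => hd t le_rfl x).abs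
      calc ∫ x, Ht h t x * Ht g t x ≤ ∫ x, C / √t * |Ht g t x| := by
            refine integral_mono (ht_mul_integrable hh hg t) (hi.const_mul _) fun x => ?_
            refine (le_abs_self _).trans ?_
            rw [abs_mul]
            exact mul_le_mul_of_nonneg_right (hC t ht x) (abs_nonneg _)
        _ = C / √t * ∫ x, |Ht g t x| := integral_const_mul _ _
        _ ≤ _ := mul_le_mul_of_nonneg_left (ht_l1 hg t) (by positivity)
    simp only [hD]; linarith
  have hlim : Tendsto (fun t => C / √t * ∫ x, |g x|) atTop (𝓝 0) := by
    have := (Tendsto.const_div_atTop Real.tendsto_sqrt_atTop C).mul_const (∫ x, |g x|)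
    simpa using this
  have h0 : D 0 ≤ 0 := ge_of_tendsto hlim (by
    filter_upwards [eventually_gt_atTop 0] with t ht using hfin t ht)
  simp only [hD, ht_zero] at h0
  linarith

end

/-! ### The Calderón–Zygmund inequality -/

section
variable {n : ℕ}

/-- The bilinear embedding with the Bellman function inserted. -/
lemma cz_pairing {p : ℝ} (hp : 2 < p) : ∃ K : ℝ, 0 < K ∧ ∀ e, 0 < e →
    ∀ (ι : Type) [Fintype ι] (a b : ι → Fin n) (f : ι → Euc n → ℝ) (_ : ∀ k, Test (f k))
    (h1 g : Euc n → ℝ) (_ : Test h1) (i0 : Fin n) (_ : Test g)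
    (_ : ∀ x, lap (pd i0 h1) x = ∑ k, pd (a k) (pd (b k) (f k)) x)
    (Z : Set (Euc n)) (_ : IsCompact Z) (_ : ∀ x ∉ Z, g x = 0 ∧ ∀ k, f k x = 0),
    ∫ x, pd i0 h1 x * g x ≤
      K * ∑ k, ∫ x in Z, (pw p e (f k x) + pw (p / (p - 1)) e (g x)) := by
  set q := p / (p - 1) with hq
  have hp1 : 0 < p - 1 := by linarith
  have hq1 : 1 < q := by rw [hq, one_lt_div hp1]; linarith
  have hq2 : q < 2 := by rw [hq, div_lt_iff₀ hp1]; linarith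
  set θ := 1 - 2 / p with hθ
  have hθ0 : 0 < θ := by rw [hθ, sub_pos, div_lt_one (by linarith)]; exact hp
  have hθ1 : θ < 1 := by rw [hθ]; have : 0 < 2 / p := by positivity
                         linarith
  have hθ2 : θ = 2 / q - 1 := by rw [hθ, hq]; field_simp; ring
  -- small enough for the smallness conditions on `κ` under which the Hessian bound holds
  set κ := (q - 1) / (64 * q ^ 2) with hκd
  have hq0 : 0 < q - 1 := by linarith
  have hκ : 0 < κ := by positivity
  have hκq : κ * (64 * q ^ 2) = q - 1 := by rw [hκd]; field_simp
  have hθsq : θ ^ 2 ≤ 1 := by nlinarith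
  have hk2 : κ * (64 * θ ^ 2 * q ^ 2) ≤ q * (q - 1) := by
    calc κ * (64 * θ ^ 2 * q ^ 2) = (q - 1) * θ ^ 2 := by rw [← hκq]; ring
      _ ≤ (q - 1) * 1 := by gcongr
      _ ≤ q * (q - 1) := by nlinarith
  have hk1 : 2 * κ * q * θ ≤ q - 1 := by
    rw [← hκq]
    calc 2 * κ * q * θ ≤ 2 * κ * q * 1 := by gcongr
      _ ≤ κ * (64 * q ^ 2) := by nlinarith
  have hk3 : 4 * κ ≤ q * (q - 1) := by
    calc 4 * κ = κ * 4 := mul_comm _ _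
      _ ≤ κ * (64 * q ^ 2) := mul_le_mul_of_nonneg_left (by nlinarith) hκ.le
      _ = 1 * (q - 1) := by rw [hκq, one_mul]
      _ ≤ q * (q - 1) := by gcongr
  refine ⟨κ⁻¹ * (1 + κ), by positivity, fun e he ι _ a b f hf h1 g hh1 i0 hg hlap Z hZ hZ0 => ?_⟩
  have hb := bilinear_embedding (bel_c2 p q θ κ he)
    (bel_nonneg he (by linarith) (by linarith) hκ.le) hκ
    (bel_hess he hp hq1 hq2 hθ0 (by rw [hθ]; ring) hθ2 hκ hk1 hk2 hk3) a b hf hh1 i0 hg hlap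
  refine hb.trans ?_
  rw [mul_assoc, Finset.mul_sum (a := 1 + κ)]
  refine mul_le_mul_of_nonneg_left (Finset.sum_le_sum fun k _ => ?_) (by positivity)
  rw [← setIntegral_eq_integral_of_forall_compl_eq_zero (s := Z), ← integral_const_mul]
  · have hQc : Continuous (Bel p q θ κ e) := continuous_iff_continuousAt.2 fun z =>
      ((bel_c2 p q θ κ he).d0 z).continuousAt
    have hpc : ∀ r, Continuous (pw r e) := fun r => continuous_iff_continuousAt.2 fun s =>
      (pw_hasDerivAt he r s).continuousAt
    refine setIntegral_mono_on ?_ ?_ hZ.measurableSet fun x _ => ?_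
    · exact (hQc.comp ((hf k).cont.prodMk hg.cont)).continuousOn.integrableOn_compact hZ
    · exact (continuous_const.mul (((hpc p).comp (hf k).cont).add
        ((hpc q).comp hg.cont))).continuousOn.integrableOn_compact hZ
    · exact bel_le he (by linarith) (by rw [hθ]; ring) hκ.le _
  · intro x hx
    rw [(hZ0 x hx).1, (hZ0 x hx).2 k]
    exact (bel_c2 p q θ κ he).z0

/-- `L^p` bound for `h` in terms of the `f_k` when `Δh = Σ_k ∂_{a k} ∂_{b k} f_k`. The pairing
estimate is tested with `g = s h (h² + e²)^{(p-2)/2}` as `e → 0`; since `q > 1`, a small `s` lets the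
left-hand side absorb the term in `g`. -/
lemma cz_real {p : ℝ} (hp : 2 < p) (ι : Type) [Fintype ι] : ∃ C : ℝ, 0 ≤ C ∧
    ∀ (a b : ι → Fin n) (f : ι → Euc n → ℝ) (_ : ∀ k, Test (f k))
    (h1 : Euc n → ℝ) (_ : Test h1) (i0 : Fin n)
    (_ : ∀ x, lap (pd i0 h1) x = ∑ k, pd (a k) (pd (b k) (f k)) x),
    ∫ x, |pd i0 h1 x| ^ p ≤ C * ∑ k, ∫ x, |f k x| ^ p := by
  obtain ⟨K, hK, hpair⟩ := cz_pairing (n := n) hp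
  set q := p / (p - 1) with hq
  have hp1 : 0 < p - 1 := by linarith
  have hq1 : 1 < q := by rw [hq, one_lt_div hp1]; linarith
  set M : ℝ := K * (Fintype.card ι : ℝ) with hM
  have hM0 : 0 ≤ M := by positivity
  set s : ℝ := (2 * M + 1)⁻¹ ^ (1 / (q - 1)) with hs
  have hs0 : 0 < s := Real.rpow_pos_of_pos (by positivity) _
  have hq0 : 0 < q - 1 := by linarith
  have hsq : M * s ^ q ≤ s / 2 := by
    have e1 : s ^ q = s * (2 * M + 1)⁻¹ := by
      rw [show q = 1 + (q - 1) by ring, Real.rpow_add hs0, Real.rpow_one]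
      congr 1
      rw [hs, ← Real.rpow_mul (by positivity), one_div_mul_cancel hq0.ne', Real.rpow_one]
    rw [e1]
    rw [show M * (s * (2 * M + 1)⁻¹) = s * (M * (2 * M + 1)⁻¹) by ring, div_eq_mul_inv]
    refine mul_le_mul_of_nonneg_left ?_ hs0.le
    rw [← div_eq_mul_inv, div_le_iff₀ (by positivity)]; linarith
  refine ⟨2 * K / s, by positivity, fun a b f hf h1 hh1 i0 hlap => ?_⟩
  set h := pd i0 h1 with hh_def
  have hh : Test h := hh1.pd i0
  set Z : Set (Euc n) := tsupport h ∪ ⋃ k, tsupport (f k) with hZd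
  have hZ : IsCompact Z := hh.2.isCompact.union (isCompact_iUnion fun k => (hf k).2.isCompact)
  have hZh : ∀ x ∉ Z, h x = 0 := fun x hx => image_eq_zero_of_notMem_tsupport
    fun hx' => hx (Or.inl hx')
  have hZf : ∀ x ∉ Z, ∀ k, f k x = 0 := fun x hx k => image_eq_zero_of_notMem_tsupport
    fun hx' => hx (Or.inr (Set.mem_iUnion.2 ⟨k, hx'⟩))
  have hc : Continuous h := hh.cont
  set G : ℝ → Euc n → ℝ := fun e x => s * (h x * (h x ^ 2 + e ^ 2) ^ ((p - 2) / 2)) with hG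
  have hGc : Continuous fun z : ℝ × Euc n => G z.1 z.2 := by
    refine continuous_const.mul ((hc.comp continuous_snd).mul (Continuous.rpow_const ?_
      fun _ => Or.inr (by linarith)))
    exact ((hc.comp continuous_snd).pow 2).add (continuous_fst.pow 2)
  have hGt : ∀ e, 0 < e → Test (G e) := by
    intro e he
    refine ⟨contDiff_const.mul (hh.1.mul (((hh.1.pow 2).add contDiff_const).rpow_const_of_ne
      fun x => (base_pos he (h x)).ne')), ?_⟩
    exact (HasCompactSupport.mul_right hh.2).mul_left
  have key : ∀ e, 0 < e → ∫ x in Z, h x * G e x ≤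
      K * ∑ k, ∫ x in Z, (pw p e (f k x) + pw q e (G e x)) := by
    intro e he
    have := hpair e he ι a b f hf h1 (G e) hh1 i0 (hGt e he) hlap Z hZ
      fun x hx => ⟨by simp [hG, hZh x hx], hZf x hx⟩
    rwa [← setIntegral_eq_integral_of_forall_compl_eq_zero (s := Z)] at this
    intro x hx
    simp [← hh_def, hZh x hx]
  have hlim1 : Continuous fun e => ∫ x in Z, h x * G e x :=
    continuous_parametric_integral_of_continuous (f := fun e x => h x * G e x)
      ((hc.comp continuous_snd).mul hGc) hZ
  have hpwc : ∀ r, 0 ≤ r → Continuous fun z : ℝ × ℝ => pw r z.1 z.2 := fun r hr => by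
    unfold pw
    exact Continuous.rpow_const (by fun_prop) fun _ => Or.inr (by positivity)
  have hlim2 : Continuous fun e => K * ∑ k, ∫ x in Z, (pw p e (f k x) + pw q e (G e x)) := by
    refine continuous_const.mul (continuous_finsetSum _ fun k _ => ?_)
    refine continuous_parametric_integral_of_continuous
      (f := fun e x => pw p e (f k x) + pw q e (G e x)) ?_ hZ
    exact ((hpwc p (by linarith)).comp (continuous_fst.prodMk ((hf k).cont.comp continuous_snd))).add
      ((hpwc q (by linarith)).comp (continuous_fst.prodMk hGc))
  have key0 : ∫ x in Z, h x * G 0 x ≤ K * ∑ k, ∫ x in Z, (pw p 0 (f k x) + pw q 0 (G 0 x)) := by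
    refine le_of_tendsto_of_tendsto (b := 𝓝[>] (0 : ℝ)) (hlim1.continuousAt.mono_left
      nhdsWithin_le_nhds) (hlim2.continuousAt.mono_left nhdsWithin_le_nhds) ?_
    filter_upwards [self_mem_nhdsWithin] with e he using key e he
  have hpw0 : ∀ {r : ℝ}, 0 < r → ∀ y : ℝ, pw r 0 y = |y| ^ r := by
    intro r hr y
    unfold pw
    rw [show y ^ 2 + (0 : ℝ) ^ 2 = |y| ^ (2 : ℝ) by rw [Real.rpow_two, sq_abs]; ring,
      ← Real.rpow_mul (abs_nonneg y)]
    congr 1; ring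
  have hG0 : ∀ x, G 0 x = s * (h x * |h x| ^ (p - 2)) := by
    intro x
    have := hpw0 (r := p - 2) (by linarith) (h x)
    unfold pw at this
    simp only [hG]; rw [this]
  have hl : ∀ x, h x * G 0 x = s * |h x| ^ p := by
    intro x
    rw [hG0]
    have : |h x| ^ p = |h x| ^ 2 * |h x| ^ (p - 2) := by
      rcases eq_or_ne (h x) 0 with h0 | h0
      · rw [h0, abs_zero, Real.zero_rpow (by linarith)]; simp
      · rw [← Real.rpow_two, ← Real.rpow_add (abs_pos.2 h0)]; congr 1; ring
    rw [this, sq_abs]; ring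
  have hr : ∀ x, pw q 0 (G 0 x) = s ^ q * |h x| ^ p := by
    intro x
    have h1 : |G 0 x| = s * |h x| ^ (p - 1) := by
      rw [hG0, abs_mul, abs_mul, abs_of_pos hs0, abs_of_nonneg (Real.rpow_nonneg (abs_nonneg _) _)]
      congr 1
      rcases eq_or_ne (h x) 0 with h0 | h0
      · rw [h0, abs_zero, Real.zero_rpow (x := p - 1) (by linarith), zero_mul]
      · nth_rw 1 [← Real.rpow_one |h x|]
        rw [← Real.rpow_add (abs_pos.2 h0)]; congr 1; ring
    rw [hpw0 (by linarith), h1, Real.mul_rpow hs0.le (Real.rpow_nonneg (abs_nonneg _) _),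
      ← Real.rpow_mul (abs_nonneg _)]
    congr 2
    rw [hq]; field_simp
  have habsc : ∀ {φ : Euc n → ℝ}, Continuous φ → Continuous fun x => |φ x| ^ p := fun hφ =>
    hφ.abs.rpow_const fun _ => Or.inr (by linarith)
  simp_rw [hl, hr, hpw0 (show (0 : ℝ) < p by linarith)] at key0
  have hprodInt : ∀ k, ∫ x in Z, (|f k x| ^ p + s ^ q * |h x| ^ p) =
      (∫ x, |f k x| ^ p) + s ^ q * ∫ x, |h x| ^ p := by
    intro k
    have i2 : IntegrableOn (fun x => s ^ q * |h x| ^ p) Z :=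
      (continuous_const.mul (habsc hc)).continuousOn.integrableOn_compact hZ
    rw [integral_add ((habsc (hf k).cont).continuousOn.integrableOn_compact hZ) i2, integral_const_mul,
      setIntegral_eq_integral_of_forall_compl_eq_zero fun x hx => by
        rw [hZf x hx k, abs_zero, Real.zero_rpow (by linarith)],
      setIntegral_eq_integral_of_forall_compl_eq_zero fun x hx => by
        rw [hZh x hx, abs_zero, Real.zero_rpow (by linarith)]]
  simp_rw [hprodInt] at key0
  rw [integral_const_mul, setIntegral_eq_integral_of_forall_compl_eq_zero fun x hx => by
        rw [hZh x hx, abs_zero, Real.zero_rpow (by linarith)], Finset.sum_add_distrib,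
      Finset.sum_const, Finset.card_univ, nsmul_eq_mul] at key0
  set X := ∫ x, |h x| ^ p
  have hX : 0 ≤ X := integral_nonneg fun x => Real.rpow_nonneg (abs_nonneg _) _
  set F := ∑ k, ∫ x, |f k x| ^ p
  have h2 := mul_le_mul_of_nonneg_right hsq hX
  have h3 : s / 2 * X ≤ K * F := by
    rw [hM] at h2
    linear_combination key0 + h2
  rw [div_mul_eq_mul_div, le_div_iff₀ hs0]
  linarith

lemma Test.lint {f : Euc n → ℝ} (hf : Test f) {p : ℝ} (hp : 0 < p) :
    ∫⁻ x, ‖f x‖ₑ ^ p = ENNReal.ofReal (∫ x, |f x| ^ p) := by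
  rw [ofReal_integral_eq_lintegral_ofReal]
  · refine lintegral_congr fun x => ?_
    rw [← ENNReal.ofReal_rpow_of_nonneg (abs_nonneg _) hp.le, ← Real.norm_eq_abs, ofReal_norm]
  · refine (hf.cont.abs.rpow_const fun _ => Or.inr hp.le).integrable_of_hasCompactSupport ?_
    refine hf.2.mono ?_
    intro x hx
    contrapose! hx
    simp only [Function.mem_support, not_not] at hx ⊢
    rw [hx, abs_zero, Real.zero_rpow hp.ne']
  · exact ae_of_all _ fun x => Real.rpow_nonneg (abs_nonneg _) _

/-- `cz_real` in extended nonnegative form. -/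
lemma cz_lp {p : ℝ} (hp : 2 < p) (ι : Type) [Fintype ι] : ∃ C : ℝ, 0 ≤ C ∧
    ∀ (a b : ι → Fin n) (f : ι → Euc n → ℝ) (_ : ∀ k, Test (f k))
    (h1 : Euc n → ℝ) (_ : Test h1) (i0 : Fin n)
    (_ : ∀ x, lap (pd i0 h1) x = ∑ k, pd (a k) (pd (b k) (f k)) x),
    ∫⁻ x, ‖pd i0 h1 x‖ₑ ^ p ≤ ENNReal.ofReal C * ∑ k, ∫⁻ x, ‖f k x‖ₑ ^ p := by
  obtain ⟨C, hC, h⟩ := cz_real (n := n) hp ι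
  refine ⟨C, hC, fun a b f hf h1 hh1 i0 hlap => ?_⟩
  have hp0 : 0 < p := by linarith
  rw [(hh1.pd i0).lint hp0]
  simp_rw [fun k => (hf k).lint hp0]
  rw [← ENNReal.ofReal_sum_of_nonneg fun k _ =>
    integral_nonneg fun x => Real.rpow_nonneg (abs_nonneg _) _, ← ENNReal.ofReal_mul hC]
  exact ENNReal.ofReal_le_ofReal (h a b f hf h1 hh1 i0 hlap)

end

/-! ### Second derivatives of test fields in terms of the Lamé operator -/

section
variable {n : ℕ}

lemma enorm_add_rpow_le {p : ℝ} (hp : 1 ≤ p) (u v : ℝ) :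
    ‖u + v‖ₑ ^ p ≤ 2 ^ (p - 1) * (‖u‖ₑ ^ p + ‖v‖ₑ ^ p) :=
  (ENNReal.rpow_le_rpow (enorm_add_le u v) (by linarith)).trans
    (ENNReal.rpow_add_le_mul_rpow_add_rpow _ _ hp)

lemma two_rpow_ne_top (p : ℝ) : (2 : ℝ≥0∞) ^ (p - 1) ≠ ⊤ :=
  ENNReal.rpow_ne_top_of_ne_zero (by simp) (by simp)

lemma lint_add_le {p : ℝ} (hp : 1 ≤ p) {u v : Euc n → ℝ} (hu : Continuous u) :
    ∫⁻ x, ‖u x + v x‖ₑ ^ p ≤ 2 ^ (p - 1) * ((∫⁻ x, ‖u x‖ₑ ^ p) + ∫⁻ x, ‖v x‖ₑ ^ p) := by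
  rw [← lintegral_add_left (by fun_prop), ← lintegral_const_mul' _ _ (two_rpow_ne_top p)]
  exact lintegral_mono fun x => enorm_add_rpow_le hp _ _

lemma lint_const_mul {p : ℝ} (hp : 0 ≤ p) (c : ℝ) (u : Euc n → ℝ) :
    ∫⁻ x, ‖c * u x‖ₑ ^ p = ‖c‖ₑ ^ p * ∫⁻ x, ‖u x‖ₑ ^ p := by
  rw [← lintegral_const_mul' _ _ (ENNReal.rpow_ne_top_of_nonneg hp (by simp))]
  refine lintegral_congr fun x => ?_
  rw [enorm_mul, ENNReal.mul_rpow_of_nonneg _ _ hp]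

/-- Since `div LW = (1 + κ) Δ(div W)`, the function `∂ⱼ div W` is a test derivative whose Laplacian is
`(1 + κ)⁻¹ ∑ₖ ∂ⱼ∂ₖ (LW)ₖ`, to which `cz_lp` applies. -/
lemma cz_div {p : ℝ} (hp : 2 < p) {κ : ℝ} (hκ : 0 ≤ κ) : ∃ C : ℝ≥0∞, C ≠ ⊤ ∧
    ∀ (W : Fin n → Euc n → ℝ) (_ : ∀ j, Test (W j)) (j : Fin n),
    ∫⁻ x, ‖pd j (fun y => ∑ k, pd k (W k) y) x‖ₑ ^ p ≤ C * ∑ k, ∫⁻ x, ‖Lam κ W k x‖ₑ ^ p := by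
  obtain ⟨C, hC, h⟩ := cz_lp (n := n) hp (Fin n)
  have hp0 : 0 ≤ p := by linarith
  refine ⟨ENNReal.ofReal C * ‖(1 + κ)⁻¹‖ₑ ^ p, ENNReal.mul_ne_top (by simp)
    (ENNReal.rpow_ne_top_of_nonneg hp0 (by simp)), fun W hW j => ?_⟩
  have hT : Test (fun y => ∑ k, pd k (W k) y) := Test.sum _ fun k => (hW k).pd k
  have := h (fun _ => j) (fun k => k) (fun k x => (1 + κ)⁻¹ * Lam κ W k x)
    (fun k => (Test.lam hW κ k).const_mul _) _ hT j ?_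
  · refine this.trans (le_of_eq ?_)
    simp_rw [lint_const_mul hp0]
    rw [← Finset.mul_sum, mul_assoc]
  · intro x
    set ψ : Euc n → ℝ := fun y => ∑ k, pd k (W k) y with hψ
    have e1 : ∀ y, ∑ k, pd k (Lam κ W k) y = (1 + κ) * lap ψ y := by
      intro y
      have : ∀ k, pd k (Lam κ W k) y = lap (pd k (W k)) y + κ * pd k (pd k ψ) y := by
        intro k
        have e2 : Lam κ W k = fun y => lap (W k) y + κ * pd k ψ y := rfl
        rw [e2, pd_add ((hW k).lap.1.da y) (((hT.pd k).const_mul κ).1.da y),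
          pd_const_mul ((hT.pd k).1.da y), pd_lap (hW k).1]
      simp_rw [this]
      rw [Finset.sum_add_distrib, ← Finset.mul_sum, add_mul, one_mul]
      congr 1
      unfold lap
      rw [Finset.sum_comm]
      refine Finset.sum_congr rfl fun i _ => ?_
      have e3 : pd i ψ = fun y => ∑ k, pd i (pd k (W k)) y := by
        funext y
        exact pd_sum _ (fun k _ => ((hW k).pd k).1.da y) i
      rw [e3, pd_sum _ fun k _ => (((hW k).pd k).pd i).1.da y]
    have e4 : ∀ k, pd k (fun x => (1 + κ)⁻¹ * Lam κ W k x) =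
        fun x => (1 + κ)⁻¹ * pd k (Lam κ W k) x := fun k => by
      funext y
      exact pd_const_mul ((Test.lam hW κ k).1.da y) _ _
    simp_rw [e4]
    rw [← pd_sum _ fun k _ => (((Test.lam hW κ k).pd k).const_mul _).1.da x]
    simp_rw [← Finset.mul_sum, e1]
    have h1κ : (1 + κ) ≠ 0 := by positivity
    simp_rw [inv_mul_cancel_left₀ h1κ]
    rw [pd_lap hT.1]

/-- `‖D²W‖_p ≤ C ‖LW‖_p` for test fields `W`. -/
lemma cz_lame {p : ℝ} (hp : 2 < p) {κ : ℝ} (hκ : 0 ≤ κ) : ∃ C : ℝ≥0∞, C ≠ ⊤ ∧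
    ∀ (W : Fin n → Euc n → ℝ) (_ : ∀ j, Test (W j)) (a b j : Fin n),
    ∫⁻ x, ‖pd a (pd b (W j)) x‖ₑ ^ p ≤ C * ∑ k, ∫⁻ x, ‖Lam κ W k x‖ₑ ^ p := by
  obtain ⟨C, hC, h⟩ := cz_lp (n := n) hp Unit
  obtain ⟨C', hC', h'⟩ := cz_div (n := n) hp hκ
  have hp0 : 0 ≤ p := by linarith
  refine ⟨ENNReal.ofReal C * (2 ^ (p - 1) * (1 + ‖-κ‖ₑ ^ p * C')),
    ENNReal.mul_ne_top (by simp) (ENNReal.mul_ne_top (two_rpow_ne_top p) (ENNReal.add_ne_top.2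
      ⟨by simp, ENNReal.mul_ne_top (ENNReal.rpow_ne_top_of_nonneg hp0 (by simp)) hC'⟩)),
    fun W hW a b j => ?_⟩
  have hT : Test (fun y => ∑ k, pd k (W k) y) := Test.sum _ fun k => (hW k).pd k
  have hL := Test.lam hW κ j
  have hf : Test (fun x => Lam κ W j x + -κ * pd j (fun y => ∑ k, pd k (W k) y) x) :=
    hL.add ((hT.pd j).const_mul _)
  have := h (fun _ => a) (fun _ => b) (fun _ => _) (fun _ => hf) _ ((hW j).pd b) a ?_
  · refine this.trans ?_
    rw [Finset.univ_unique, Finset.sum_singleton, mul_assoc, mul_assoc]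
    gcongr
    refine (lint_add_le (by linarith) hL.cont).trans ?_
    gcongr
    rw [add_mul, one_mul]
    refine add_le_add ?_ ?_
    · exact Finset.single_le_sum (f := fun k => ∫⁻ x, ‖Lam κ W k x‖ₑ ^ p)
        (fun _ _ => zero_le) (Finset.mem_univ j)
    · rw [lint_const_mul hp0, mul_assoc]
      gcongr
      exact h' W hW j
  · intro x
    have e1 : (fun x => Lam κ W j x + -κ * pd j (fun y => ∑ k, pd k (W k) y) x) = lap (W j) := by
      funext y; unfold Lam; ring
    rw [Finset.univ_unique, Finset.sum_singleton, e1, pd_lap (hW j).1, pd_lap ((hW j).pd b).1]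

end

/-! ### Weights with cutoff -/

section
variable {n : ℕ}

/-- The cut-off weight `⟨x⟩^{2s} ζ(⟨x⟩²/M)`. -/
def om (s : ℝ) (ζ : ℝ → ℝ) (M : ℝ) (x : Euc n) : ℝ := (‖x‖ ^ 2 + 1) ^ s * ζ ((‖x‖ ^ 2 + 1) / M)

/-- The operation on profiles induced by differentiating `om`. -/
def Tz (s : ℝ) (ζ : ℝ → ℝ) (t : ℝ) : ℝ := s * ζ t + t * deriv ζ t

/-- Smooth compactly supported profiles on the line. -/
def Prof (ζ : ℝ → ℝ) : Prop := ContDiff ℝ (⊤ : ℕ∞) ζ ∧ HasCompactSupport ζ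

lemma Prof.Tz {ζ : ℝ → ℝ} (h : Prof ζ) (s : ℝ) : Prof (Tz s ζ) := by
  have hd : ContDiff ℝ (⊤ : ℕ∞) (deriv ζ) := (contDiff_infty_iff_deriv.1 h.1).2
  refine ⟨(contDiff_const.mul h.1).add (contDiff_id.mul hd), ?_⟩
  exact HasCompactSupport.add h.2.mul_left h.2.deriv.mul_left

lemma jap_rpow_eq (x : Euc n) (s : ℝ) : (‖x‖ ^ 2 + 1) ^ s = jap x ^ (2 * s) := by
  rw [Real.rpow_mul (jap_pos x).le, Real.rpow_two, jap_sq, add_comm]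

lemma om_contDiff {ζ : ℝ → ℝ} (h : Prof ζ) (s M : ℝ) :
    ContDiff ℝ (⊤ : ℕ∞) (om s ζ M : Euc n → ℝ) :=
  (contDiff_nsq one_pos).mul
    (h.1.comp (((contDiff_norm_sq ℝ).add contDiff_const).div_const M))

lemma om_test {ζ : ℝ → ℝ} (h : Prof ζ) (s : ℝ) {M : ℝ} (hM : 0 < M) :
    Test (om s ζ M : Euc n → ℝ) := by
  refine ⟨om_contDiff h s M, ?_⟩
  obtain ⟨R, hR⟩ := h.2.isCompact.isBounded.exists_norm_le
  refine HasCompactSupport.intro (isCompact_closedBall (0 : Euc n) (M * R + 1)) fun x hx => ?_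
  unfold om
  refine mul_eq_zero_of_right _ (image_eq_zero_of_notMem_tsupport fun hx2 => ?_)
  apply hx
  have h1 := hR _ hx2
  rw [Real.norm_of_nonneg (by positivity), div_le_iff₀ hM] at h1
  rw [mem_closedBall_zero_iff]
  nlinarith [sq_nonneg (‖x‖ - 1), norm_nonneg x]

lemma om_pd {ζ : ℝ → ℝ} (h : Prof ζ) (s M : ℝ) (i : Fin n) :
    pd i (om s ζ M : Euc n → ℝ) = fun x => 2 * x i * om (s - 1) (Tz s ζ) M x := by
  funext x
  have hq : 0 < ‖x‖ ^ 2 + 1 := by positivity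
  have h1 : HasFDerivAt (fun y : Euc n => ‖y‖ ^ 2 + 1) (2 • (innerSL ℝ x)) x :=
    (hasStrictFDerivAt_norm_sq x).hasFDerivAt.add_const 1
  have h2 := h1.rpow_const (p := s) (Or.inl hq.ne')
  have hz : HasDerivAt ζ (deriv ζ ((‖x‖ ^ 2 + 1) / M)) ((‖x‖ ^ 2 + 1) / M) :=
    (h.1.differentiable (by simp) _).hasDerivAt
  have h3 := hz.comp_hasFDerivAt x (h1.mul_const M⁻¹)
  have h4 := h2.mul h3
  have e : om s ζ M = ((fun y : Euc n => (‖y‖ ^ 2 + 1) ^ s) *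
      (ζ ∘ fun y : Euc n => (‖y‖ ^ 2 + 1) * M⁻¹)) := by
    funext y; simp [om, div_eq_mul_inv]
  unfold pd
  rw [e, h4.fderiv]
  have h3 : inner ℝ x (EuclideanSpace.single i (1 : ℝ)) = x i := by
    rw [EuclideanSpace.inner_single_right]; simp
  have h5 : (‖x‖ ^ 2 + 1) ^ s = (‖x‖ ^ 2 + 1) ^ (s - 1) * (‖x‖ ^ 2 + 1) := by
    rw [← Real.rpow_add_one hq.ne']; ring_nf
  simp [h3, om, Tz, h5, div_eq_mul_inv]
  ring

lemma om_bound {ζ : ℝ → ℝ} (h : Prof ζ) (s : ℝ) : ∃ B : ℝ, 0 ≤ B ∧ ∀ (M : ℝ) (x : Euc n),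
    |om s ζ M x| ≤ B * jap x ^ (2 * s) := by
  obtain ⟨B, hB⟩ := h.2.exists_bound_of_continuous h.1.continuous
  refine ⟨B, (norm_nonneg _).trans (hB 0), fun M x => ?_⟩
  unfold om
  rw [abs_mul, jap_rpow_eq, abs_of_nonneg (by have := jap_pos x; positivity), mul_comm]
  exact mul_le_mul_of_nonneg_right (hB _) (by have := jap_pos x; positivity)

/-- The coordinate `|x_i|` costs one power of `⟨x⟩`. -/
lemma coord_om {B s : ℝ} (hB : 0 ≤ B) {x : Euc n} {u : ℝ} (i : Fin n)
    (h : |u| ≤ B * jap x ^ (s - 1)) : |x i * u| ≤ B * jap x ^ s := by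
  have h1 : |x i| ≤ jap x := (PiLp.norm_apply_le x i).trans (norm_le_jap x)
  rw [abs_mul]
  have hj := jap_pos x
  have : jap x ^ s = jap x * jap x ^ (s - 1) := by
    rw [mul_comm, ← Real.rpow_add_one hj.ne']; ring_nf
  calc |x i| * |u| ≤ jap x * (B * jap x ^ (s - 1)) := by gcongr
    _ = _ := by rw [this]; ring

lemma om_pd_bound {ζ : ℝ → ℝ} (h : Prof ζ) (s : ℝ) : ∃ B : ℝ, 0 ≤ B ∧ ∀ (M : ℝ)
    (i : Fin n) (x : Euc n), |pd i (om s ζ M) x| ≤ B * jap x ^ (2 * s - 1) := by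
  obtain ⟨B, hB0, hB⟩ := om_bound (n := n) (h.Tz s) (s - 1)
  refine ⟨2 * B, by positivity, fun M i x => ?_⟩
  rw [om_pd h s M]
  beta_reduce
  have := coord_om hB0 (s := 2 * s - 1) i ((hB M x).trans_eq (by ring_nf))
  rw [mul_assoc, abs_mul, abs_two]
  linarith

lemma om_pd_pd_bound {ζ : ℝ → ℝ} (h : Prof ζ) (s : ℝ) : ∃ B : ℝ, 0 ≤ B ∧ ∀ (M : ℝ)
    (i j : Fin n) (x : Euc n), |pd j (pd i (om s ζ M)) x| ≤ B * jap x ^ (2 * s - 2) := by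
  obtain ⟨B, hB0, hB⟩ := om_bound (n := n) (h.Tz s) (s - 1)
  obtain ⟨B', hB0', hB'⟩ := om_pd_bound (n := n) (h.Tz s) (s - 1)
  refine ⟨2 * (B' + B), by positivity, fun M i j x => ?_⟩
  rw [om_pd h s M]
  have hd := (om_contDiff (n := n) (h.Tz s) (s - 1) M).da x
  have e : pd j (fun x : Euc n => 2 * x i * om (s - 1) (Tz s ζ) M x) x =
      2 * (x i * pd j (om (s - 1) (Tz s ζ) M) x +
        (if j = i then 1 else 0) * om (s - 1) (Tz s ζ) M x) := by
    simp_rw [mul_assoc]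
    have hc : DifferentiableAt ℝ (fun y : Euc n => y i) x :=
      (contDiff_coord i (m := 1)).differentiable (by simp) x
    rw [pd_const_mul (hc.fun_mul hd), pd_mul hc hd, pd_coord]
  rw [e, abs_mul, abs_two, mul_assoc]
  have h1 := coord_om hB0' (s := 2 * s - 2) i ((hB' M j x).trans_eq (by ring_nf))
  have h2 : |(if j = i then (1 : ℝ) else 0) * om (s - 1) (Tz s ζ) M x| ≤ B * jap x ^ (2 * s - 2) := by
    have h3 := (hB M x).trans_eq (show _ = B * jap x ^ (2 * s - 2) by ring_nf)
    split_ifs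
    · simpa using h3
    · simpa using (abs_nonneg _).trans h3
  have h4 := abs_add_le (x i * pd j (om (s - 1) (Tz s ζ) M) x)
    ((if j = i then 1 else 0) * om (s - 1) (Tz s ζ) M x)
  linarith

lemma exists_prof : ∃ ζ : ℝ → ℝ, Prof ζ ∧ (∀ t, |t| ≤ 1 → ζ t = 1) ∧ ∀ t, 0 ≤ ζ t := by
  let b : ContDiffBump (0 : ℝ) := ⟨1, 2, one_pos, by norm_num⟩
  refine ⟨b, ⟨b.contDiff, b.hasCompactSupport⟩, fun t ht => b.one_of_mem_closedBall ?_,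
    fun t => b.nonneg⟩
  simpa using ht

lemma om_eq {ζ : ℝ → ℝ} (h1 : ∀ t, |t| ≤ 1 → ζ t = 1) (s : ℝ) {M : ℝ} {x : Euc n}
    (hx : ‖x‖ ^ 2 + 1 ≤ M) : om s ζ M x = jap x ^ (2 * s) := by
  unfold om
  have : 0 < M := lt_of_lt_of_le (by positivity) hx
  rw [h1, mul_one, jap_rpow_eq]
  rw [abs_of_nonneg (by positivity)]
  exact (div_le_one this).2 hx
end

/-! ### Weighted second derivative estimates -/

section
variable {n : ℕ}

/-- Finiteness of the weighted norm `‖⟨x⟩^r f‖_{L^p}`. -/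
def WL (p r : ℝ) (f : Euc n → ℝ) : Prop := ∫⁻ x, (eJ x ^ r * ‖f x‖ₑ) ^ p < ⊤

lemma enorm_jap_mul (r : ℝ) (x : Euc n) (y : ℝ) : ‖jap x ^ r * y‖ₑ = eJ x ^ r * ‖y‖ₑ := by
  rw [enorm_mul, ← eJ_rpow, Real.enorm_of_nonneg (by have := jap_pos x; positivity)]

lemma wl_iff {p : ℝ} (hp : 0 < p) {r : ℝ} {f : Euc n → ℝ} (hf : Continuous f) :
    WL p r f ↔ MemLp (fun x => jap x ^ r * f x) (ENNReal.ofReal p) := by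
  have h1 : AEStronglyMeasurable (fun x => jap x ^ r * f x) (volume : Measure (Euc n)) :=
    ((continuous_jap_rpow r).mul hf).aestronglyMeasurable
  have h2 := eLpNorm_lt_top_iff_lintegral_rpow_enorm_lt_top (μ := (volume : Measure (Euc n)))
    (f := fun x => jap x ^ r * f x) (p := ENNReal.ofReal p) (by simpa using hp) (by simp)
  rw [ENNReal.toReal_ofReal hp.le] at h2
  unfold WL
  simp_rw [enorm_jap_mul] at h2
  rw [← h2, MemLp, and_iff_right h1]

lemma WL.mono {p r : ℝ} (hp : 0 ≤ p) {f g : Euc n → ℝ} (hg : WL p r g) (h : ∀ x, |f x| ≤ |g x|) :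
    WL p r f := by
  refine lt_of_le_of_lt (lintegral_mono fun x => ?_) hg
  gcongr
  exact enorm_le_iff_norm_le.2 (h x)

lemma WL.sum {p r : ℝ} (hp : 1 ≤ p) {ι : Type*} (s : Finset ι) {f : ι → Euc n → ℝ}
    (hc : ∀ i, Continuous (f i)) (h : ∀ i, WL p r (f i)) : WL p r (fun x => ∑ i ∈ s, f i x) := by
  have hp0 : 0 < p := by linarith
  rw [wl_iff hp0 (continuous_finsetSum _ fun i _ => hc i)]
  simp_rw [Finset.mul_sum]
  exact memLp_finsetSum _ fun i _ => (wl_iff hp0 (hc i)).1 (h i)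

lemma WL.add {p r : ℝ} (hp : 1 ≤ p) {f g : Euc n → ℝ}
    (hf : Continuous f) (hg : Continuous g) (h : WL p r f) (h' : WL p r g) :
    WL p r (fun x => f x + g x) := by
  have hp0 : 0 < p := by linarith
  rw [wl_iff hp0 (hf.fun_add hg)]
  simp_rw [mul_add]
  exact ((wl_iff hp0 hf).1 h).add ((wl_iff hp0 hg).1 h')

lemma WL.const_mul {p r : ℝ} (hp : 0 < p) {f : Euc n → ℝ}
    (hf : Continuous f) (h : WL p r f) (c : ℝ) : WL p r (fun x => c * f x) := by
  rw [wl_iff hp (continuous_const.fun_mul hf)]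
  simp_rw [mul_left_comm]
  exact ((wl_iff hp hf).1 h).const_mul c

lemma WL.abs {p r : ℝ} (hp : 0 ≤ p) {f : Euc n → ℝ} (h : WL p r f) : WL p r (fun x => |f x|) :=
  h.mono hp fun x => by simp

lemma WL.shift {p r t : ℝ} {f : Euc n → ℝ} (h : WL p (t + r) f) :
    WL p t (fun x => jap x ^ r * f x) := by
  refine lt_of_le_of_lt (le_of_eq ?_) h
  congr 1; ext x
  rw [enorm_jap_mul, eJ_add, mul_assoc]

lemma lam_eq {κ : ℝ} {φ : Fin n → Euc n → ℝ} (hφ : ∀ j, ContDiff ℝ (⊤ : ℕ∞) (φ j)) (k : Fin n)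
    (x : Euc n) : Lam κ φ k x = ∑ i, pd i (pd i (φ k)) x + κ * ∑ j, pd k (pd j (φ j)) x := by
  unfold Lam lap
  rw [pd_sum _ fun j _ => (contDiff_pd (hφ j) j).da x]

lemma pd_pd_mul {f g : Euc n → ℝ} (hf : ContDiff ℝ (⊤ : ℕ∞) f) (hg : ContDiff ℝ (⊤ : ℕ∞) g)
    (a b : Fin n) (x : Euc n) : pd a (pd b (fun y => f y * g y)) x =
      f x * pd a (pd b g) x + (pd a f x * pd b g x + pd b f x * pd a g x + pd a (pd b f) x * g x) := by
  have e : pd b (fun y => f y * g y) = fun y => f y * pd b g y + pd b f y * g y :=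
    funext fun y => pd_mul (hf.da y) (hg.da y) b
  have h1 := contDiff_pd hf b
  have h2 := contDiff_pd hg b
  rw [e, pd_add ((hf.mul h2).da x) ((h1.mul hg).da x), pd_mul (hf.da x) (h2.da x),
    pd_mul (h1.da x) (hg.da x)]
  ring

/-- The weighted Calderón–Zygmund estimate: if `⟨x⟩^{r+2}LY`, `⟨x⟩^{r+1}∂Y` and `⟨x⟩^r Y` lie in
`L^p` then so does `⟨x⟩^{r+2}∂²Y`. The unweighted estimate is applied to `Y` times a cut-off weight;
the commutator terms are controlled by the lower order norms, uniformly in the cutoff. -/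
lemma weighted_d2 {p : ℝ} (hp : 2 < p) {κ : ℝ} (hκ : 0 ≤ κ) {r : ℝ} {Y : Fin n → Euc n → ℝ}
    (hY : ∀ j, ContDiff ℝ (⊤ : ℕ∞) (Y j)) (h2 : ∀ k, WL p (r + 2) (Lam κ Y k))
    (h1 : ∀ i j, WL p (r + 1) (pd i (Y j))) (h0 : ∀ j, WL p r (Y j)) (a b j : Fin n) :
    WL p (r + 2) (pd a (pd b (Y j))) := by
  have hp0 : 0 < p := by linarith
  have hp1 : 1 ≤ p := by linarith
  have hcY := fun j => (hY j).continuous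
  have hcD := fun i j => (contDiff_pd (hY j) i).continuous
  have hcL := fun k => (contDiff_lam hY κ k).continuous
  -- the controlling function, whose `L^p` norm is finite
  set e2 : Euc n → ℝ := fun x => jap x ^ (r + 2) * ∑ k, |Lam κ Y k x| with he2
  set e1 : Euc n → ℝ := fun x => jap x ^ (r + 1) * ∑ i, ∑ j, |pd i (Y j) x| with he1
  set e0 : Euc n → ℝ := fun x => jap x ^ r * ∑ j, |Y j x| with he0
  set E : Euc n → ℝ := fun x => e2 x + (e1 x + e0 x) with hE
  have hce2 : Continuous e2 := (continuous_jap_rpow _).mul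
    (continuous_finsetSum _ fun k _ => (hcL k).abs)
  have hce1 : Continuous e1 := (continuous_jap_rpow _).mul
    (continuous_finsetSum _ fun i _ => continuous_finsetSum _ fun j _ => (hcD i j).abs)
  have hce0 : Continuous e0 := (continuous_jap_rpow _).mul
    (continuous_finsetSum _ fun k _ => (hcY k).abs)
  have hcE : Continuous E := hce2.add (hce1.add hce0)
  have hn2 : ∀ x, 0 ≤ e2 x := fun x => by have := jap_pos x; positivity
  have hn1 : ∀ x, 0 ≤ e1 x := fun x => by have := jap_pos x; positivity
  have hn0 : ∀ x, 0 ≤ e0 x := fun x => by have := jap_pos x; positivity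
  have hEfin : WL p 0 E := by
    refine WL.add hp1 hce2 (hce1.add hce0) (WL.shift ?_)
      (WL.add hp1 hce1 hce0 (WL.shift ?_) (WL.shift ?_))
    · rw [zero_add]
      exact WL.sum hp1 _ (fun k => (hcL k).abs) fun k => (h2 k).abs hp0.le
    · rw [zero_add]
      exact WL.sum hp1 _ (fun i => continuous_finsetSum _ fun j _ => (hcD i j).abs)
        fun i => WL.sum hp1 _ (fun j => (hcD i j).abs) fun j => (h1 i j).abs hp0.le
    · rw [zero_add]
      exact WL.sum hp1 _ (fun k => (hcY k).abs) fun k => (h0 k).abs hp0.le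
  have hEI : ∫⁻ x, ‖E x‖ₑ ^ p < ⊤ := by simpa [WL] using hEfin
  -- the cut-off weights
  obtain ⟨ζ, hζ, hζ1, -⟩ := exists_prof
  set s := (r + 2) / 2 with hs
  obtain ⟨B0, hB00, hB0⟩ := om_bound (n := n) hζ s
  obtain ⟨B1, hB10, hB1⟩ := om_pd_bound (n := n) hζ s
  obtain ⟨B2, hB20, hB2⟩ := om_pd_pd_bound (n := n) hζ s
  have es : 2 * s = r + 2 := by rw [hs]; ring
  have es1 : 2 * s - 1 = r + 1 := by rw [hs]; ring
  have es2 : 2 * s - 2 = r := by rw [hs]; ring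
  rw [es] at hB0
  rw [es1] at hB1
  rw [es2] at hB2
  set C := 2 * B1 + B2 with hC
  have hC0 : 0 ≤ C := by positivity
  have hjY : ∀ i j x, jap x ^ (r + 1) * |pd i (Y j) x| ≤ E x := fun i j x => by
    have : |pd i (Y j) x| ≤ ∑ i, ∑ j, |pd i (Y j) x| :=
      (Finset.single_le_sum (f := fun j => |pd i (Y j) x|) (fun _ _ => abs_nonneg _)
        (Finset.mem_univ j)).trans (Finset.single_le_sum (f := fun i => ∑ j, |pd i (Y j) x|)
          (fun _ _ => by positivity) (Finset.mem_univ i))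
    have h3 : jap x ^ (r + 1) * |pd i (Y j) x| ≤ e1 x := by
      have := jap_pos x
      simp only [he1]; gcongr
    have := hn2 x; have := hn0 x
    simp only [hE]; linarith
  have hj0 : ∀ j x, jap x ^ r * |Y j x| ≤ E x := fun j x => by
    have : |Y j x| ≤ ∑ j, |Y j x| := Finset.single_le_sum (f := fun j => |Y j x|)
      (fun _ _ => abs_nonneg _) (Finset.mem_univ j)
    have h3 : jap x ^ r * |Y j x| ≤ e0 x := by
      have := jap_pos x
      simp only [he0]; gcongr
    have := hn2 x; have := hn1 x
    simp only [hE]; linarith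
  have hjL : ∀ j x, jap x ^ (r + 2) * |Lam κ Y j x| ≤ E x := fun j x => by
    have : |Lam κ Y j x| ≤ ∑ j, |Lam κ Y j x| := Finset.single_le_sum (f := fun j => |Lam κ Y j x|)
      (fun _ _ => abs_nonneg _) (Finset.mem_univ j)
    have h3 : jap x ^ (r + 2) * |Lam κ Y j x| ≤ e2 x := by
      have := jap_pos x
      simp only [he2]; gcongr
    have := hn0 x; have := hn1 x
    simp only [hE]; linarith
  set ω : ℝ → Euc n → ℝ := fun M => om s ζ M with hω
  set R : ℝ → Fin n → Fin n → Fin n → Euc n → ℝ := fun M a b j x =>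
    pd a (ω M) x * pd b (Y j) x + pd b (ω M) x * pd a (Y j) x + pd a (pd b (ω M)) x * Y j x with hR
  have hRb : ∀ M a b j x, |R M a b j x| ≤ C * E x := by
    intro M a b j x
    have hj := jap_pos x
    have t1 : |pd a (ω M) x * pd b (Y j) x| ≤ B1 * E x := by
      rw [abs_mul]
      calc _ ≤ B1 * jap x ^ (r + 1) * |pd b (Y j) x| := by gcongr; exact hB1 M a x
        _ = B1 * (jap x ^ (r + 1) * |pd b (Y j) x|) := by ring
        _ ≤ _ := by gcongr; exact hjY b j x
    have t2 : |pd b (ω M) x * pd a (Y j) x| ≤ B1 * E x := by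
      rw [abs_mul]
      calc _ ≤ B1 * jap x ^ (r + 1) * |pd a (Y j) x| := by gcongr; exact hB1 M b x
        _ = B1 * (jap x ^ (r + 1) * |pd a (Y j) x|) := by ring
        _ ≤ _ := by gcongr; exact hjY a j x
    have t3 : |pd a (pd b (ω M)) x * Y j x| ≤ B2 * E x := by
      rw [abs_mul]
      calc _ ≤ B2 * jap x ^ r * |Y j x| := by gcongr; exact hB2 M b a x
        _ = B2 * (jap x ^ r * |Y j x|) := by ring
        _ ≤ _ := by gcongr; exact hj0 j x
    have := abs_add_three (pd a (ω M) x * pd b (Y j) x) (pd b (ω M) x * pd a (Y j) x)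
      (pd a (pd b (ω M)) x * Y j x)
    simp only [hR, hC]
    linarith
  set φ : ℝ → Fin n → Euc n → ℝ := fun M j x => ω M x * Y j x with hφ
  have hωs : ∀ M, ContDiff ℝ (⊤ : ℕ∞) (ω M) := fun M => om_contDiff hζ s M
  have hφs : ∀ M j, ContDiff ℝ (⊤ : ℕ∞) (φ M j) := fun M j => (hωs M).mul (hY j)
  have hφpd : ∀ M a b j x, pd a (pd b (φ M j)) x = ω M x * pd a (pd b (Y j)) x + R M a b j x :=
    fun M a b j x => pd_pd_mul (hωs M) (hY j) a b x
  set C' := B0 + n * C + κ * (n * C) with hC'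
  have hLb : ∀ M k x, |Lam κ (φ M) k x| ≤ C' * E x := by
    intro M k x
    have hj := jap_pos x
    have e : Lam κ (φ M) k x = ω M x * Lam κ Y k x +
        (∑ i, R M i i k x + κ * ∑ i, R M k i i x) := by
      rw [lam_eq (hφs M), lam_eq hY]
      simp_rw [hφpd]
      have e3 : ∀ f g : Fin n → ℝ, ∑ i, (ω M x * f i + g i) = ω M x * ∑ i, f i + ∑ i, g i :=
        fun f g => by rw [Finset.sum_add_distrib, Finset.mul_sum]
      rw [e3 _ (fun i => R M i i k x), e3 _ (fun i => R M k i i x)]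
      ring
    have t1 : |ω M x * Lam κ Y k x| ≤ B0 * E x := by
      rw [abs_mul]
      calc _ ≤ B0 * jap x ^ (r + 2) * |Lam κ Y k x| := by gcongr; exact hB0 M x
        _ = B0 * (jap x ^ (r + 2) * |Lam κ Y k x|) := by ring
        _ ≤ _ := by gcongr; exact hjL k x
    have t2 : |∑ i, R M i i k x| ≤ n * (C * E x) :=
      (Finset.abs_sum_le_sum_abs _ _).trans
        ((Finset.sum_le_sum fun i _ => hRb M i i k x).trans (by simp))
    have t3 : |κ * ∑ i, R M k i i x| ≤ κ * (n * (C * E x)) := by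
      rw [abs_mul, abs_of_nonneg hκ]
      gcongr
      exact (Finset.abs_sum_le_sum_abs _ _).trans
        ((Finset.sum_le_sum fun i _ => hRb M k i i x).trans (by simp))
    rw [e]
    have := abs_add_three (ω M x * Lam κ Y k x) (∑ i, R M i i k x) (κ * ∑ i, R M k i i x)
    rw [← add_assoc]
    simp only [hC']
    linarith
  obtain ⟨K, hK, hcz⟩ := cz_lame (n := n) hp hκ
  have hbd : ∀ {f : Euc n → ℝ} {c : ℝ}, (∀ x, |f x| ≤ c * E x) →
      ∫⁻ x, ‖f x‖ₑ ^ p ≤ ‖c‖ₑ ^ p * ∫⁻ x, ‖E x‖ₑ ^ p := by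
    intro f c hf
    rw [← lint_const_mul hp0.le]
    refine lintegral_mono fun x => ?_
    gcongr
    exact enorm_le_iff_norm_le.2 ((hf x).trans (le_abs_self _))
  set K2 : ℝ≥0∞ := 2 ^ (p - 1) * ((K * ∑ _k : Fin n, (‖C'‖ₑ ^ p * ∫⁻ x, ‖E x‖ₑ ^ p)) +
    (‖C‖ₑ ^ p * ∫⁻ x, ‖E x‖ₑ ^ p)) with hK2
  have hK2t : K2 < ⊤ := by
    have hc : ∀ c : ℝ, ‖c‖ₑ ^ p * ∫⁻ x, ‖E x‖ₑ ^ p < ⊤ := fun c =>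
      ENNReal.mul_lt_top (ENNReal.rpow_lt_top_of_nonneg hp0.le enorm_ne_top) hEI
    refine ENNReal.mul_lt_top (two_rpow_ne_top p).lt_top (ENNReal.add_lt_top.2
      ⟨ENNReal.mul_lt_top hK.lt_top (ENNReal.sum_lt_top.2 fun _ _ => hc _), hc _⟩)
  have hM : ∀ M : ℝ, 0 < M → ∫⁻ x, ‖ω M x * pd a (pd b (Y j)) x‖ₑ ^ p ≤ K2 := by
    intro M hM
    have hφt : ∀ j, Test (φ M j) := fun j => by
      have := (om_test (n := n) hζ s hM).mul_left (hY j)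
      exact (funext fun x => mul_comm (Y j x) (ω M x) : (fun x => Y j x * ω M x) = φ M j) ▸ this
    have h3 := hcz (φ M) hφt a b j
    have h4 : ∀ x, ω M x * pd a (pd b (Y j)) x = pd a (pd b (φ M j)) x + - R M a b j x :=
      fun x => by rw [hφpd]; ring
    simp_rw [h4]
    refine (lint_add_le hp1 (contDiff_pd (contDiff_pd (hφs M j) b) a).continuous).trans ?_
    simp only [hK2]
    gcongr
    · refine h3.trans ?_
      gcongr with k
      exact hbd (hLb M k)
    · exact hbd fun x => by rw [abs_neg]; exact hRb M a b j x
  -- remove the cutoff by Fatou's lemma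
  have hlim : ∀ x, Tendsto (fun m : ℕ => ‖ω m x * pd a (pd b (Y j)) x‖ₑ ^ p) atTop
      (𝓝 ((eJ x ^ (r + 2) * ‖pd a (pd b (Y j)) x‖ₑ) ^ p)) := by
    intro x
    refine tendsto_const_nhds.congr' ?_
    obtain ⟨m0, hm0⟩ := exists_nat_ge (‖x‖ ^ 2 + 1)
    filter_upwards [eventually_ge_atTop m0] with m hm
    have : ‖x‖ ^ 2 + 1 ≤ (m : ℝ) := hm0.trans (by exact_mod_cast hm)
    simp only [hω]
    rw [om_eq hζ1 s this, es, enorm_jap_mul]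
  unfold WL
  calc ∫⁻ x, (eJ x ^ (r + 2) * ‖pd a (pd b (Y j)) x‖ₑ) ^ p
      = ∫⁻ x, liminf (fun m : ℕ => ‖ω m x * pd a (pd b (Y j)) x‖ₑ ^ p) atTop := by
        congr 1; ext x; exact (hlim x).liminf_eq.symm
    _ ≤ liminf (fun m : ℕ => ∫⁻ x, ‖ω m x * pd a (pd b (Y j)) x‖ₑ ^ p) atTop :=
        lintegral_liminf_le fun m => by
          have : Continuous fun x => ω m x * pd a (pd b (Y j)) x :=
            (hωs m).continuous.mul (contDiff_pd (contDiff_pd (hY j) b) a).continuous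
          exact (this.measurable.enorm).pow_const p
    _ ≤ K2 := by
        refine liminf_le_of_frequently_le' (Eventually.frequently ?_)
        filter_upwards [eventually_gt_atTop 0] with m hm
        exact hM m (by exact_mod_cast hm)
    _ < ⊤ := hK2t
end

/-! ### Linear theory in weighted spaces -/

section
variable {n : ℕ}

lemma lpw_lt_top_iff {p : ℝ} (hp : 0 < p) {μ : ℝ} {f : Euc n → ℝ} :
    LpW p μ f < ⊤ ↔ WL p (-μ - n / p) f := by
  unfold LpW WL
  simp_rw [LpW_integrand hp]
  rw [ENNReal.rpow_lt_top_iff_of_pos (by positivity)]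

lemma lpw_mono {F G : Type*} [NormedAddCommGroup F] [NormedAddCommGroup G] {p : ℝ} (hp : 0 < p)
    {μ : ℝ} {f : Euc n → F} {g : Euc n → G} (h : ∀ x, ‖f x‖ ≤ ‖g x‖) : LpW p μ f ≤ LpW p μ g := by
  unfold LpW
  gcongr with x
  · have := jap_pos x; positivity
  · have := jap_pos x; positivity
  · exact h x

lemma lpw_const_mul {p : ℝ} (hp : 0 < p) {μ : ℝ} {f : Euc n → ℝ} (c : ℝ) :
    LpW p μ (fun x => c * f x) = ‖c‖ₑ * LpW p μ f := by
  unfold LpW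
  simp_rw [LpW_integrand hp, enorm_mul]
  have : ∀ x : Euc n, (eJ x ^ (-μ - n / p) * (‖c‖ₑ * ‖f x‖ₑ)) ^ p =
      ‖c‖ₑ ^ p * (eJ x ^ (-μ - n / p) * ‖f x‖ₑ) ^ p := fun x => by
    rw [mul_left_comm, ENNReal.mul_rpow_of_nonneg _ _ hp.le]
  simp_rw [this]
  rw [lintegral_const_mul' _ _ (ENNReal.rpow_ne_top_of_nonneg hp.le enorm_ne_top),
    ENNReal.mul_rpow_of_nonneg _ _ (by positivity), ← ENNReal.rpow_mul, mul_one_div_cancel hp.ne',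
    ENNReal.rpow_one]

lemma par_RP (hn : 3 ≤ n) {p δ : ℝ} (hp : (n : ℝ) < p) (hδ1 : 2 - (n : ℝ) < δ) (hδ2 : δ < 0)
    {a : ℝ} (ha1 : (n : ℝ) - 2 ≤ a) (ha2 : a ≤ n - 1) : ∃ C : ℝ, 0 ≤ C ∧
    ∀ {F : Type} [NormedAddCommGroup F] (g : Euc n → F), Measurable (fun y => ‖g y‖ₑ) →
    ∀ x : Euc n, RP a g x ≤ ENNReal.ofReal C * eJ x ^ (δ - 2 + n - a) * LpW p (δ - 2) g := by
  have hn' : (3 : ℝ) ≤ n := by exact_mod_cast hn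
  have hp1 : 1 < p := by linarith
  have hp0 : 0 < p := by linarith
  have hpm : 0 < p - 1 := by linarith
  have e : (-(δ - 2) - (n : ℝ) / p) * p = (2 - δ) * p - n := by field_simp; ring
  have hnp : (n : ℝ) / p < 1 := (div_lt_one hp0).2 hp
  refine RP_pointwise hn (Real.HolderConjugate.conjExponent hp1) (by linarith) ?_ (by linarith)
    ?_ ?_
  · rw [Real.conjExponent, ← mul_div_assoc, div_lt_iff₀ hpm]
    nlinarith
  · rw [Real.conjExponent, ← mul_div_assoc, e, div_lt_iff₀ hpm]
    nlinarith
  · rw [Real.conjExponent, ← mul_div_assoc, add_mul, e, lt_div_iff₀ hpm]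
    nlinarith

lemma par_RP_Lp (hn : 3 ≤ n) {p δ : ℝ} (hp : (n : ℝ) < p) (hδ1 : 2 - (n : ℝ) < δ) (hδ2 : δ < 0)
    {m : ℝ} (hm1 : 0 < m) (hm2 : m ≤ 2) : ∃ C : ℝ, 0 ≤ C ∧
    ∀ {F : Type} [NormedAddCommGroup F] (g : Euc n → F), Measurable (fun y => ‖g y‖ₑ) →
    ∫⁻ x, (eJ x ^ (-(δ - 2 + m) - n / p) * RP (n - m) g x) ^ p ≤
      ENNReal.ofReal C * ∫⁻ x, (eJ x ^ (-(δ - 2) - n / p) * ‖g x‖ₑ) ^ p := by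
  have hn' : (3 : ℝ) ≤ n := by exact_mod_cast hn
  have hp1 : 1 < p := by linarith
  have hp0 : 0 < p := by linarith
  have hpm : 0 < p - 1 := by linarith
  have hmp : m / p < n / p := by gcongr; linarith
  have hip : 0 < 1 / p := by positivity
  have hip1 : 1 / p < 1 := by rw [div_lt_one hp0]; exact hp1
  have em : m / p = m * (1 / p) := by ring
  have en : (n : ℝ) / p = n * (1 / p) := by ring
  obtain ⟨θ, h1, h2⟩ : ∃ θ, max (m - m / p) (2 - δ - n / p) < θ ∧
      θ < min (n - n / p) (2 - δ - m / p) := by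
    apply exists_between
    rw [max_lt_iff, lt_min_iff, lt_min_iff]
    refine ⟨⟨?_, by linarith⟩, by linarith, by linarith⟩
    rw [em, en]; nlinarith
  rw [max_lt_iff] at h1
  rw [lt_min_iff] at h2
  have emp : m / p * p = m := by field_simp
  have enp : (n : ℝ) / p * p = n := by field_simp
  have eq : ∀ y, y / Real.conjExponent p = y - y / p := fun y => by
    rw [Real.conjExponent]; field_simp
  have hc : (δ - 2 + m) * p + n - (m / Real.conjExponent p - θ) * p =
      (δ - 2 + n / p + m / p + θ) * p := by
    rw [eq]
    linear_combination -enp 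
  have hq0 : 0 < Real.conjExponent p := by rw [Real.conjExponent]; positivity
  refine RP_Lp hn (θ := θ) (Real.HolderConjugate.conjExponent hp1) rfl (by linarith) hm1 ?_ ?_ ?_ ?_
  · rw [← div_lt_iff₀ hq0, eq]; linarith
  · rw [← lt_div_iff₀ hq0, eq]; linarith
  · rw [hc, ← div_lt_iff₀ hp0]; linarith
  · rw [hc, ← lt_div_iff₀ hp0]; linarith

lemma par_intW (hn : 3 ≤ n) {p δ : ℝ} (hp : (n : ℝ) < p) (hδ1 : 2 - (n : ℝ) < δ) (hδ2 : δ < 0)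
    {a : ℝ} (ha1 : (n : ℝ) - 2 ≤ a) {g : Euc n → ℝ}
    (hg : Continuous g) (h : LpW p (δ - 2) g < ⊤) : IntW a g := by
  have hn' : (3 : ℝ) ≤ n := by exact_mod_cast hn
  obtain ⟨C, hC, hR⟩ := par_RP hn hp hδ1 hδ2 (a := (n : ℝ) - 2) le_rfl (by linarith)
  refine IntW.mono (intW_of_RP hn (by linarith) hg (lt_of_le_of_lt (hR g hg.measurable.enorm 0) ?_))
    ha1
  refine ENNReal.mul_lt_top (ENNReal.mul_lt_top ENNReal.ofReal_lt_top ?_) h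
  rw [← eJ_rpow]; exact ENNReal.ofReal_lt_top

/-- Decay of potentials of `L^p_{δ-2}` functions. -/
lemma par_pot (hn : 3 ≤ n) {p δ : ℝ} (hp : (n : ℝ) < p) (hδ1 : 2 - (n : ℝ) < δ) (hδ2 : δ < 0)
    {a : ℝ} (ha1 : (n : ℝ) - 2 ≤ a) (ha2 : a ≤ n - 1) {k : Euc n → ℝ} (hk : IsKer a k) :
    ∃ C : ℝ, 0 ≤ C ∧ ∀ g : Euc n → ℝ, Continuous g → LpW p (δ - 2) g < ⊤ →
    ∀ x : Euc n, |Pot k g x| ≤ C * (LpW p (δ - 2) g).toReal * jap x ^ (δ - 2 + n - a) := by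
  obtain ⟨C, hC, hR⟩ := par_RP hn hp hδ1 hδ2 ha1 ha2
  obtain ⟨D, hD, hP⟩ := pot_enorm_le hn hk
  refine ⟨D * C, by positivity, fun g hg hgt x => ?_⟩
  have h := (hP g x).trans (mul_le_mul_right (hR g hg.measurable.enorm x) _)
  have hj := jap_pos x
  have e : ENNReal.ofReal D * (ENNReal.ofReal C * eJ x ^ (δ - 2 + n - a) * LpW p (δ - 2) g) =
      ENNReal.ofReal (D * C * (LpW p (δ - 2) g).toReal * jap x ^ (δ - 2 + n - a)) := by
    rw [ENNReal.ofReal_mul (by positivity), ENNReal.ofReal_mul (by positivity),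
      ENNReal.ofReal_mul (by positivity), ENNReal.ofReal_toReal hgt.ne, eJ_rpow]
    ring
  rw [e, ← ofReal_norm, ENNReal.ofReal_le_ofReal_iff (by positivity)] at h
  exact h

lemma par_pot_wl (hn : 3 ≤ n) {p δ : ℝ} (hp : (n : ℝ) < p) (hδ1 : 2 - (n : ℝ) < δ) (hδ2 : δ < 0)
    {m : ℝ} (hm1 : 0 < m) (hm2 : m ≤ 2) {k : Euc n → ℝ} (hk : IsKer ((n : ℝ) - m) k)
    {g : Euc n → ℝ} (hg : Continuous g) (h : LpW p (δ - 2) g < ⊤) :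
    WL p (-(δ - 2 + m) - n / p) (Pot k g) := by
  have hn' : (3 : ℝ) ≤ n := by exact_mod_cast hn
  have hp0 : 0 < p := by linarith
  obtain ⟨C, hC, hR⟩ := par_RP_Lp hn hp hδ1 hδ2 hm1 hm2
  obtain ⟨D, hD, hP⟩ := pot_enorm_le hn hk
  rw [lpw_lt_top_iff hp0] at h
  have h1 := hR g hg.measurable.enorm
  unfold WL at h ⊢
  calc _ ≤ ∫⁻ x, ENNReal.ofReal D ^ p * (eJ x ^ (-(δ - 2 + m) - n / p) * RP (n - m) g x) ^ p := by
        refine lintegral_mono fun x => ?_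
        rw [← ENNReal.mul_rpow_of_nonneg _ _ hp0.le, mul_left_comm]
        gcongr
        exact hP g x
    _ = ENNReal.ofReal D ^ p * ∫⁻ x, (eJ x ^ (-(δ - 2 + m) - n / p) * RP (n - m) g x) ^ p :=
        lintegral_const_mul' _ _ (ENNReal.rpow_ne_top_of_nonneg hp0.le ENNReal.ofReal_ne_top)
    _ < ⊤ := ENNReal.mul_lt_top (ENNReal.rpow_lt_top_of_nonneg hp0.le ENNReal.ofReal_ne_top)
        (lt_of_le_of_lt h1 (ENNReal.mul_lt_top ENNReal.ofReal_lt_top h))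

/-- Solvability of `LY = G` for `G ∈ L^p_{δ-2}`, with `Y ∈ W^{2,p}_δ`. -/
theorem lin_theory (hn : 3 ≤ n) {p δ : ℝ} (hp : (n : ℝ) < p) (hδ1 : 2 - (n : ℝ) < δ) (hδ2 : δ < 0)
    {κ : ℝ} (hκ : 0 ≤ κ) {E : Fin n → Fin n → Euc n → ℝ}
    (hE : ∀ j k, IsKer ((n : ℝ) - 2) (E j k)) (hev : ∀ j k x, E j k (-x) = E j k x)
    (hsym : ∀ j k, E j k = E k j)
    (hfund : ∀ φ : Fin n → Euc n → ℝ, (∀ j, Test (φ j)) → ∀ j x,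
        ∑ k, Pot (E j k) (Lam κ φ k) x = φ j x)
    {G : Fin n → Euc n → ℝ} (hG : ∀ k, ContDiff ℝ (⊤ : ℕ∞) (G k))
    (hGi : ∀ k, LpW p (δ - 2) (G k) < ⊤)
    {Y : Fin n → Euc n → ℝ} (hYd : Y = fun j x => ∑ k, Pot (E j k) (G k) x) :
    (∀ j, ContDiff ℝ (⊤ : ℕ∞) (Y j)) ∧ (∀ j x, Lam κ Y j x = G j x) ∧
    (∀ j, WL p (-δ - n / p) (Y j)) ∧ (∀ i j, WL p (-δ - n / p + 1) (pd i (Y j))) ∧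
    (∀ a b j, WL p (-δ - n / p + 2) (pd a (pd b (Y j)))) := by
  have hn' : (3 : ℝ) ≤ n := by exact_mod_cast hn
  have hp1 : 1 ≤ p := by linarith
  have hp0 : 0 < p := by linarith
  have hI : ∀ k, IntW ((n : ℝ) - 2) (G k) := fun k =>
    par_intW hn hp hδ1 hδ2 le_rfl (hG k).continuous (hGi k)
  obtain ⟨hY, hL⟩ := lame_solve hn hE hev hsym hfund hG hI
  rw [← hYd] at hL
  have hY : ∀ j, ContDiff ℝ (⊤ : ℕ∞) (Y j) := fun j => by rw [hYd]; exact hY j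
  have hP : ∀ j k, ContDiff ℝ (⊤ : ℕ∞) (Pot (E j k) (G k)) := fun j k =>
    pot_contDiff_top hn (by linarith) (by linarith) (hE j k) (hG k) (hI k)
  have w0 : ∀ j, WL p (-δ - n / p) (Y j) := fun j => by
    rw [hYd]
    refine WL.sum hp1 _ (fun k => (hP j k).continuous) fun k => ?_
    have := par_pot_wl hn hp hδ1 hδ2 two_pos le_rfl (hE j k) (hG k).continuous (hGi k)
    simpa using this
  have w1 : ∀ i j, WL p (-δ - n / p + 1) (pd i (Y j)) := fun i j => by
    have e : pd i (Y j) = fun x => ∑ k, pd i (Pot (E j k) (G k)) x := by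
      rw [hYd]; funext x
      exact pd_sum _ (fun k _ => (hP j k).da x) i
    rw [e]
    refine WL.sum hp1 _ (fun k => (contDiff_pd (hP j k) i).continuous) fun k => ?_
    have e2 : pd i (Pot (E j k) (G k)) = Pot (pd i (E j k)) (G k) := funext fun x =>
      pd_pot hn (by linarith) (by linarith) (hE j k) (hG k).continuous (hI k) i x
    rw [e2]
    have := par_pot_wl hn hp hδ1 hδ2 one_pos one_le_two
      (((hE j k).pd i).congr_deg (b := (n : ℝ) - 1) (by ring)) (hG k).continuous (hGi k)
    convert this using 1
    ring
  refine ⟨hY, hL, w0, w1, weighted_d2 (by linarith) hκ hY (fun k => ?_) w1 w0⟩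
  have := (lpw_lt_top_iff hp0).1 (hGi k)
  rw [funext (hL k)]
  convert this using 1
  ring

/-- `⟨x⟩^{2δ-2}` lies in `L^p_{δ-2}`. -/
lemma lpw_jap {p δ : ℝ} (hp : 0 < p) (hδ2 : δ < 0) :
    LpW p (δ - 2) (fun x : Euc n => jap x ^ (2 * δ - 2)) < ⊤ := by
  rw [lpw_lt_top_iff hp]
  unfold WL
  have h := (integrable_rpow_neg_one_add_norm_sq (E := Euc n) (μ := volume) (r := n - δ * p)
    (by simp only [finrank_euclideanSpace, Fintype.card_fin]; nlinarith)).lintegral_lt_top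
  refine lt_of_le_of_lt (le_of_eq ?_) h
  congr 1; ext x
  have hj := jap_pos x
  rw [← enorm_jap_mul, Real.enorm_of_nonneg (by positivity),
    ENNReal.ofReal_rpow_of_nonneg (by positivity) hp.le]
  congr 1
  rw [add_comm 1, jap_rpow_eq, ← Real.rpow_add hj, ← Real.rpow_mul hj.le]
  congr 1
  field_simp
  ring
end

/-! ### Sobolev norms and partial derivatives -/

section
variable {n : ℕ}

lemma abs_pd_le (f : Euc n → ℝ) (i : Fin n) (x : Euc n) : |pd i f x| ≤ ‖fderiv ℝ f x‖ := by
  have := (fderiv ℝ f x).le_opNorm (ev i)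
  simpa [pd, ev] using this

/-- The partial derivatives of a function in `W^{1,p}_μ`. -/
lemma sobW_one {p μ : ℝ} (hp : 0 < p) {f : Euc n → ℝ} (h : SobW 1 p μ f < ⊤) :
    WL p (-μ - n / p) f ∧ ∀ i, WL p (-μ - n / p + 1) (pd i f) := by
  unfold SobW at h
  rw [ENNReal.sum_lt_top] at h
  have h0 := h 0 (by simp)
  have h1 := h 1 (by simp)
  simp_rw [LpW_integrand hp] at h0 h1
  rw [ENNReal.rpow_lt_top_iff_of_pos (by positivity)] at h0 h1
  constructor
  · refine lt_of_le_of_lt (lintegral_mono fun x => ?_) h0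
    simp only [Nat.cast_zero, add_zero]
    gcongr
    exact enorm_le_iff_norm_le.2 (by simp)
  · intro i
    refine lt_of_le_of_lt (lintegral_mono fun x => ?_) h1
    simp only [Nat.cast_one]
    gcongr
    refine enorm_le_iff_norm_le.2 ?_
    rw [norm_iteratedFDeriv_one]
    exact abs_pd_le f i x

lemma exists_lap_ker_of (i0 : Fin n) {E : Fin n → Fin n → Euc n → ℝ}
    (hfund : ∀ φ : Fin n → Euc n → ℝ, (∀ j, Test (φ j)) → ∀ j x,
        ∑ k, Pot (E j k) (Lam 0 φ k) x = φ j x) (ψ : Euc n → ℝ) (hψ : Test ψ) (x : Euc n) :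
    Pot (E i0 i0) (lap ψ) x = ψ x := by
  set φ : Fin n → Euc n → ℝ := fun j => if j = i0 then ψ else fun _ => 0 with hφd
  have hφ : ∀ j, Test (φ j) := fun j => by
    simp only [hφd]; split_ifs
    · exact hψ
    · simpa using hψ.const_mul 0
  have h := hfund φ hφ i0 x
  rw [Finset.sum_eq_single i0] at h
  · have e : Lam 0 φ i0 = lap ψ := by funext y; simp [Lam, hφd]
    rw [e] at h
    simpa [hφd] using h
  · intro k _ hk
    have e : Lam 0 φ k = fun _ => 0 := by
      have e0 : ∀ i, pd i (fun _ : Euc n => (0 : ℝ)) = fun _ => 0 :=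
        fun i => funext fun y => by simp [pd]
      funext y
      simp [Lam, hφd, hk, lap, e0]
    rw [e]; simp [Pot]
  · simp

/-- Functions in `W^{1,p}_{δ-1}`, `p > n`, decay like `⟨x⟩^{δ-1}`. The product of `τ` and a cutoff
equal to `1` at `x` is a potential of its gradient, and the bounds do not depend on the cutoff. -/
lemma sob_decay (hn : 3 ≤ n) {p δ : ℝ} (hp : (n : ℝ) < p) (hδ1 : 2 - (n : ℝ) < δ) (hδ2 : δ < 0)
    {τ : Euc n → ℝ} (hτs : ContDiff ℝ (⊤ : ℕ∞) τ) (hτ : SobW 1 p (δ - 1) τ < ⊤) :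
    ∃ C : ℝ, 0 ≤ C ∧ ∀ x, |τ x| ≤ C * jap x ^ (δ - 1) := by
  have hn' : (3 : ℝ) ≤ n := by exact_mod_cast hn
  have hp0 : 0 < p := by linarith
  have hp1 : 1 ≤ p := by linarith
  obtain ⟨h0, h1⟩ := sobW_one hp0 hτ
  obtain ⟨E, hE, -, -, hfund⟩ := exists_lame_ker (n := n) hn (le_refl (0 : ℝ))
  set i0 : Fin n := ⟨0, by omega⟩
  have hker := exists_lap_ker_of i0 hfund
  have hpot := fun i => par_pot hn hp hδ1 hδ2 (a := (n : ℝ) - 1) (by linarith) le_rfl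
    (((hE i0 i0).pd i).congr_deg (b := (n : ℝ) - 1) (by ring))
  choose C hC hCb using hpot
  obtain ⟨ζ, hζ, hζ1, -⟩ := exists_prof
  obtain ⟨B0, hB00, hB0⟩ := om_bound (n := n) hζ 0
  obtain ⟨B1, hB10, hB1⟩ := om_pd_bound (n := n) hζ 0
  set H : Fin n → Euc n → ℝ := fun i x => B0 * |pd i τ x| + B1 * (jap x ^ (-1 : ℝ) * |τ x|) with hH
  have hpc := fun i => (contDiff_pd hτs i).continuous
  have hc2 : Continuous fun x => jap x ^ (-1 : ℝ) * |τ x| :=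
    (continuous_jap_rpow (-1)).mul hτs.continuous.abs
  have hHt : ∀ i, LpW p (δ - 2) (H i) < ⊤ := fun i => by
    rw [lpw_lt_top_iff hp0]
    refine WL.add hp1 (continuous_const.mul (hpc i).abs) (continuous_const.mul hc2) ?_ ?_
    · refine WL.const_mul hp0 (hpc i).abs (WL.abs hp0.le ?_) _
      convert h1 i using 1; ring
    · refine WL.const_mul hp0 hc2 (WL.shift (WL.abs hp0.le ?_)) _
      convert h0 using 1; ring
  refine ⟨∑ i, C i * (LpW p (δ - 2) (H i)).toReal,
    Finset.sum_nonneg fun i _ => mul_nonneg (hC i) ENNReal.toReal_nonneg, fun x => ?_⟩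
  set M := ‖x‖ ^ 2 + 1 with hM
  have hM0 : 0 < M := by positivity
  set ψ : Euc n → ℝ := fun x => τ x * om 0 ζ M x with hψd
  have hψ : Test ψ := (om_test (n := n) hζ 0 hM0).mul_left hτs
  have e1 : τ x = ∑ i, Pot (pd i (E i0 i0)) (pd i ψ) x := by
    have h3 : ψ x = τ x := by simp [hψd, om_eq hζ1 0 hM.ge]
    rw [← h3, ← hker ψ hψ x]
    have h4 : lap ψ = fun y => ∑ i, pd i (pd i ψ) y := rfl
    rw [h4, pot_sum hn (by linarith) (by linarith) (hE i0 i0) _ fun i => (hψ.pd i).pd i]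
    exact Finset.sum_congr rfl fun i _ =>
      (pot_pd_ker hn (by linarith) (by linarith) (hE i0 i0) (hψ.pd i) i x).symm
  have hle : ∀ i y, |pd i ψ y| ≤ H i y := fun i y => by
    rw [hψd, pd_mul (hτs.da y) ((om_contDiff hζ 0 M).da y)]
    have b0 := hB0 M y
    have b1 := hB1 M i y
    simp only [mul_zero, Real.rpow_zero, mul_one, zero_sub] at b0 b1
    refine (abs_add_le _ _).trans ?_
    rw [abs_mul, abs_mul]
    have t1 : |τ y| * |pd i (om 0 ζ M) y| ≤ |τ y| * (B1 * jap y ^ (-1 : ℝ)) := by gcongr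
    have t2 : |pd i τ y| * |om 0 ζ M y| ≤ |pd i τ y| * B0 := by gcongr
    simp only [hH]
    linarith
  have hlp : ∀ i, LpW p (δ - 2) (pd i ψ) ≤ LpW p (δ - 2) (H i) := fun i =>
    lpw_mono hp0 fun y => (hle i y).trans (le_abs_self _)
  rw [e1, Finset.sum_mul]
  refine (Finset.abs_sum_le_sum_abs _ _).trans (Finset.sum_le_sum fun i _ => ?_)
  refine (hCb i (pd i ψ) (hψ.pd i).cont (lt_of_le_of_lt (hlp i) (hHt i)) x).trans ?_
  rw [show δ - 2 + n - (n - 1) = δ - 1 by ring]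
  have := hC i
  have := jap_pos x
  gcongr
  · exact (hHt i).ne
  · exact hlp i

lemma norm_clm_le_sum {F : Type*} [NormedAddCommGroup F] [NormedSpace ℝ F] (L : Euc n →L[ℝ] F) :
    ‖L‖ ≤ ∑ i, ‖L (ev i)‖ := by
  refine L.opNorm_le_bound (by positivity) fun v => ?_
  have hv : v = ∑ i, v i • ev i := by
    ext j; simp [ev, Pi.single_apply]
  conv_lhs => rw [hv]
  rw [map_sum, Finset.sum_mul]
  refine (norm_sum_le _ _).trans (Finset.sum_le_sum fun i _ => ?_)
  rw [map_smul, norm_smul, mul_comm]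
  gcongr
  exact PiLp.norm_apply_le v i

lemma norm_fderiv_le (f : Euc n → ℝ) (x : Euc n) : ‖fderiv ℝ f x‖ ≤ ∑ i, |pd i f x| :=
  norm_clm_le_sum _

lemma norm_fderiv2_le {f : Euc n → ℝ} (hf : ContDiff ℝ (⊤ : ℕ∞) f) (x : Euc n) :
    ‖iteratedFDeriv ℝ 2 f x‖ ≤ ∑ i, ∑ j, |pd i (pd j f) x| := by
  rw [show (2 : ℕ) = 1 + 1 from rfl, ← norm_iteratedFDeriv_fderiv, norm_iteratedFDeriv_one]
  refine (norm_clm_le_sum _).trans (Finset.sum_le_sum fun i _ => ?_)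
  refine (norm_clm_le_sum _).trans (Finset.sum_le_sum fun j _ => le_of_eq ?_)
  have hd : DifferentiableAt ℝ (fderiv ℝ f) x :=
    (hf.fderiv_right (m := (⊤ : ℕ∞)) (by simp)).differentiable (by simp) x
  have e : pd j f = fun y => fderiv ℝ f y (ev j) := rfl
  rw [e, pd, fderiv_clm_apply hd (differentiableAt_const _)]
  simp [ev]

lemma sobW_of_bound {F : Type*} [NormedAddCommGroup F] [NormedSpace ℝ F] {p μ : ℝ} (hp : 0 < p)
    {f : Euc n → F} {D0 D1 D2 : Euc n → ℝ} (h0 : WL p (-μ - n / p) D0)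
    (h1 : WL p (-μ - n / p + 1) D1) (h2 : WL p (-μ - n / p + 2) D2)
    (b0 : ∀ x, ‖iteratedFDeriv ℝ 0 f x‖ ≤ D0 x) (b1 : ∀ x, ‖iteratedFDeriv ℝ 1 f x‖ ≤ D1 x)
    (b2 : ∀ x, ‖iteratedFDeriv ℝ 2 f x‖ ≤ D2 x) : SobW 2 p μ f < ⊤ := by
  have key : ∀ (j : ℕ) (D : Euc n → ℝ), WL p (-μ - n / p + j) D →
      (∀ x, ‖iteratedFDeriv ℝ j f x‖ ≤ D x) →
      (∫⁻ x, ENNReal.ofReal ((jap x ^ (-μ - (n : ℝ) / p + (j : ℝ)) *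
        ‖iteratedFDeriv ℝ j f x‖) ^ p)) ^ (1 / p) < ⊤ := by
    intro j D hD hb
    simp_rw [LpW_integrand hp]
    rw [ENNReal.rpow_lt_top_iff_of_pos (by positivity)]
    refine lt_of_le_of_lt (lintegral_mono fun x => ?_) hD
    gcongr
    exact enorm_le_iff_norm_le.2 ((hb x).trans (le_abs_self _))
  unfold SobW
  rw [Finset.sum_range_succ, Finset.sum_range_succ, Finset.sum_range_one]
  exact ENNReal.add_lt_top.2 ⟨ENNReal.add_lt_top.2 ⟨key 0 D0 (by simpa using h0) b0,
    key 1 D1 (by simpa using h1) b1⟩, key 2 D2 (by simpa using h2) b2⟩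

/-- `W^{2,p}_μ` membership of a function from its weighted partial derivatives. -/
lemma sobW_two {p μ : ℝ} (hp : 1 ≤ p) {f : Euc n → ℝ}
    (hf : ContDiff ℝ (⊤ : ℕ∞) f) (h0 : WL p (-μ - n / p) f)
    (h1 : ∀ i, WL p (-μ - n / p + 1) (pd i f))
    (h2 : ∀ a b, WL p (-μ - n / p + 2) (pd a (pd b f))) :
    SobW 2 p μ f < ⊤ := by
  have hp0 : 0 < p := by linarith
  refine sobW_of_bound hp0 (h0.abs hp0.le)
    (WL.sum hp (Finset.univ) (fun i => (contDiff_pd hf i).continuous.abs)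
      fun i => (h1 i).abs hp0.le)
    (WL.sum hp (Finset.univ)
      (fun i => continuous_finsetSum Finset.univ fun j _ =>
        (contDiff_pd (contDiff_pd hf j) i).continuous.abs)
      fun i => WL.sum hp Finset.univ (fun j => (contDiff_pd (contDiff_pd hf j) i).continuous.abs)
        fun j => (h2 i j).abs hp0.le) (fun x => by simp) (fun x => ?_) fun x => norm_fderiv2_le hf x
  rw [norm_iteratedFDeriv_one]
  exact norm_fderiv_le f x

lemma norm_iteratedFDeriv_vec {m : ℕ} {f : Euc n → Euc m} (hf : ∀ j, ContDiff ℝ (⊤ : ℕ∞) fun x => f x j)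
    (i : ℕ) (x : Euc n) :
    ‖iteratedFDeriv ℝ i f x‖ ≤ ∑ j, ‖iteratedFDeriv ℝ i (fun x => f x j) x‖ := by
  set L : Fin m → ℝ →L[ℝ] Euc m := fun j =>
    (ContinuousLinearMap.toSpanSingleton ℝ (EuclideanSpace.single j (1 : ℝ))) with hL
  have e : f = fun x => ∑ j, (L j ∘ fun x => f x j) x := by
    funext x; ext k
    simp [hL, Pi.single_apply]
  have hc : ∀ j, ContDiff ℝ (i : ℕ∞) (L j ∘ fun x => f x j) := fun j =>
    (L j).contDiff.comp ((hf j).of_le (by exact_mod_cast le_top))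
  conv_lhs => rw [e]
  rw [iteratedFDeriv_fun_sum_apply (fun j _ => (hc j).contDiffAt)]
  refine (norm_sum_le _ _).trans (Finset.sum_le_sum fun j _ => ?_)
  have h1 := (L j).norm_iteratedFDeriv_comp_left (N := (i : ℕ∞)) (n := i) (x := x)
    (f := fun x => f x j) (((hf j).of_le (by exact_mod_cast le_top)).contDiffAt) le_rfl
  refine h1.trans ?_
  have h2 : ‖L j‖ ≤ 1 := by simp [hL]
  exact mul_le_of_le_one_left (norm_nonneg _) h2

lemma sobW_two_vec {p μ : ℝ} (hp : 1 ≤ p) {m : ℕ} {f : Euc n → Euc m}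
    (hf : ∀ j, ContDiff ℝ (⊤ : ℕ∞) fun x => f x j) (h0 : ∀ j, WL p (-μ - n / p) (fun x => f x j))
    (h1 : ∀ i j, WL p (-μ - n / p + 1) (pd i (fun x => f x j)))
    (h2 : ∀ a b j, WL p (-μ - n / p + 2) (pd a (pd b (fun x => f x j)))) :
    SobW 2 p μ f < ⊤ := by
  have hp0 : 0 < p := by linarith
  have c1 := fun i j => (contDiff_pd (hf j) i).continuous.abs
  have c2 := fun i k j => (contDiff_pd (contDiff_pd (hf j) k) i).continuous.abs
  refine sobW_of_bound hp0
    (WL.sum hp Finset.univ (fun j => (hf j).continuous.abs) fun j => (h0 j).abs hp0.le)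
    (WL.sum hp Finset.univ (fun j => continuous_finsetSum Finset.univ fun i _ => c1 i j)
      fun j => WL.sum hp Finset.univ (fun i => c1 i j) fun i => (h1 i j).abs hp0.le)
    (WL.sum hp Finset.univ (fun j => continuous_finsetSum Finset.univ fun i _ =>
        continuous_finsetSum Finset.univ fun k _ => c2 i k j)
      fun j => WL.sum hp Finset.univ (fun i => continuous_finsetSum Finset.univ fun k _ => c2 i k j)
        fun i => WL.sum hp Finset.univ (fun k => c2 i k j) fun k => (h2 i k j).abs hp0.le)
    (fun x => (norm_iteratedFDeriv_vec hf 0 x).trans (by simp)) (fun x => ?_) (fun x => ?_)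
  · refine (norm_iteratedFDeriv_vec hf 1 x).trans (Finset.sum_le_sum fun j _ => ?_)
    rw [norm_iteratedFDeriv_one]
    exact norm_fderiv_le _ x
  · exact (norm_iteratedFDeriv_vec hf 2 x).trans
      (Finset.sum_le_sum fun j _ => norm_fderiv2_le (hf j) x)
end

/-! ### The fixed point problem -/

/-- Two reals bounded by `A` whose difference is at most `A * d`. -/
def BL (A d a b : ℝ) : Prop := |a| ≤ A ∧ |b| ≤ A ∧ |a - b| ≤ A * d

/-- The components of `𝒟Y`, written as potentials with kernels `D`, for the solution `Y` of the
rescaled momentum constraint with conformal factor `w`. -/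
def Sop {n : ℕ} (D : Fin n → Fin n → Fin n → Euc n → ℝ) (g h : Fin n → Euc n → ℝ) (w : Euc n → ℝ)
    (i j : Fin n) (x : Euc n) : ℝ :=
  ∑ k, (Pot (D i j k) (fun y => w y ^ Nc n * g k y) x + Pot (D i j k) (h k) x)

/-- The nonlinearity of the Lichnerowicz equation with `𝒟Y` replaced by `Sop`. -/
def Fop {n : ℕ} (D : Fin n → Fin n → Fin n → Euc n → ℝ) (g h : Fin n → Euc n → ℝ)
    (σ : Fin n → Fin n → Euc n → ℝ) (τ ρ : Euc n → ℝ) (w : Euc n → ℝ) (x : Euc n) : ℝ :=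
  cc n * (∑ i, ∑ j, (σ i j x + Sop D g h w i j x) ^ 2) * w x ^ (-(Nc n) - 1)
    - bc n * τ x ^ 2 * w x ^ (Nc n - 1) + cc n * ρ x * w x ^ (-(Nc n) / 2)

lemma BL.nonneg {A d a b : ℝ} (h : BL A d a b) : 0 ≤ A := (abs_nonneg _).trans h.1

lemma BL.add {A B d a b a' b' : ℝ} (h : BL A d a b) (h' : BL B d a' b') :
    BL (A + B) d (a + a') (b + b') := by
  refine ⟨(abs_add_le _ _).trans (add_le_add h.1 h'.1),
    (abs_add_le _ _).trans (add_le_add h.2.1 h'.2.1), ?_⟩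
  rw [show a + a' - (b + b') = (a - b) + (a' - b') by ring, add_mul]
  exact (abs_add_le _ _).trans (add_le_add h.2.2 h'.2.2)

lemma BL.neg {A d a b : ℝ} (h : BL A d a b) : BL A d (-a) (-b) := by
  refine ⟨by simpa using h.1, by simpa using h.2.1, ?_⟩
  rw [show -a - -b = -(a - b) by ring, abs_neg]
  exact h.2.2

lemma BL.mul {A B d a b a' b' : ℝ} (h : BL A d a b) (h' : BL B d a' b') :
    BL (2 * (A * B)) d (a * a') (b * b') := by
  have hA := h.nonneg
  have hB := h'.nonneg
  have hAB := mul_nonneg hA hB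
  have h1 : ∀ {s t : ℝ}, |s| ≤ A → |t| ≤ B → |s * t| ≤ A * B := fun hs ht => by
    rw [abs_mul]; exact mul_le_mul hs ht (abs_nonneg _) hA
  refine ⟨(h1 h.1 h'.1).trans (by linarith), (h1 h.2.1 h'.2.1).trans (by linarith), ?_⟩
  rw [show a * a' - b * b' = (a - b) * a' + b * (a' - b') by ring]
  refine (abs_add_le _ _).trans ?_
  rw [abs_mul, abs_mul]
  have e1 : |a - b| * |a'| ≤ (A * d) * B :=
    mul_le_mul h.2.2 h'.1 (abs_nonneg _) ((abs_nonneg _).trans h.2.2)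
  have e2 : |b| * |a' - b'| ≤ A * (B * d) := mul_le_mul h.2.1 h'.2.2 (abs_nonneg _) hA
  linarith

lemma BL.const {A d a : ℝ} (hd : 0 ≤ d) (h : |a| ≤ A) : BL A d a a :=
  ⟨h, h, by simpa using mul_nonneg ((abs_nonneg _).trans h) hd⟩

lemma BL.sum {ι : Type*} [Fintype ι] {A d : ℝ} {a b : ι → ℝ}
    (h : ∀ i, BL A d (a i) (b i)) : BL (Fintype.card ι * A) d (∑ i, a i) (∑ i, b i) := by
  have key : ∀ (f : ι → ℝ) (B : ℝ), (∀ i, |f i| ≤ B) → |∑ i, f i| ≤ Fintype.card ι * B := by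
    intro f B hf
    refine (Finset.abs_sum_le_sum_abs _ _).trans ((Finset.sum_le_sum fun i _ => hf i).trans ?_)
    simp
  refine ⟨key _ _ fun i => (h i).1, key _ _ fun i => (h i).2.1, ?_⟩
  rw [← Finset.sum_sub_distrib, mul_assoc]
  exact key _ _ fun i => (h i).2.2

/-- Powers are bounded and Lipschitz on `[1/2, 3/2]`. -/
lemma rpow_BL (q : ℝ) : ∃ K : ℝ, 0 ≤ K ∧ ∀ s ∈ Set.Icc (1 / 2 : ℝ) (3 / 2),
    ∀ t ∈ Set.Icc (1 / 2 : ℝ) (3 / 2), ∀ d, |s - t| ≤ d → BL K d (s ^ q) (t ^ q) := by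
  have hc : ∀ r : ℝ, ContinuousOn (fun s : ℝ => s ^ r) (Set.Icc (1 / 2 : ℝ) (3 / 2)) := fun r =>
    continuousOn_id.rpow_const fun x hx => Or.inl (by have := hx.1; simp only [id]; linarith)
  obtain ⟨C1, h1⟩ := isCompact_Icc.exists_bound_of_continuousOn (hc q)
  obtain ⟨C2, h2⟩ := isCompact_Icc.exists_bound_of_continuousOn
    ((hc (q - 1)).const_smul q)
  have m : (1 : ℝ) ∈ Set.Icc (1 / 2 : ℝ) (3 / 2) := by norm_num
  have hC1 := (norm_nonneg _).trans (h1 1 m)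
  have hC2 := (norm_nonneg _).trans (h2 1 m)
  refine ⟨C1 + C2, by positivity, fun s hs t ht d hd => ⟨(h1 s hs).trans (by linarith),
    (h1 t ht).trans (by linarith), ?_⟩⟩
  have h3 := (convex_Icc (1 / 2 : ℝ) (3 / 2)).norm_image_sub_le_of_norm_hasDerivWithin_le
    (f := fun s : ℝ => s ^ q) (f' := fun s => q * s ^ (q - 1)) (C := C2) (x := t) (y := s)
    (fun x hx => (Real.hasDerivAt_rpow_const
      (Or.inl (by have := hx.1; linarith))).hasDerivWithinAt)
    (fun x hx => by simpa using h2 x hx) ht hs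
  have hd0 : 0 ≤ d := (abs_nonneg _).trans hd
  calc |s ^ q - t ^ q| ≤ C2 * |s - t| := h3
    _ ≤ (C1 + C2) * d := by
      apply mul_le_mul (by linarith) hd (abs_nonneg _) (by linarith)

section
variable {n : ℕ}

lemma lpw_le_const {p δ : ℝ} (hp : 0 < p) {f g : Euc n → ℝ} {c : ℝ} (hc : 0 ≤ c)
    (h : ∀ x, |f x| ≤ c * |g x|) (hg : LpW p δ g < ⊤) :
    LpW p δ f < ⊤ ∧ (LpW p δ f).toReal ≤ c * (LpW p δ g).toReal := by
  have h1 : LpW p δ f ≤ ‖c‖ₑ * LpW p δ g := by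
    rw [← lpw_const_mul hp]
    exact lpw_mono hp fun x => by
      rw [Real.norm_eq_abs, Real.norm_eq_abs, abs_mul, abs_of_nonneg hc]; exact h x
  have h2 : ‖c‖ₑ * LpW p δ g < ⊤ := ENNReal.mul_lt_top (by simp) hg
  refine ⟨h1.trans_lt h2, (ENNReal.toReal_mono h2.ne h1).trans (le_of_eq ?_)⟩
  rw [ENNReal.toReal_mul, toReal_enorm, Real.norm_of_nonneg hc]

lemma pot_sub (hn : 3 ≤ n) {a : ℝ} (ha0 : 0 ≤ a) (ha : a < n) {k : Euc n → ℝ} (hk : IsKer a k)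
    {f g : Euc n → ℝ} (hf : Continuous f) (hfi : IntW a f) (hg : Continuous g) (hgi : IntW a g)
    (x : Euc n) : Pot k (fun y => f y - g y) x = Pot k f x - Pot k g x := by
  unfold Pot
  rw [← integral_sub (pot_integrable hn ha0 ha hk hf hfi x) (pot_integrable hn ha0 ha hk hg hgi x)]
  simp only [sub_smul]

/-- Bounds for the potentials `Sop`, with constants depending on `h` only through its norm. -/
lemma sop_bl (hn : 3 ≤ n) {p δ : ℝ} (hp : (n : ℝ) < p) (hδ1 : 2 - (n : ℝ) < δ) (hδ2 : δ < 0)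
    {D : Fin n → Fin n → Fin n → Euc n → ℝ} (hD : ∀ i j k, IsKer ((n : ℝ) - 1) (D i j k))
    {g : Fin n → Euc n → ℝ} (hg : ∀ k, Continuous (g k)) (hgi : ∀ k, LpW p (δ - 2) (g k) < ⊤) :
    ∃ C : ℝ, 0 ≤ C ∧ ∀ h : Fin n → Euc n → ℝ, (∀ k, Continuous (h k)) →
      (∀ k, LpW p (δ - 2) (h k) ≤ 1) → ∀ w w' : Euc n → ℝ, Continuous w → Continuous w' →
      (∀ x, w x ∈ Set.Icc (1 / 2 : ℝ) (3 / 2)) → (∀ x, w' x ∈ Set.Icc (1 / 2 : ℝ) (3 / 2)) →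
      ∀ d, (∀ x, |w x - w' x| ≤ d) → ∀ i j x,
      BL (C * jap x ^ (δ - 1)) d (Sop D g h w i j x) (Sop D g h w' i j x) := by
  have hn3 : (3 : ℝ) ≤ n := by exact_mod_cast hn
  have hp0 : 0 < p := by linarith
  obtain ⟨K, hK, hKB⟩ := rpow_BL (Nc n)
  choose c hc0 hc using fun i j k =>
    par_pot hn hp hδ1 hδ2 (by linarith) (le_refl ((n : ℝ) - 1)) (hD i j k)
  set Cd : ℝ := ∑ i, ∑ j, ∑ k, c i j k * (K * (LpW p (δ - 2) (g k)).toReal + 1) with hCd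
  have ht0 : ∀ i j k, 0 ≤ c i j k * (K * (LpW p (δ - 2) (g k)).toReal + 1) := fun i j k =>
    mul_nonneg (hc0 i j k) (by positivity)
  have hle : ∀ i j k, c i j k * (K * (LpW p (δ - 2) (g k)).toReal + 1) ≤ Cd := by
    intro i j k
    refine (Finset.single_le_sum (f := fun k => c i j k * (K * (LpW p (δ - 2) (g k)).toReal + 1))
      (fun k _ => ht0 i j k) (Finset.mem_univ k)).trans ?_
    refine (Finset.single_le_sum
      (f := fun j => ∑ k, c i j k * (K * (LpW p (δ - 2) (g k)).toReal + 1))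
      (fun j _ => Finset.sum_nonneg fun k _ => ht0 i j k) (Finset.mem_univ j)).trans ?_
    exact Finset.single_le_sum
      (f := fun i => ∑ j, ∑ k, c i j k * (K * (LpW p (δ - 2) (g k)).toReal + 1))
      (fun i _ => Finset.sum_nonneg fun j _ => Finset.sum_nonneg fun k _ => ht0 i j k)
      (Finset.mem_univ i)
  have hCd0 : 0 ≤ Cd := Finset.sum_nonneg fun i _ => Finset.sum_nonneg fun j _ =>
    Finset.sum_nonneg fun k _ => ht0 i j k
  refine ⟨n * (Cd + Cd), by positivity, ?_⟩
  intro h hh hhi w w' hw hw' hwI hwI' d hd i j x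
  have hd0 : 0 ≤ d := (abs_nonneg _).trans (hd 0)
  have hB := fun y => hKB (w y) (hwI y) (w' y) (hwI' y) d (hd y)
  have hcw : ∀ {w : Euc n → ℝ}, Continuous w → (∀ x, w x ∈ Set.Icc (1 / 2 : ℝ) (3 / 2)) →
      ∀ k, Continuous fun y => w y ^ Nc n * g k y := fun hw hI k =>
    (hw.rpow_const fun x => Or.inl (by have := (hI x).1; linarith)).mul (hg k)
  have l1 : ∀ k, LpW p (δ - 2) (fun y => w y ^ Nc n * g k y) < ⊤ ∧
      (LpW p (δ - 2) (fun y => w y ^ Nc n * g k y)).toReal ≤ K * (LpW p (δ - 2) (g k)).toReal :=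
    fun k => lpw_le_const hp0 hK (fun y => by
      rw [abs_mul]; exact mul_le_mul_of_nonneg_right (hB y).1 (abs_nonneg _)) (hgi k)
  have l2 : ∀ k, LpW p (δ - 2) (fun y => w' y ^ Nc n * g k y) < ⊤ ∧
      (LpW p (δ - 2) (fun y => w' y ^ Nc n * g k y)).toReal ≤ K * (LpW p (δ - 2) (g k)).toReal :=
    fun k => lpw_le_const hp0 hK (fun y => by
      rw [abs_mul]; exact mul_le_mul_of_nonneg_right (hB y).2.1 (abs_nonneg _)) (hgi k)
  have l3 : ∀ k, LpW p (δ - 2) (fun y => w y ^ Nc n * g k y - w' y ^ Nc n * g k y) < ⊤ ∧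
      (LpW p (δ - 2) (fun y => w y ^ Nc n * g k y - w' y ^ Nc n * g k y)).toReal
        ≤ (K * d) * (LpW p (δ - 2) (g k)).toReal :=
    fun k => lpw_le_const hp0 (mul_nonneg hK hd0) (fun y => by
      rw [← sub_mul, abs_mul]
      exact mul_le_mul_of_nonneg_right (hB y).2.2 (abs_nonneg _)) (hgi k)
  have hjp : 0 ≤ jap x ^ (δ - 1) := (Real.rpow_pos_of_pos (jap_pos x) _).le
  have ex : δ - 2 + n - ((n : ℝ) - 1) = δ - 1 := by ring
  have P : ∀ k, ∀ f : Euc n → ℝ, Continuous f → LpW p (δ - 2) f < ⊤ → ∀ r,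
      0 ≤ r → (LpW p (δ - 2) f).toReal ≤ r * (K * (LpW p (δ - 2) (g k)).toReal + 1) →
      |Pot (D i j k) f x| ≤ Cd * jap x ^ (δ - 1) * r := by
    intro k f hf hfi r hr hfr
    refine (hc i j k f hf hfi x).trans ?_
    rw [ex]
    have e1 : c i j k * (LpW p (δ - 2) f).toReal
        ≤ c i j k * (r * (K * (LpW p (δ - 2) (g k)).toReal + 1)) :=
      mul_le_mul_of_nonneg_left hfr (hc0 i j k)
    have e2 := mul_le_mul_of_nonneg_right (hle i j k) hr
    calc _ ≤ (Cd * r) * jap x ^ (δ - 1) :=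
          mul_le_mul_of_nonneg_right (by linarith) hjp
      _ = _ := by ring
  have main : ∀ k, BL ((Cd + Cd) * jap x ^ (δ - 1)) d
      (Pot (D i j k) (fun y => w y ^ Nc n * g k y) x + Pot (D i j k) (h k) x)
      (Pot (D i j k) (fun y => w' y ^ Nc n * g k y) x + Pot (D i j k) (h k) x) := by
    intro k
    have q0 : 0 ≤ (LpW p (δ - 2) (g k)).toReal := ENNReal.toReal_nonneg
    rw [add_mul]
    refine BL.add ⟨?_, ?_, ?_⟩ (BL.const hd0 ?_)
    · simpa using P k _ (hcw hw hwI k) (l1 k).1 1 zero_le_one (by linarith [(l1 k).2])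
    · simpa using P k _ (hcw hw' hwI' k) (l2 k).1 1 zero_le_one (by linarith [(l2 k).2])
    · rw [← pot_sub hn (by linarith) (by linarith) (hD i j k) (hcw hw hwI k)
        (par_intW hn hp hδ1 hδ2 (by linarith) (hcw hw hwI k) (l1 k).1) (hcw hw' hwI' k)
        (par_intW hn hp hδ1 hδ2 (by linarith) (hcw hw' hwI' k) (l2 k).1)]
      refine P k (fun y => w y ^ Nc n * g k y - w' y ^ Nc n * g k y)
        ((hcw hw hwI k).sub (hcw hw' hwI' k)) (l3 k).1 d hd0 ((l3 k).2.trans ?_)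
      linarith
    · have hk1 : (LpW p (δ - 2) (h k)).toReal ≤ 1 := by
        simpa using ENNReal.toReal_mono ENNReal.one_ne_top (hhi k)
      have q1 : 0 ≤ K * (LpW p (δ - 2) (g k)).toReal := by positivity
      simpa using P k _ (hh k) ((hhi k).trans_lt ENNReal.one_lt_top) 1 zero_le_one (by linarith)
  have := BL.sum main
  unfold Sop
  simpa [mul_assoc] using this

/-- The nonlinearity is bounded and Lipschitz in `w` with weight `⟨x⟩^{2δ-2}`. -/
lemma fop_bl (hn : 3 ≤ n) {p δ : ℝ} (hp : (n : ℝ) < p) (hδ1 : 2 - (n : ℝ) < δ) (hδ2 : δ < 0)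
    {D : Fin n → Fin n → Fin n → Euc n → ℝ} (hD : ∀ i j k, IsKer ((n : ℝ) - 1) (D i j k))
    {g : Fin n → Euc n → ℝ} (hg : ∀ k, Continuous (g k)) (hgi : ∀ k, LpW p (δ - 2) (g k) < ⊤)
    {τ : Euc n → ℝ} {Ct : ℝ} (hτ : ∀ x, |τ x| ≤ Ct * jap x ^ (δ - 1)) :
    ∃ C : ℝ, 0 ≤ C ∧ ∀ h : Fin n → Euc n → ℝ, (∀ k, Continuous (h k)) →
      (∀ k, LpW p (δ - 2) (h k) ≤ 1) → ∀ σ : Fin n → Fin n → Euc n → ℝ,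
      (∀ i j x, |σ i j x| ≤ jap x ^ (δ - 1)) → ∀ ρ : Euc n → ℝ,
      (∀ x, |ρ x| ≤ jap x ^ (2 * δ - 2)) → ∀ w w' : Euc n → ℝ, Continuous w → Continuous w' →
      (∀ x, w x ∈ Set.Icc (1 / 2 : ℝ) (3 / 2)) → (∀ x, w' x ∈ Set.Icc (1 / 2 : ℝ) (3 / 2)) →
      ∀ d, (∀ x, |w x - w' x| ≤ d) → ∀ x,
      BL (C * jap x ^ (2 * δ - 2)) d (Fop D g h σ τ ρ w x) (Fop D g h σ τ ρ w' x) := by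
  obtain ⟨Cs, hCs, hS⟩ := sop_bl hn hp hδ1 hδ2 hD hg hgi
  obtain ⟨K1, hK1, hB1⟩ := rpow_BL (-(Nc n) - 1)
  obtain ⟨K2, hK2, hB2⟩ := rpow_BL (Nc n - 1)
  obtain ⟨K3, hK3, hB3⟩ := rpow_BL (-(Nc n) / 2)
  refine ⟨2 * (2 * (|cc n| * (n * (n * (2 * ((1 + Cs) * (1 + Cs)))))) * K1) +
    2 * (|bc n| * Ct ^ 2 * K2) + 2 * (|cc n| * K3), by positivity, ?_⟩
  intro h hh hhi σ hσ ρ hρ w w' hw hw' hwI hwI' d hd x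
  have hd0 : 0 ≤ d := (abs_nonneg _).trans (hd 0)
  set P := jap x ^ (δ - 1) with hP
  have hP0 : 0 < P := Real.rpow_pos_of_pos (jap_pos x) _
  have hPP : jap x ^ (2 * δ - 2) = P * P := by
    rw [hP, ← Real.rpow_add (jap_pos x)]; ring_nf
  have b1 := hB1 _ (hwI x) _ (hwI' x) d (hd x)
  have b2 := hB2 _ (hwI x) _ (hwI' x) d (hd x)
  have b3 := hB3 _ (hwI x) _ (hwI' x) d (hd x)
  have s1 : ∀ i j, BL (2 * ((P + Cs * P) * (P + Cs * P))) d
      ((σ i j x + Sop D g h w i j x) ^ 2) ((σ i j x + Sop D g h w' i j x) ^ 2) := by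
    intro i j
    have := (BL.const hd0 (hσ i j x)).add (hS h hh hhi w w' hw hw' hwI hwI' d hd i j x)
    rw [sq, sq]
    exact this.mul this
  have t1 := ((BL.const hd0 (le_refl |cc n|)).mul (BL.sum fun i => BL.sum fun j => s1 i j)).mul b1
  have t2 := ((BL.const (A := |bc n| * (Ct ^ 2 * (P * P))) hd0
    (show |bc n * τ x ^ 2| ≤ _ by
      rw [abs_mul, abs_pow]
      gcongr
      calc |τ x| ^ 2 ≤ (Ct * P) ^ 2 := by gcongr; exact hτ x
        _ = _ := by ring)).mul b2).neg
  have t3 := (BL.const (A := |cc n| * (P * P)) hd0 (show |cc n * ρ x| ≤ _ by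
      rw [abs_mul, ← hPP]
      gcongr
      exact hρ x)).mul b3
  have := (t1.add t2).add t3
  simp only [Fintype.card_fin] at this
  unfold Fop
  convert this using 1
  · rw [hPP]; ring
  · ring
  · ring

end

/-! ### Contraction and regularity -/

section
variable {n : ℕ}

lemma contDiff_rpow_of_ge {m : ℕ} {w : Euc n → ℝ} (hw : ContDiff ℝ m w)
    (hI : ∀ x, w x ∈ Set.Icc (1 / 2 : ℝ) (3 / 2)) (q : ℝ) : ContDiff ℝ m fun x => w x ^ q :=
  hw.rpow_const_of_ne fun x => by have := (hI x).1; intro h; linarith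

lemma lpw_rpow_mul {p δ : ℝ} (hp : 0 < p) {w g : Euc n → ℝ}
    (hI : ∀ x, w x ∈ Set.Icc (1 / 2 : ℝ) (3 / 2)) (q : ℝ) (hg : LpW p δ g < ⊤) :
    LpW p δ (fun y => w y ^ q * g y) < ⊤ := by
  obtain ⟨K, hK, hB⟩ := rpow_BL q
  refine (lpw_le_const hp hK (fun y => ?_) hg).1
  rw [abs_mul]
  exact mul_le_mul_of_nonneg_right (hB _ (hI y) _ (hI y) 0 (by simp)).1 (abs_nonneg _)

lemma sop_contDiff (hn : 3 ≤ n) {p δ : ℝ} (hp : (n : ℝ) < p) (hδ1 : 2 - (n : ℝ) < δ) (hδ2 : δ < 0)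
    {D : Fin n → Fin n → Fin n → Euc n → ℝ} (hD : ∀ i j k, IsKer ((n : ℝ) - 1) (D i j k))
    {m : ℕ} {g h : Fin n → Euc n → ℝ} (hg : ∀ k, ContDiff ℝ m (g k))
    (hgi : ∀ k, LpW p (δ - 2) (g k) < ⊤) (hh : ∀ k, ContDiff ℝ m (h k))
    (hhi : ∀ k, LpW p (δ - 2) (h k) < ⊤) {w : Euc n → ℝ} (hw : ContDiff ℝ m w)
    (hI : ∀ x, w x ∈ Set.Icc (1 / 2 : ℝ) (3 / 2)) (i j : Fin n) :
    ContDiff ℝ m (Sop D g h w i j) := by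
  have hn3 : (3 : ℝ) ≤ n := by exact_mod_cast hn
  unfold Sop
  refine ContDiff.sum fun k _ => ContDiff.add ?_ ?_
  · have hc := (contDiff_rpow_of_ge hw hI (Nc n)).mul (hg k)
    exact pot_contDiff hn (by linarith) (by linarith) (hD i j k) m hc
      (par_intW hn hp hδ1 hδ2 (by linarith) hc.continuous
        (lpw_rpow_mul (by linarith) hI (Nc n) (hgi k)))
  · exact pot_contDiff hn (by linarith) (by linarith) (hD i j k) m (hh k)
      (par_intW hn hp hδ1 hδ2 (by linarith) (hh k).continuous (hhi k))

lemma fop_contDiff (hn : 3 ≤ n) {p δ : ℝ} (hp : (n : ℝ) < p) (hδ1 : 2 - (n : ℝ) < δ) (hδ2 : δ < 0)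
    {D : Fin n → Fin n → Fin n → Euc n → ℝ} (hD : ∀ i j k, IsKer ((n : ℝ) - 1) (D i j k))
    {m : ℕ} {g h : Fin n → Euc n → ℝ} (hg : ∀ k, ContDiff ℝ m (g k))
    (hgi : ∀ k, LpW p (δ - 2) (g k) < ⊤) (hh : ∀ k, ContDiff ℝ m (h k))
    (hhi : ∀ k, LpW p (δ - 2) (h k) < ⊤) {σ : Fin n → Fin n → Euc n → ℝ}
    (hσ : ∀ i j, ContDiff ℝ m (σ i j)) {τ ρ : Euc n → ℝ} (hτ : ContDiff ℝ m τ)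
    (hρ : ContDiff ℝ m ρ) {w : Euc n → ℝ} (hw : ContDiff ℝ m w)
    (hI : ∀ x, w x ∈ Set.Icc (1 / 2 : ℝ) (3 / 2)) :
    ContDiff ℝ m (Fop D g h σ τ ρ w) := by
  have hr := contDiff_rpow_of_ge hw hI
  unfold Fop
  refine (((contDiff_const.mul (ContDiff.sum fun i _ => ContDiff.sum fun j _ =>
    ((hσ i j).add (sop_contDiff hn hp hδ1 hδ2 hD hg hgi hh hhi hw hI i j)).pow 2)).mul (hr _)).sub
    ((contDiff_const.mul (hτ.pow 2)).mul (hr _))).add ((contDiff_const.mul hρ).mul (hr _))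

/-- A potential has one more derivative than its density. -/
lemma pot_contDiff_succ (hn : 3 ≤ n) {a : ℝ} (ha0 : 0 ≤ a) (ha : a + 1 < n) {k : Euc n → ℝ}
    (hk : IsKer a k) {g : Euc n → ℝ} (m : ℕ) (hg : ContDiff ℝ m g) (hgi : IntW a g) :
    ContDiff ℝ (m + 1 : ℕ) (Pot k g) := by
  have hd := pot_hasFDerivAt hn ha0 ha hk hg.continuous hgi
  have e : fderiv ℝ (Pot k g) = Pot (fderiv ℝ k) g := funext fun x => (hd x).fderiv
  push_cast
  refine contDiff_succ_iff_fderiv.2 ⟨fun x => (hd x).differentiableAt, by simp, ?_⟩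
  rw [e]
  exact pot_contDiff hn (by linarith) ha hk.fderiv m hg (hgi.mono (by linarith))

/-- Existence, by contraction, of a solution of the integral equation
`w = 1 - lam E₀ * F(w)` for small `lam`, uniformly over bounded data. -/
lemma exists_fixed (hn : 3 ≤ n) {p δ : ℝ} (hp : (n : ℝ) < p) (hδ1 : 2 - (n : ℝ) < δ) (hδ2 : δ < 0)
    {D : Fin n → Fin n → Fin n → Euc n → ℝ} (hD : ∀ i j k, IsKer ((n : ℝ) - 1) (D i j k))
    {E0 : Euc n → ℝ} (hE0 : IsKer ((n : ℝ) - 2) E0)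
    {g : Fin n → Euc n → ℝ} (hg : ∀ k, Continuous (g k)) (hgi : ∀ k, LpW p (δ - 2) (g k) < ⊤)
    {τ : Euc n → ℝ} (hτc : Continuous τ) {Ct : ℝ} (hτ : ∀ x, |τ x| ≤ Ct * jap x ^ (δ - 1)) :
    ∃ Λ : ℝ, 0 < Λ ∧ ∀ lam, 0 < lam → lam ≤ Λ →
      ∀ h : Fin n → Euc n → ℝ, (∀ k, Continuous (h k)) →
      (∀ k, LpW p (δ - 2) (h k) ≤ 1) → ∀ σ : Fin n → Fin n → Euc n → ℝ,
      (∀ i j, Continuous (σ i j)) →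
      (∀ i j x, |σ i j x| ≤ jap x ^ (δ - 1)) → ∀ ρ : Euc n → ℝ, Continuous ρ →
      (∀ x, |ρ x| ≤ jap x ^ (2 * δ - 2)) → ∃ w : Euc n → ℝ, Continuous w ∧
      (∀ x, w x ∈ Set.Icc (1 / 2 : ℝ) (3 / 2)) ∧
      LpW p (δ - 2) (Fop D g h σ τ ρ w) < ⊤ ∧
      ∀ x, w x = 1 - lam * Pot E0 (Fop D g h σ τ ρ w) x := by
  have hn3 : (3 : ℝ) ≤ n := by exact_mod_cast hn
  have hp0 : 0 < p := by linarith
  obtain ⟨K, hK, hF⟩ := fop_bl hn hp hδ1 hδ2 hD hg hgi hτ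
  obtain ⟨C, hC, hP⟩ := par_pot hn hp hδ1 hδ2 (le_refl ((n : ℝ) - 2)) (by linarith) hE0
  set M := (LpW p (δ - 2) (fun x : Euc n => jap x ^ (2 * δ - 2))).toReal with hM
  have hM0 : 0 ≤ M := ENNReal.toReal_nonneg
  have hQ0 : 0 ≤ C * (K * M) := by positivity
  refine ⟨1 / (2 * (C * (K * M) + 1)), by positivity, ?_⟩
  intro lam hl0 hl h hh hhi σ hσc hσ ρ hρc hρ
  have hlQ : lam * (C * (K * M)) ≤ 1 / 2 := by
    have h1 : lam * (2 * (C * (K * M) + 1)) ≤ 1 := (le_div_iff₀ (by positivity)).1 hl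
    linarith
  have hJ : ∀ x : Euc n, |jap x ^ (2 * δ - 2)| = jap x ^ (2 * δ - 2) := fun x =>
    abs_of_pos (Real.rpow_pos_of_pos (jap_pos x) _)
  have hhi' : ∀ k, LpW p (δ - 2) (h k) < ⊤ := fun k => (hhi k).trans_lt ENNReal.one_lt_top
  -- the potential of a density bounded by `K d ⟨x⟩^{2δ-2}`
  have hpot : ∀ (f : Euc n → ℝ) (d : ℝ), 0 ≤ d → Continuous f →
      (∀ x, |f x| ≤ K * jap x ^ (2 * δ - 2) * d) →
      LpW p (δ - 2) f < ⊤ ∧ ∀ x, |lam * Pot E0 f x| ≤ 1 / 2 * d := by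
    intro f d hd hf hfb
    obtain ⟨l1, l2⟩ := lpw_le_const (f := f) hp0 (mul_nonneg hK hd)
      (fun x => by rw [hJ]; linarith [hfb x]) (lpw_jap (n := n) hp0 hδ2)
    refine ⟨l1, fun x => ?_⟩
    have hj : jap x ^ (δ - 2 + n - ((n : ℝ) - 2)) ≤ 1 :=
      Real.rpow_le_one_of_one_le_of_nonpos (jap_ge_one x) (by linarith)
    have h1 : |Pot E0 f x| ≤ C * (K * d * M) := by
      refine (hP f hf l1 x).trans ?_
      refine (mul_le_of_le_one_right (mul_nonneg hC ENNReal.toReal_nonneg) hj).trans ?_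
      exact mul_le_mul_of_nonneg_left l2 hC
    rw [abs_mul, abs_of_pos hl0]
    calc lam * |Pot E0 f x| ≤ lam * (C * (K * d * M)) := mul_le_mul_of_nonneg_left h1 hl0.le
      _ = lam * (C * (K * M)) * d := by ring
      _ ≤ _ := mul_le_mul_of_nonneg_right hlQ hd
  -- truncation keeps the conformal factor in `[1/2, 3/2]`
  set cl : (BoundedContinuousFunction (Euc n) ℝ) → Euc n → ℝ :=
    fun v x => 1 + max (-(1 / 2)) (min (v x) (1 / 2)) with hcl
  have hclc : ∀ v, Continuous (cl v) := fun v =>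
    continuous_const.add (continuous_const.max (v.continuous.min continuous_const))
  have hclI : ∀ v x, cl v x ∈ Set.Icc (1 / 2 : ℝ) (3 / 2) := by
    intro v x
    have h1 : -(1 / 2 : ℝ) ≤ max (-(1 / 2)) (min (v x) (1 / 2)) := le_max_left _ _
    have h2 : max (-(1 / 2 : ℝ)) (min (v x) (1 / 2)) ≤ 1 / 2 :=
      max_le (by norm_num) (min_le_right _ _)
    simp only [hcl]
    constructor <;> linarith
  have hcld : ∀ v v' x, |cl v x - cl v' x| ≤ dist v v' := by
    intro v v' x
    simp only [hcl]
    rw [add_sub_add_left_eq_sub]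
    rw [max_comm, max_comm (-(1 / 2))]
    refine (abs_max_sub_max_le_abs _ _ _).trans ?_
    refine (abs_min_sub_min_le_max _ _ _ _).trans ?_
    rw [sub_self, abs_zero, max_eq_left (abs_nonneg _), ← Real.dist_eq]
    exact BoundedContinuousFunction.dist_coe_le_dist x
  have hFc : ∀ v, Continuous (Fop D g h σ τ ρ (cl v)) := fun v =>
    (fop_contDiff hn hp hδ1 hδ2 hD (m := 0) (fun k => contDiff_zero.2 (hg k)) hgi
      (fun k => contDiff_zero.2 (hh k)) hhi' (fun i j => contDiff_zero.2 (hσc i j))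
      (contDiff_zero.2 hτc) (contDiff_zero.2 hρc) (contDiff_zero.2 (hclc v)) (hclI v)).continuous
  have hFB := fun v v' => hF h hh hhi σ hσ ρ hρ (cl v) (cl v') (hclc v) (hclc v') (hclI v)
    (hclI v') (dist v v') (hcld v v')
  have hF1 := fun v => hpot (Fop D g h σ τ ρ (cl v)) 1 zero_le_one (hFc v)
    fun x => by simpa using (hFB v v x).1
  have hFi : ∀ v, IntW ((n : ℝ) - 2) (Fop D g h σ τ ρ (cl v)) := fun v =>
    par_intW hn hp hδ1 hδ2 le_rfl (hFc v) (hF1 v).1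
  have hTc : ∀ v, Continuous fun x => -(lam * Pot E0 (Fop D g h σ τ ρ (cl v)) x) := fun v =>
    (continuous_const.mul (pot_contDiff hn (by linarith) (by linarith) hE0 0
      (contDiff_zero.2 (hFc v)) (hFi v)).continuous).neg
  set T : BoundedContinuousFunction (Euc n) ℝ → BoundedContinuousFunction (Euc n) ℝ := fun v =>
    BoundedContinuousFunction.ofNormedAddCommGroup
      (fun x => -(lam * Pot E0 (Fop D g h σ τ ρ (cl v)) x)) (hTc v) (1 / 2 * 1) (fun x => by
        rw [norm_neg]; exact (hF1 v).2 x) with hT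
  have hTlip : LipschitzWith (1 / 2 : NNReal) T := by
    refine LipschitzWith.of_dist_le_mul fun v v' => ?_
    refine (BoundedContinuousFunction.dist_le (by positivity)).2 fun x => ?_
    have h1 := (hpot (fun y => Fop D g h σ τ ρ (cl v) y - Fop D g h σ τ ρ (cl v') y) (dist v v')
      dist_nonneg ((hFc v).sub (hFc v')) fun y => (hFB v v' y).2.2).2 x
    rw [pot_sub hn (by linarith) (by linarith) hE0 (hFc v) (hFi v) (hFc v') (hFi v')] at h1
    simp only [hT, BoundedContinuousFunction.coe_ofNormedAddCommGroup]
    rw [Real.dist_eq, ← abs_neg]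
    refine le_trans (le_of_eq ?_) (h1.trans (le_of_eq ?_))
    · congr 1; ring
    · simp
  have hTc : ContractingWith (1 / 2 : NNReal) T := ⟨by
    rw [← NNReal.coe_lt_coe]; norm_num, hTlip⟩
  set v := hTc.fixedPoint T with hv
  have hfix : T v = v := hTc.fixedPoint_isFixedPt
  have hvx : ∀ x, v x = -(lam * Pot E0 (Fop D g h σ τ ρ (cl v)) x) := fun x =>
    (DFunLike.congr_fun hfix x).symm
  refine ⟨cl v, hclc v, hclI v, (hF1 v).1, fun x => ?_⟩
  have hb : |v x| ≤ 1 / 2 := by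
    rw [hvx, abs_neg]; simpa using (hF1 v).2 x
  have hb' := abs_le.1 hb
  have : cl v x = 1 + v x := by
    simp only [hcl]
    rw [min_eq_left hb'.2, max_eq_right hb'.1]
  rw [this]
  linarith [hvx x]

/-- Smoothness of solutions of the integral equation: if `w` is `C^m`, so is the density, and its
potential is `C^{m+1}`. -/
lemma fixed_smooth (hn : 3 ≤ n) {p δ : ℝ} (hp : (n : ℝ) < p) (hδ1 : 2 - (n : ℝ) < δ) (hδ2 : δ < 0)
    {D : Fin n → Fin n → Fin n → Euc n → ℝ} (hD : ∀ i j k, IsKer ((n : ℝ) - 1) (D i j k))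
    {E0 : Euc n → ℝ} (hE0 : IsKer ((n : ℝ) - 2) E0)
    {g h : Fin n → Euc n → ℝ} (hg : ∀ k, ContDiff ℝ (⊤ : ℕ∞) (g k))
    (hgi : ∀ k, LpW p (δ - 2) (g k) < ⊤) (hh : ∀ k, ContDiff ℝ (⊤ : ℕ∞) (h k))
    (hhi : ∀ k, LpW p (δ - 2) (h k) < ⊤) {σ : Fin n → Fin n → Euc n → ℝ}
    (hσ : ∀ i j, ContDiff ℝ (⊤ : ℕ∞) (σ i j)) {τ ρ : Euc n → ℝ} (hτ : ContDiff ℝ (⊤ : ℕ∞) τ)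
    (hρ : ContDiff ℝ (⊤ : ℕ∞) ρ) {w : Euc n → ℝ} (hw : Continuous w)
    (hI : ∀ x, w x ∈ Set.Icc (1 / 2 : ℝ) (3 / 2))
    (hF : LpW p (δ - 2) (Fop D g h σ τ ρ w) < ⊤) {lam : ℝ}
    (hfix : ∀ x, w x = 1 - lam * Pot E0 (Fop D g h σ τ ρ w) x) :
    ContDiff ℝ (⊤ : ℕ∞) w ∧ ContDiff ℝ (⊤ : ℕ∞) (Fop D g h σ τ ρ w) := by
  have hn3 : (3 : ℝ) ≤ n := by exact_mod_cast hn
  have down : ∀ {f : Euc n → ℝ}, ContDiff ℝ (⊤ : ℕ∞) f → ∀ m : ℕ, ContDiff ℝ m f :=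
    fun hf m => contDiff_infty.1 hf m
  have hFm : ∀ m : ℕ, ContDiff ℝ m w → ContDiff ℝ m (Fop D g h σ τ ρ w) := fun m hwm =>
    fop_contDiff hn hp hδ1 hδ2 hD (fun k => down (hg k) m) hgi (fun k => down (hh k) m) hhi
      (fun i j => down (hσ i j) m) (down hτ m) (down hρ m) hwm hI
  have hFi := par_intW hn hp hδ1 hδ2 le_rfl (hFm 0 (contDiff_zero.2 hw)).continuous hF
  have hall : ∀ m : ℕ, ContDiff ℝ m w := by
    intro m
    induction m with
    | zero => exact contDiff_zero.2 hw
    | succ m ih =>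
      have := pot_contDiff_succ hn (by linarith) (by linarith) hE0 m (hFm m ih) hFi
      rw [show w = fun x => 1 - lam * Pot E0 (Fop D g h σ τ ρ w) x from funext hfix]
      exact contDiff_const.sub (contDiff_const.mul this)
  exact ⟨contDiff_infty.2 hall, contDiff_infty.2 fun m => hFm m (hall m)⟩

end

/-! ### Solving the system -/

/-- The kernels representing `𝒟Y` when `Y` has the matrix kernel `E`. -/
def Dker {n : ℕ} (E : Fin n → Fin n → Euc n → ℝ) (i j k : Fin n) (x : Euc n) : ℝ :=
  pd i (E j k) x + pd j (E i k) x +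
    (-(2 / (n : ℝ) * (if i = j then 1 else 0))) • ∑ l, pd l (E l k) x

section
variable {n : ℕ}

lemma isKer_sum {ι : Type*} (s : Finset ι) {a : ℝ} {k : ι → Euc n → ℝ}
    (h : ∀ i, IsKer a (k i)) : IsKer a (fun x => ∑ i ∈ s, k i x) := by
  classical
  induction s using Finset.induction_on with
  | empty => exact ⟨by simpa using contDiffOn_const, by simp⟩
  | insert i s hi ih =>
    simp only [Finset.sum_insert hi]
    exact (h i).add ih

lemma dker_isKer {E : Fin n → Fin n → Euc n → ℝ}
    (hE : ∀ j k, IsKer ((n : ℝ) - 2) (E j k)) (i j k : Fin n) :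
    IsKer ((n : ℝ) - 1) (Dker E i j k) := by
  have h := fun i j k => ((hE j k).pd i).congr_deg (b := (n : ℝ) - 1) (by ring)
  exact ((h i j k).add (h j i k)).add ((isKer_sum _ fun l => h l l k).const_smul _)

lemma dker_pot (hn : 3 ≤ n) {E : Fin n → Fin n → Euc n → ℝ}
    (hE : ∀ j k, IsKer ((n : ℝ) - 2) (E j k)) {g : Euc n → ℝ} (hg : Continuous g)
    (hgi : IntW ((n : ℝ) - 1) g) (i j k : Fin n) (x : Euc n) :
    Pot (Dker E i j k) g x = Pot (pd i (E j k)) g x + Pot (pd j (E i k)) g x -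
      2 / (n : ℝ) * (if i = j then 1 else 0) * ∑ l, Pot (pd l (E l k)) g x := by
  have hn3 : (3 : ℝ) ≤ n := by exact_mod_cast hn
  have h := fun i j k => ((hE j k).pd i).congr_deg (b := (n : ℝ) - 1) (by ring)
  have hi := fun i j k => pot_integrable hn (by linarith) (by linarith) (h i j k) hg hgi x
  have hs : Integrable fun y => ∑ l, g y • pd l (E l k) (x - y) :=
    integrable_finsetSum _ fun l _ => hi l l k
  have h2 : Integrable fun y => g y • pd i (E j k) (x - y) + g y • pd j (E i k) (x - y) :=
    (hi i j k).add (hi j i k)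
  unfold Pot
  rw [← integral_finsetSum _ fun l _ => hi l l k, ← integral_const_mul,
    ← integral_add (hi i j k) (hi j i k), ← integral_sub h2 (hs.const_mul _)]
  refine integral_congr_ae (Eventually.of_forall fun y => ?_)
  simp only [Dker, smul_eq_mul]
  rw [← Finset.mul_sum]
  ring

/-- The vector Laplacian is minus the Lamé operator with parameter `1 - 2/n`. -/
lemma vecLap_eq {W : Euc n → Euc n} {Y : Fin n → Euc n → ℝ}
    (hWY : ∀ x j, W x j = Y j x) (hY : ∀ j, ContDiff ℝ (⊤ : ℕ∞) (Y j)) (x : Euc n) (j : Fin n) :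
    vecLap W x j = -Lam (1 - 2 / (n : ℝ)) Y j x := by
  have e : ∀ j, (fun y => W y j) = Y j := fun j => funext fun y => hWY y j
  have hdiv : ContDiff ℝ (⊤ : ℕ∞) (divg W) := by
    unfold divg
    exact ContDiff.sum fun l _ => by rw [e]; exact contDiff_pd (hY l) l
  have hdv : pd j (divg W) x = ∑ l, pd j (pd l (Y l)) x := by
    have : divg W = fun y => ∑ l, pd l (Y l) y := by
      funext y; unfold divg; simp only [e]
    rw [this, pd_sum _ fun l _ => (contDiff_pd (hY l) l).da x]
  change -∑ i, pd i (fun y => confKill W y i j) x = _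
  have h1 : ∀ i, pd i (fun y => confKill W y i j) x =
      pd i (pd i (Y j)) x + pd i (pd j (Y i)) x
        - (2 / (n : ℝ)) * (if i = j then pd j (divg W) x else 0) := by
    intro i
    have e2 : (fun y => confKill W y i j) = fun y => (pd i (Y j) y + pd j (Y i) y) -
        (2 / (n : ℝ) * (if i = j then 1 else 0)) * divg W y := by
      funext y
      simp only [confKill, Matrix.of_apply, e]
      ring
    rw [e2, pd_sub (((contDiff_pd (hY j) i).add (contDiff_pd (hY i) j)).da x)
      ((contDiff_const.mul hdiv).da x), pd_add ((contDiff_pd (hY j) i).da x)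
      ((contDiff_pd (hY i) j).da x), pd_const_mul (hdiv.da x)]
    split_ifs with hij
    · subst hij; ring
    · ring
  rw [lam_eq hY]
  simp only [h1, Finset.sum_sub_distrib, Finset.sum_add_distrib, ← Finset.mul_sum,
    Finset.sum_ite_eq', Finset.mem_univ, if_true, hdv]
  rw [Finset.sum_congr rfl fun i _ => pd_comm (hY i) i j x]
  ring

lemma gradient_apply_eq (τ : Euc n → ℝ) (x : Euc n) (k : Fin n) :
    gradient τ x k = pd k τ x := by
  have h : inner ℝ (gradient τ x) (EuclideanSpace.single k (1 : ℝ)) = pd k τ x := by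
    unfold gradient pd
    rw [InnerProductSpace.toDual_symm_apply]
  rw [← h, EuclideanSpace.inner_single_right]
  simp

lemma frob_sq (M : Matrix (Fin n) (Fin n) ℝ) : frob M ^ 2 = ∑ i, ∑ j, M i j ^ 2 :=
  Real.sq_sqrt (Finset.sum_nonneg fun _ _ => Finset.sum_nonneg fun _ _ => sq_nonneg _)

lemma abs_le_frob (M : Matrix (Fin n) (Fin n) ℝ) (i j : Fin n) : |M i j| ≤ frob M := by
  refine Real.abs_le_sqrt ?_
  refine (Finset.single_le_sum (f := fun j => M i j ^ 2) (fun j _ => sq_nonneg _)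
    (Finset.mem_univ j)).trans ?_
  exact Finset.single_le_sum (f := fun i => ∑ j, M i j ^ 2)
    (fun i _ => Finset.sum_nonneg fun j _ => sq_nonneg _) (Finset.mem_univ i)

/-- The rescaled system: the data may be of unit size provided the coupling `lam` is small. -/
theorem rescaled_system (hn : 3 ≤ n) {p δ : ℝ} (hp : (n : ℝ) < p) (hδ1 : 2 - (n : ℝ) < δ)
    (hδ2 : δ < 0) {τ : Euc n → ℝ} (hτs : ContDiff ℝ (⊤ : ℕ∞) τ) (hτ : SobW 1 p (δ - 1) τ < ⊤) :
    ∃ lam : ℝ, 0 < lam ∧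
      ∀ h : Fin n → Euc n → ℝ, (∀ k, ContDiff ℝ (⊤ : ℕ∞) (h k)) →
      (∀ k, LpW p (δ - 2) (h k) ≤ 1) → ∀ σ : Fin n → Fin n → Euc n → ℝ,
      (∀ i j, ContDiff ℝ (⊤ : ℕ∞) (σ i j)) →
      (∀ i j x, |σ i j x| ≤ jap x ^ (δ - 1)) → ∀ ρ : Euc n → ℝ, ContDiff ℝ (⊤ : ℕ∞) ρ →
      (∀ x, |ρ x| ≤ jap x ^ (2 * δ - 2)) →
      ∃ (Z : Euc n → ℝ) (Y : Fin n → Euc n → ℝ),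
        ContDiff ℝ (⊤ : ℕ∞) Z ∧ (∀ j, ContDiff ℝ (⊤ : ℕ∞) (Y j)) ∧
        (∀ x, 1 / 2 ≤ 1 - lam * Z x) ∧
        (WL p (-δ - n / p) Z ∧ (∀ i, WL p (-δ - n / p + 1) (pd i Z)) ∧
          ∀ a b, WL p (-δ - n / p + 2) (pd a (pd b Z))) ∧
        ((∀ j, WL p (-δ - n / p) (Y j)) ∧ (∀ i j, WL p (-δ - n / p + 1) (pd i (Y j))) ∧
          ∀ a b j, WL p (-δ - n / p + 2) (pd a (pd b (Y j)))) ∧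
        (∀ x, lap Z x = cc n * (∑ i, ∑ j, (σ i j x + (pd i (Y j) x + pd j (Y i) x
              - 2 / (n : ℝ) * (∑ l, pd l (Y l) x) * (if i = j then 1 else 0))) ^ 2)
              * (1 - lam * Z x) ^ (-(Nc n) - 1)
            - bc n * τ x ^ 2 * (1 - lam * Z x) ^ (Nc n - 1)
            + cc n * ρ x * (1 - lam * Z x) ^ (-(Nc n) / 2)) ∧
        ∀ j x, Lam (1 - 2 / (n : ℝ)) Y j x =
          (1 - lam * Z x) ^ Nc n * (((n : ℝ) - 1) / n * pd j τ x) + h j x := by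
  have hn3 : (3 : ℝ) ≤ n := by exact_mod_cast hn
  have hp0 : 0 < p := by linarith
  have hκ : 0 ≤ 1 - 2 / (n : ℝ) := by
    rw [sub_nonneg, div_le_one (by linarith)]; linarith
  set i0 : Fin n := ⟨0, by omega⟩
  obtain ⟨E, hE, hev, hsym, hfund⟩ := exists_lame_ker hn hκ
  obtain ⟨E', hE', hev', hsym', hfund'⟩ := exists_lame_ker hn (le_refl (0 : ℝ))
  obtain ⟨Ct, -, hCt⟩ := sob_decay hn hp hδ1 hδ2 hτs hτ
  set g : Fin n → Euc n → ℝ := fun k x => ((n : ℝ) - 1) / n * pd k τ x with hg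
  have hgs : ∀ k, ContDiff ℝ (⊤ : ℕ∞) (g k) := fun k => contDiff_const.mul (contDiff_pd hτs k)
  have hgi : ∀ k, LpW p (δ - 2) (g k) < ⊤ := by
    intro k
    rw [hg, lpw_lt_top_iff hp0]
    refine WL.const_mul hp0 (contDiff_pd hτs k).continuous ?_ _
    have := (sobW_one hp0 hτ).2 k
    convert this using 1
    ring
  have hD := dker_isKer hE
  obtain ⟨lam, hl0, hsol⟩ := exists_fixed hn hp hδ1 hδ2 hD (hE' i0 i0)
    (fun k => (hgs k).continuous) hgi hτs.continuous hCt
  refine ⟨lam, hl0, ?_⟩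
  intro h hh hhi σ hσs hσ ρ hρs hρ
  have hhi' : ∀ k, LpW p (δ - 2) (h k) < ⊤ := fun k => (hhi k).trans_lt ENNReal.one_lt_top
  obtain ⟨w, hw, hI, hFL, hfix⟩ := hsol lam hl0 le_rfl h (fun k => (hh k).continuous) hhi σ
    (fun i j => (hσs i j).continuous) hσ ρ hρs.continuous hρ
  obtain ⟨hws, hFs⟩ := fixed_smooth hn hp hδ1 hδ2 hD (hE' i0 i0) hgs hgi hh hhi' hσs hτs hρs hw hI
    hFL hfix
  set F := Fop (Dker E) g h σ τ ρ w with hF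
  set Z := Pot (E' i0 i0) F with hZ
  -- the scalar equation is the first component of a Lamé system with parameter `0`
  have hZlin := lin_theory hn hp hδ1 hδ2 (le_refl (0 : ℝ)) hE' hev' hsym' hfund'
    (G := fun k => if k = i0 then F else fun _ => 0)
    (fun k => by split_ifs; exacts [hFs, contDiff_const])
    (fun k => by
      split_ifs
      · exact hFL
      · exact (lpw_le_const hp0 zero_le_one (fun x => by simp) hFL).1) rfl
  have hZe : (fun x => ∑ k, Pot (E' i0 k) (if k = i0 then F else fun _ => 0) x) = Z := by
    funext x
    rw [Finset.sum_eq_single i0]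
    · simp [hZ]
    · intro k _ hk
      simp [hk, Pot]
    · simp
  obtain ⟨z1, z2, z3, z4, z5⟩ := hZlin
  have z1 := z1 i0
  have z2 := z2 i0
  have z3 := z3 i0
  have z4 := fun i => z4 i i0
  have z5 := fun a b => z5 a b i0
  simp only [Lam, zero_mul, add_zero, if_true] at z1 z2 z3 z4 z5
  rw [hZe] at z1 z2 z3
  simp only [hZe] at z4 z5
  have hwN : ContDiff ℝ (⊤ : ℕ∞) fun x => w x ^ Nc n :=
    contDiff_infty.2 fun m => contDiff_rpow_of_ge (contDiff_infty.1 hws m) hI _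
  set f : Fin n → Euc n → ℝ := fun k y => w y ^ Nc n * g k y with hf
  have hfs : ∀ k, ContDiff ℝ (⊤ : ℕ∞) (f k) := fun k => hwN.mul (hgs k)
  have hfi : ∀ k, LpW p (δ - 2) (f k) < ⊤ := fun k => lpw_rpow_mul hp0 hI (Nc n) (hgi k)
  set G : Fin n → Euc n → ℝ := fun k y => f k y + h k y with hG
  have hGs : ∀ k, ContDiff ℝ (⊤ : ℕ∞) (G k) := fun k => (hfs k).add (hh k)
  have hGi : ∀ k, LpW p (δ - 2) (G k) < ⊤ := fun k =>
    (lpw_lt_top_iff hp0).2 (WL.add (by linarith) (hfs k).continuous (hh k).continuous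
      ((lpw_lt_top_iff hp0).1 (hfi k)) ((lpw_lt_top_iff hp0).1 (hhi' k)))
  set Y : Fin n → Euc n → ℝ := fun j x => ∑ k, Pot (E j k) (G k) x with hY
  obtain ⟨y1, y2, y3, y4, y5⟩ := lin_theory hn hp hδ1 hδ2 hκ hE hev hsym hfund hGs hGi hY
  have hIG : ∀ {a : ℝ}, (n : ℝ) - 2 ≤ a → ∀ k, IntW a (G k) := fun ha k =>
    par_intW hn hp hδ1 hδ2 ha (hGs k).continuous (hGi k)
  have hYd : ∀ i j x, pd i (Y j) x = ∑ k, Pot (pd i (E j k)) (G k) x := by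
    intro i j x
    have hd := fun k => pot_hasFDerivAt hn (by linarith) (by linarith) (hE j k) (hGs k).continuous
      (hIG le_rfl k) x
    rw [hY, pd_sum _ fun k _ => (hd k).differentiableAt]
    exact Finset.sum_congr rfl fun k _ => pd_pot hn (by linarith) (by linarith) (hE j k)
      (hGs k).continuous (hIG le_rfl k) i x
  have hS : ∀ i j x, Sop (Dker E) g h w i j x = pd i (Y j) x + pd j (Y i) x
      - 2 / (n : ℝ) * (∑ l, pd l (Y l) x) * (if i = j then 1 else 0) := by
    intro i j x
    have e1 : ∀ k, Pot (Dker E i j k) (fun y => w y ^ Nc n * g k y) x + Pot (Dker E i j k) (h k) x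
        = Pot (Dker E i j k) (G k) x := fun k =>
      (pot_add hn (by linarith) (by linarith) (hD i j k) (hfs k).continuous
        (par_intW hn hp hδ1 hδ2 (by linarith) (hfs k).continuous (hfi k)) (hh k).continuous
        (par_intW hn hp hδ1 hδ2 (by linarith) (hh k).continuous (hhi' k)) x).symm
    unfold Sop
    simp only [e1, dker_pot hn hE (hGs _).continuous (hIG (by linarith) _), hYd,
      Finset.sum_sub_distrib, Finset.sum_add_distrib]
    rw [Finset.sum_comm (f := fun l k => Pot (pd l (E l k)) (G k) x), ← Finset.mul_sum]
    ring
  refine ⟨Z, Y, z1, y1, fun x => ?_, ⟨z3, z4, z5⟩, ⟨y3, y4, y5⟩, fun x => ?_, fun j x => ?_⟩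
  · rw [← hfix]; exact (hI x).1
  · rw [z2, ← hfix, hF]
    simp only [Fop, hS]
  · rw [y2, ← hfix]

end

/-! ### Undoing the rescaling -/

/-- **Far-from-CMC existence, Euclidean background.** -/
theorem farCMC_existence (n : ℕ) (hn : 3 ≤ n) (p γ δ : ℝ) (hp : (n : ℝ) < p)
    (hγ1 : 2 - (n : ℝ) < γ) (hγ2 : γ < 0) (hδ : δ = γ / 2)
    (τ : Euc n → ℝ) (hτs : ContDiff ℝ (⊤ : ℕ∞) τ) (hτ : SobW 1 p (δ - 1) τ < ⊤) :
    ∃ ε > (0 : ℝ),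
      ∀ (σ : Euc n → Matrix (Fin n) (Fin n) ℝ) (ρ : Euc n → ℝ) (J : Euc n → Euc n),
        SmoothMat σ → SymTT σ →
        ContDiff ℝ (⊤ : ℕ∞) ρ → (∀ x, 0 ≤ ρ x) →
        ContDiff ℝ (⊤ : ℕ∞) J →
        LinfWM (δ - 1) σ ≤ ENNReal.ofReal ε →
        LinfW (2 * δ - 2) ρ ≤ ENNReal.ofReal ε →
        LpW p (δ - 2) J ≤ ENNReal.ofReal ε →
        ∃ (u : Euc n → ℝ) (W : Euc n → Euc n),
          ContDiff ℝ (⊤ : ℕ∞) u ∧ ContDiff ℝ (⊤ : ℕ∞) W ∧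
          (∀ x, 0 < u x) ∧ SobW 2 p δ W < ⊤ ∧
          (∃ A > (0 : ℝ), SobW 2 p δ (fun x => u x - A) < ⊤) ∧
          HamEq τ σ ρ u W ∧ MomEq τ J u W := by
  have hn3 : (3 : ℝ) ≤ n := by exact_mod_cast hn
  have hp0 : 0 < p := by linarith
  have hp1 : 1 ≤ p := by linarith
  have hδ1 : 2 - (n : ℝ) < δ := by linarith
  have hδ2 : δ < 0 := by linarith
  obtain ⟨lam, hl0, hsys⟩ := rescaled_system hn hp hδ1 hδ2 hτs hτ
  have hN : 0 < Nc n - 2 := by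
    rw [Nc, sub_pos, lt_div_iff₀ (by linarith)]; linarith
  -- the scale `s` is chosen so that `s ^ (N - 2) = lam`
  set s : ℝ := lam ^ (1 / (Nc n - 2)) with hs
  have hs0 : 0 < s := Real.rpow_pos_of_pos hl0 _
  have hsl : s ^ (Nc n - 2) = lam := by
    rw [hs, ← Real.rpow_mul hl0.le, one_div_mul_cancel hN.ne', Real.rpow_one]
  set a : ℝ := s ^ Nc n with ha
  have ha0 : 0 < a := Real.rpow_pos_of_pos hs0 _
  set b : ℝ := s ^ (3 * Nc n / 2 - 1) with hb
  have hb0 : 0 < b := Real.rpow_pos_of_pos hs0 _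
  refine ⟨min a b, lt_min ha0 hb0, ?_⟩
  intro σ ρ J hσs _ hρs hρ0 hJs hσ hρ hJ
  have hJk : ∀ k, ContDiff ℝ (⊤ : ℕ∞) fun x => J x k := fun k =>
    (contDiff_coord k).comp hJs
  have jw : ∀ (x : Euc n) (r t : ℝ), jap x ^ (-r) * t ≤ min a b → t ≤ min a b * jap x ^ r := by
    intro x r t h
    have hj := Real.rpow_pos_of_pos (jap_pos x) r
    rw [Real.rpow_neg (jap_pos x).le, inv_mul_le_iff₀ hj] at h
    linarith
  obtain ⟨Z, Y, hZs, hYs, hw2, ⟨z0, z1, z2⟩, ⟨y0, y1, y2⟩, hlap, hLam⟩ := hsys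
    (fun k x => a⁻¹ * J x k) (fun k => contDiff_const.mul (hJk k))
    (fun k => by
      rw [lpw_const_mul hp0]
      have h1 : LpW p (δ - 2) (fun x => J x k) ≤ ENNReal.ofReal a :=
        (lpw_mono hp0 fun x => PiLp.norm_apply_le (J x) k).trans
          (hJ.trans (ENNReal.ofReal_le_ofReal (min_le_left _ _)))
      refine (mul_le_mul_right h1 _).trans (le_of_eq ?_)
      rw [← ofReal_norm, Real.norm_of_nonneg (by positivity), ← ENNReal.ofReal_mul (by positivity),
        inv_mul_cancel₀ ha0.ne', ENNReal.ofReal_one])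
    (fun i j x => a⁻¹ * σ x i j) (fun i j => contDiff_const.mul (hσs i j))
    (fun i j x => by
      have h1 := (ENNReal.ofReal_le_ofReal_iff (lt_min ha0 hb0).le).1 ((le_iSup _ x).trans hσ)
      have h2 := (abs_le_frob (σ x) i j).trans (jw x _ _ h1)
      have hj := Real.rpow_pos_of_pos (jap_pos x) (δ - 1)
      rw [abs_mul, abs_of_pos (inv_pos.2 ha0), inv_mul_le_iff₀ ha0]
      exact h2.trans (mul_le_mul_of_nonneg_right (min_le_left _ _) hj.le))
    (fun x => b⁻¹ * ρ x) (contDiff_const.mul hρs)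
    (fun x => by
      have h1 := (ENNReal.ofReal_le_ofReal_iff (lt_min ha0 hb0).le).1 ((le_iSup _ x).trans hρ)
      have h2 := jw x _ _ h1
      have hj := Real.rpow_pos_of_pos (jap_pos x) (2 * δ - 2)
      rw [abs_mul, abs_of_pos (inv_pos.2 hb0), inv_mul_le_iff₀ hb0]
      exact h2.trans (mul_le_mul_of_nonneg_right (min_le_right _ _) hj.le))
  have hwpos : ∀ x, 0 < 1 - lam * Z x := fun x => by linarith [hw2 x]
  have hus : ContDiff ℝ (⊤ : ℕ∞) fun x => s * (1 - lam * Z x) :=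
    contDiff_const.mul (contDiff_const.sub (contDiff_const.mul hZs))
  have pcm : ∀ (c : ℝ) {f : Euc n → ℝ}, ContDiff ℝ (⊤ : ℕ∞) f → ∀ i,
      pd i (fun y => c * f y) = fun y => c * pd i f y := fun c f hf i =>
    funext fun y => pd_const_mul (hf.da y) c i
  set W : Euc n → Euc n := fun x => WithLp.toLp 2 fun j => a * Y j x with hW
  have hWj : ∀ j, (fun x => W x j) = fun x => a * Y j x := fun j => rfl
  have hWs : ∀ j, ContDiff ℝ (⊤ : ℕ∞) fun x => W x j := fun j => contDiff_const.mul (hYs j)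
  have hum : (fun x => s * (1 - lam * Z x) - s) = fun x => (-(s * lam)) * Z x := by
    funext x; ring
  refine ⟨fun x => s * (1 - lam * Z x), W, hus, contDiff_euclidean.2 hWs,
    fun x => mul_pos hs0 (hwpos x), ?_, ⟨s, hs0, ?_⟩, fun x => ?_, fun x => ?_⟩
  · refine sobW_two_vec hp1 hWs (fun j => ?_) (fun i j => ?_) fun c d j => ?_
    · exact (y0 j).const_mul hp0 (hYs j).continuous a
    · rw [hWj, pcm a (hYs j)]
      exact (y1 i j).const_mul hp0 (contDiff_pd (hYs j) i).continuous a
    · rw [hWj, pcm a (hYs j), pcm a (contDiff_pd (hYs j) d)]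
      exact (y2 c d j).const_mul hp0 (contDiff_pd (contDiff_pd (hYs j) d) c).continuous a
  · rw [hum]
    refine sobW_two hp1 (contDiff_const.mul hZs) (z0.const_mul hp0 hZs.continuous _)
      (fun i => ?_) fun c d => ?_
    · rw [pcm _ hZs]
      exact (z1 i).const_mul hp0 (contDiff_pd hZs i).continuous _
    · rw [pcm _ hZs, pcm _ (contDiff_pd hZs d)]
      exact (z2 c d).const_mul hp0 (contDiff_pd (contDiff_pd hZs d) c).continuous _
  · have hl : lap (fun x => s * (1 - lam * Z x)) x = -(s * lam) * lap Z x := by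
      have e1 : ∀ i, pd i (fun x => s * (1 - lam * Z x)) = fun y => (-(s * lam)) * pd i Z y := by
        intro i
        rw [← pcm _ hZs]
        funext y
        have : (fun x => s * (1 - lam * Z x)) = fun x => s + (-(s * lam)) * Z x := by
          funext x; ring
        rw [this, pd_add (differentiableAt_const _) ((contDiff_const.mul hZs).da y), pd_const,
          zero_add]
      unfold lap
      rw [Finset.mul_sum]
      refine Finset.sum_congr rfl fun i _ => ?_
      rw [e1, pcm _ (contDiff_pd hZs i)]
    have hfr : frob (σ x + confKill W x) ^ 2 = a ^ 2 * ∑ i, ∑ j, (a⁻¹ * σ x i j +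
        (pd i (Y j) x + pd j (Y i) x
          - 2 / (n : ℝ) * (∑ l, pd l (Y l) x) * (if i = j then 1 else 0))) ^ 2 := by
      rw [frob_sq, Finset.mul_sum]
      refine Finset.sum_congr rfl fun i _ => ?_
      rw [Finset.mul_sum]
      refine Finset.sum_congr rfl fun j _ => ?_
      rw [← mul_pow, mul_add, mul_inv_cancel_left₀ ha0.ne', Matrix.add_apply]
      congr 2
      simp only [confKill, Matrix.of_apply, divg, hWj, pcm a (hYs _)]
      rw [← Finset.mul_sum]
      ring
    have hw0 := (hwpos x).le
    have p1 : a ^ 2 * s ^ (-(Nc n) - 1) = s * lam := by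
      rw [← hsl, ha, ← Real.rpow_natCast, ← Real.rpow_mul hs0.le, ← Real.rpow_add hs0]
      nth_rw 2 [← Real.rpow_one s]
      rw [← Real.rpow_add hs0]
      congr 1; push_cast; ring
    have p2 : s ^ (Nc n - 1) = s * lam := by
      rw [← hsl]
      nth_rw 2 [← Real.rpow_one s]
      rw [← Real.rpow_add hs0]
      congr 1; ring
    have p3 : b * s ^ (-(Nc n) / 2) = s * lam := by
      rw [← p2, hb, ← Real.rpow_add hs0]
      congr 1; ring
    have hρb : ρ x = b * (b⁻¹ * ρ x) := (mul_inv_cancel_left₀ hb0.ne' _).symm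
    simp only [HamExpr]
    rw [hl, hfr, hlap x, Real.mul_rpow hs0.le hw0, Real.mul_rpow hs0.le hw0,
      Real.mul_rpow hs0.le hw0]
    nth_rw 2 [hρb]
    linear_combination (cc n * (∑ i, ∑ j, (a⁻¹ * σ x i j + (pd i (Y j) x + pd j (Y i) x
          - 2 / (n : ℝ) * (∑ l, pd l (Y l) x) * (if i = j then 1 else 0))) ^ 2)
          * (1 - lam * Z x) ^ (-(Nc n) - 1)) * p1
      - bc n * τ x ^ 2 * (1 - lam * Z x) ^ (Nc n - 1) * p2
      + cc n * (b⁻¹ * ρ x) * (1 - lam * Z x) ^ (-(Nc n) / 2) * p3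
  · ext j
    have hL : Lam (1 - 2 / (n : ℝ)) (fun j x => a * Y j x) j x =
        a * Lam (1 - 2 / (n : ℝ)) Y j x := by
      rw [lam_eq (fun j => contDiff_const.mul (hYs j)), lam_eq hYs]
      simp only [pcm a (hYs _), pcm a (contDiff_pd (hYs _) _)]
      rw [← Finset.mul_sum, ← Finset.mul_sum]
      ring
    simp only [PiLp.add_apply, PiLp.smul_apply, smul_eq_mul, PiLp.zero_apply]
    rw [vecLap_eq (Y := fun j x => a * Y j x) (fun _ _ => rfl)
      (fun j => contDiff_const.mul (hYs j)), hL, hLam, gradient_apply_eq,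
      Real.mul_rpow hs0.le (hwpos x).le, ← ha]
    linear_combination J x j * (-(mul_inv_cancel₀ ha0.ne'))
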